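/- For the family C_m of lifted extended quadratic residue codes of length 24 modulo 3^m, let A_{3,2} := 3^{−24}·swe_{C_5}(x_0, x_1, x_2, z−y_1, z+2y_1−3y_0, z+2y_1+6y_0) ∈ ℚ[x_0,x_1,x_2,y_0,y_1,z]. Then the sum of those monomials of A_{3,2} that are divisible by x_0·y_0 equals D_{3,2} = 109296·x_0^9·y_0^9·(−6·x_1^2·x_2·y_1^2·z + 6·x_1^2·x_2^2·y_1^2 − x_1^3·y_1^3). -/

import Mathlib

/-!
Write `z - y₁`, `z + 2 y₁ - 3 y₀`, `z + 2 y₁ + 6 y₀` as values of a Fourier transform on `ℤ/9`: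
for `a = 27 t` the polynomial substituted for a coordinate with value `a` is `∑ β, ψ(β t) v(β)`,
where `ψ` is a faithful character and `v(β)` is `z`, `y₁` or `y₀` according to whether `β` is
zero, nonzero and divisible by 3, or a unit (`sum_kern`). Expanding the product over the 24
coordinates gives a sum over pairs `(c, b)`, with `c` a code word modulo 243 and `b` any vector
modulo 9, such that `c` is divisible by 27 on the support of `b`. Translating `c` by 27 times code
words, self-duality leaves only code words `b`, and averaging over the units of `ℤ/9` turns the
character values into the rational numbers `rho` (`sum_phi`).

A pair contributes a monomial divisible by `x₀ y₀` exactly if neither `c` nor `b` reduces to zero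
modulo 3 (`divPart_term`). The two reductions then have disjoint supports. Nonzero words modulo 3
have weight at least nine, by a count from two complementary information sets, and the 4048 words
of weight nine form a single orbit under the monomial automorphisms of the code (`orbit`). Weights
are divisible by 3, so if one of the two reductions has weight more than nine, then either both
have weight twelve or the other one has weight nine. The former case is excluded by a computation
modulo 9 with the words that have no zero entry (`not_Dj_twelve`), the latter by a computation
with the words that vanish on the support of a word of weight nine (`Nine_wordZ`,
`not_Dj_ents12`). So the sum is 4048 times the contribution `Fsum` of one word `wordZ`, found by
enumerating the words modulo 27 above `wordZ` that are disjoint from the words `b` (`Fsum_wordZ`).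

All this concerns an explicit self-dual `code`. Modulo 243 the polynomial `x^23 - 1` has exactly
two monic factors of degree 11 with irreducible reduction, by uniqueness of Hensel lifts
(`g5_cases`), and both extended cyclic codes become equal to `code` after a permutation of the
coordinates and the multiplication of the parity coordinate by a unit (`exists_monomial`). Such
changes do not affect the enumerator.
-/

open MvPolynomial
open scoped Classical

noncomputable section

/-- The symmetrized weight enumerator of a code `C ⊆ (ℤ/Nℤ)^n` (for `N = p^m`):
the variable `X i` for `i < m` records the number of coordinates of `p`-adic valuation `i`,
and the last variable `X m` (the variable `z`) records the number of zero coordinates. -/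
def swe (p m : ℕ) {N n : ℕ} [NeZero N]
    (C : Submodule (ZMod N) (Fin n → ZMod N)) : MvPolynomial (Fin (m + 1)) ℚ :=
  ∑ c : Fin n → ZMod N, if c ∈ C then
      (∏ i : Fin m, (X (Fin.castSucc i) : MvPolynomial (Fin (m + 1)) ℚ) ^
          (Finset.univ.filter fun j => c j ≠ 0 ∧ padicValNat p (c j).val = (i : ℕ)).card)
        * (X (Fin.last m) : MvPolynomial (Fin (m + 1)) ℚ) ^
            (Finset.univ.filter fun j => c j = 0).card
    else 0

/-- `g` is a monic irreducible degree-11 factor of `x^23 - 1` over `ℤ/pℤ`. -/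
def IsQRFactor (p : ℕ) (g : Polynomial (ZMod p)) : Prop :=
  g.Monic ∧ g.natDegree = 11 ∧ Irreducible g ∧ g ∣ (Polynomial.X ^ 23 - 1)

/-- `gm` is the (Hensel) lift of `g` to `ℤ/Nℤ` and `C` is the associated lifted extended
cyclic quadratic residue code of length 24: the extension by an overall parity check of the
cyclic code of length 23 generated by `gm`. -/
def IsLiftedQR {p N : ℕ} (hpN : p ∣ N) (g : Polynomial (ZMod p)) (gm : Polynomial (ZMod N))
    (C : Submodule (ZMod N) (Fin 24 → ZMod N)) : Prop :=
  gm.Monic ∧ gm.natDegree = 11 ∧ gm ∣ (Polynomial.X ^ 23 - 1) ∧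
    gm.map (ZMod.castHom hpN (ZMod p)) = g ∧
    ∀ c : Fin 24 → ZMod N, c ∈ C ↔
      ((∃ f : Polynomial (ZMod N), ∀ j : Fin 23,
          c (Fin.castSucc j) = ((f * gm) %ₘ (Polynomial.X ^ 23 - 1)).coeff (j : ℕ)) ∧
        c (Fin.last 23) = - ∑ j : Fin 23, c (Fin.castSucc j))

/-- The sum of those monomials of `A` that are divisible by `X i * X j`. -/
def divPart {σ : Type*} (A : MvPolynomial σ ℚ) (i j : σ) : MvPolynomial σ ℚ :=
  ∑ d ∈ A.support.filter (fun d => d i ≠ 0 ∧ d j ≠ 0), monomial d (A.coeff d)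

/-! ### Arithmetic of vectors stored as lists -/

/-- The vector of length 24 over `A` stored in a list of natural numbers. -/
def ofL (A : Type*) [CommRing A] (l : List ℕ) : Fin 24 → A := fun j => ((l.getD j 0 : ℕ) : A)

/-- The `i`-th row of a matrix stored in a list of rows. -/
def row (A : Type*) [CommRing A] (M : List (List ℕ)) (i : ℕ) : Fin 24 → A := ofL A (M.getD i [])

/-- `k • m + a` on lists of natural numbers, short lists being padded by zeros. -/
def addS (k : ℕ) : List ℕ → List ℕ → List ℕ
  | [], a => a
  | x :: m, [] => (k * x) :: addS k m []
  | x :: m, y :: a => (k * x + y) :: addS k m a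

/-- The linear combination of the rows of `M` with coefficients `k`. -/
def combL : List ℕ → List (List ℕ) → List ℕ
  | [], _ => []
  | _ :: _, [] => []
  | k :: ks, m :: ms => addS k m (combL ks ms)

/-- The dot product of the first `n` entries of two lists. -/
def dotL : ℕ → List ℕ → List ℕ → ℕ
  | 0, _, _ => 0
  | n + 1, a, b => a.headD 0 * b.headD 0 + dotL n a.tail b.tail

lemma getD_addS (k : ℕ) (m a : List ℕ) (j : ℕ) :
    (addS k m a).getD j 0 = k * m.getD j 0 + a.getD j 0 := by
  induction m generalizing a j with
  | nil => simp [addS]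
  | cons x m ih =>
    cases a with
    | nil => cases j with
      | zero => simp [addS]
      | succ j => have := ih [] j; simpa [addS] using this
    | cons y a => cases j with
      | zero => simp [addS]
      | succ j => have := ih a j; simpa [addS] using this

lemma ofL_addS (A : Type*) [CommRing A] (k : ℕ) (m a : List ℕ) :
    ofL A (addS k m a) = (k : A) • ofL A m + ofL A a := by
  funext j
  simp only [ofL, getD_addS, Pi.add_apply, Pi.smul_apply, smul_eq_mul]
  push_cast
  ring

lemma ofL_nil (A : Type*) [CommRing A] : ofL A [] = 0 := by
  funext j; simp [ofL]

lemma ofL_combL (A : Type*) [CommRing A] (n : ℕ) (k : List ℕ) (M : List (List ℕ))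
    (hM : M.length = n) :
    ofL A (combL k M) = ∑ i : Fin n, ((k.getD i 0 : ℕ) : A) • row A M i := by
  induction n generalizing k M with
  | zero =>
    obtain rfl := List.length_eq_zero_iff.mp hM
    cases k <;> simp [combL, ofL_nil]
  | succ n ih =>
    cases M with
    | nil => simp at hM
    | cons m ms =>
      cases k with
      | nil => simp [combL, ofL_nil]
      | cons k ks =>
        rw [combL, ofL_addS, Fin.sum_univ_succ, ih ks ms (by simpa using hM)]
        simp [row]

lemma dotL_eq (A : Type*) [CommRing A] (n : ℕ) (a b : List ℕ) :
    ((dotL n a b : ℕ) : A) =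
      ∑ j : Fin n, ((a.getD j 0 : ℕ) : A) * ((b.getD j 0 : ℕ) : A) := by
  induction n generalizing a b with
  | zero => simp [dotL]
  | succ n ih =>
    rw [dotL, Fin.sum_univ_succ]
    push_cast
    rw [ih]
    cases a <;> cases b <;> simp

lemma cast_mod {A : Type*} [CommRing A] {N : ℕ} (hN : (N : A) = 0) (a : ℕ) :
    ((a % N : ℕ) : A) = a := by
  conv_rhs => rw [← Nat.mod_add_div a N]
  push_cast
  simp [hN]

lemma cast_eq_of_mod {A : Type*} [CommRing A] {N : ℕ} (hN : (N : A) = 0) {a b : ℕ}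
    (h : a % N = b % N) : (a : A) = b := by
  rw [← cast_mod hN a, h, cast_mod hN]

/-- Entrywise congruence of the first 24 entries modulo `N`. -/
def eqModL (N : ℕ) (a b : List ℕ) : Bool :=
  (List.range 24).all fun j => a.getD j 0 % N == b.getD j 0 % N

lemma ofL_eq_of_eqModL {A : Type*} [CommRing A] {N : ℕ} (hN : (N : A) = 0) {a b : List ℕ}
    (h : eqModL N a b = true) : ofL A a = ofL A b := by
  funext j
  simp only [eqModL, List.all_eq_true, List.mem_range, beq_iff_eq] at h
  exact cast_eq_of_mod hN (h j j.2)

/-! ### The rescaled code -/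

/-- Generator matrix of the rescaled self-dual code over `ℤ/243`, systematic on the first twelve
coordinates. -/
def genL : List (List ℕ) :=
  [[1,0,0,0,0,0,0,0,0,0,0,0,242,149,152,4,97,189,185,90,239,147,150,242],
   [0,1,0,0,0,0,0,0,0,0,0,0,150,5,191,38,34,178,141,50,204,59,3,149],
   [0,0,1,0,0,0,0,0,0,0,0,0,3,189,35,179,233,196,109,114,62,6,95,152],
   [0,0,0,1,0,0,0,0,0,0,0,0,95,185,86,141,198,17,117,64,8,191,93,4],
   [0,0,0,0,1,0,0,0,0,0,0,0,93,89,143,200,111,117,65,9,193,188,92,97],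
   [0,0,0,0,0,1,0,0,0,0,0,0,92,236,199,18,24,219,107,47,134,34,239,189],
   [0,0,0,0,0,0,1,0,0,0,0,0,239,202,115,215,163,51,230,224,31,236,148,185],
   [0,0,0,0,0,0,0,1,0,0,0,0,148,57,62,9,196,136,130,32,87,145,149,90],
   [0,0,0,0,0,0,0,0,1,0,0,0,149,60,8,195,136,223,30,85,142,54,151,239],
   [0,0,0,0,0,0,0,0,0,1,0,0,151,6,193,133,128,28,233,48,203,58,3,147],
   [0,0,0,0,0,0,0,0,0,0,1,0,3,190,36,181,85,47,202,206,60,5,94,150],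
   [0,0,0,0,0,0,0,0,0,0,0,1,94,91,239,146,54,58,153,4,96,93,242,1]]

/-- Generator matrix systematic on the last twelve coordinates. -/
def genR : List (List ℕ) :=
  [[1,93,240,148,150,151,4,95,94,92,240,149,1,0,0,0,0,0,0,0,0,0,0,0],
   [94,238,54,58,154,7,41,186,183,237,53,152,0,1,0,0,0,0,0,0,0,0,0,0],
   [91,52,208,157,100,44,128,181,235,50,207,4,0,0,1,0,0,0,0,0,0,0,0,0],
   [239,205,64,102,43,225,28,234,48,110,62,97,0,0,0,1,0,0,0,0,0,0,0,0],
   [146,209,10,45,132,219,80,47,107,115,158,189,0,0,0,0,1,0,0,0,0,0,0,0],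
   [54,65,47,226,126,24,192,107,20,215,196,185,0,0,0,0,0,1,0,0,0,0,0,0],
   [58,102,134,126,178,136,13,113,213,10,41,90,0,0,0,0,0,0,1,0,0,0,0,0],
   [153,193,129,179,234,196,19,211,158,195,37,239,0,0,0,0,0,0,0,1,0,0,0,0],
   [4,39,181,235,50,109,212,156,101,40,183,147,0,0,0,0,0,0,0,0,1,0,0,0],
   [96,184,237,52,55,209,7,98,189,185,238,150,0,0,0,0,0,0,0,0,0,1,0,0],
   [93,240,148,150,151,4,95,94,92,240,149,1,0,0,0,0,0,0,0,0,0,0,1,0],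
   [1,94,91,239,146,54,58,153,4,96,93,242,0,0,0,0,0,0,0,0,0,0,0,1]]

/-- Generator matrix systematic on the coordinates `setS`. -/
def genS : List (List ℕ) :=
  [[0,0,0,0,0,1,0,0,0,0,0,0,92,236,199,18,24,219,107,47,134,34,239,189],
   [0,0,0,0,0,0,0,1,0,0,0,0,148,57,62,9,196,136,130,32,87,145,149,90],
   [0,0,0,0,0,0,0,0,0,1,0,0,151,6,193,133,128,28,233,48,203,58,3,147],
   [0,0,0,0,0,0,0,0,0,0,1,0,3,190,36,181,85,47,202,206,60,5,94,150],
   [1,0,0,0,0,0,0,0,0,0,0,0,242,149,152,4,97,189,185,90,239,147,150,242],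
   [0,1,0,0,0,0,0,0,0,0,0,0,150,5,191,38,34,178,141,50,204,59,3,149],
   [0,0,1,0,0,0,0,0,0,0,0,0,3,189,35,179,233,196,109,114,62,6,95,152],
   [0,0,0,1,0,0,0,0,0,0,0,0,95,185,86,141,198,17,117,64,8,191,93,4],
   [0,0,0,0,1,0,0,0,0,0,0,0,93,89,143,200,111,117,65,9,193,188,92,97],
   [0,0,0,0,0,0,1,0,0,0,0,0,239,202,115,215,163,51,230,224,31,236,148,185],
   [0,0,0,0,0,0,0,0,1,0,0,0,149,60,8,195,136,223,30,85,142,54,151,239],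
   [0,0,0,0,0,0,0,0,0,0,0,1,94,91,239,146,54,58,153,4,96,93,242,1]]

/-- The information set of `genS`. -/
def setS : List ℕ := [5, 7, 9, 10, 0, 1, 2, 3, 4, 6, 8, 11]

/-- The self-dual form of the code: the words orthogonal to the rows of `genL`.  It is used over
the quotients `A` of `ℤ/243`. -/
def code (A : Type*) [CommRing A] : Submodule A (Fin 24 → A) where
  carrier := {c | ∀ i : Fin 12, ∑ j, row A genL i j * c j = 0}
  add_mem' := by
    intro a b ha hb i
    simp only [Pi.add_apply, mul_add, Finset.sum_add_distrib]
    rw [ha i, hb i, add_zero]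
  zero_mem' := by intro i; simp
  smul_mem' := by
    intro r a ha i
    have := ha i
    simp only [Pi.smul_apply, smul_eq_mul]
    calc _ = r * ∑ j, row A genL i j * a j := by
          rw [Finset.mul_sum]; exact Finset.sum_congr rfl fun j _ => by ring
      _ = 0 := by rw [this, mul_zero]

lemma mem_code {A : Type*} [CommRing A] {c : Fin 24 → A} :
    c ∈ code A ↔ ∀ i : Fin 12, ∑ j, row A genL i j * c j = 0 := Iff.rfl

/-- Membership test for a word stored in a list. -/
def inCode (l : List ℕ) : Bool :=
  (List.range 12).all fun i => dotL 24 (genL.getD i []) l % 243 == 0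

lemma ofL_mem_code {A : Type*} [CommRing A] (hA : ((243 : ℕ) : A) = 0) {l : List ℕ}
    (h : inCode l = true) : ofL A l ∈ code A := by
  simp only [inCode, List.all_eq_true, List.mem_range, beq_iff_eq] at h
  intro i
  have := h i i.2
  simp only [row]
  calc _ = ((dotL 24 (genL.getD i []) l : ℕ) : A) := (dotL_eq A 24 _ _).symm
    _ = ((0 : ℕ) : A) := cast_eq_of_mod hA (by simpa using this)
    _ = 0 := by simp

/-- `M` is a generator matrix that is systematic on the coordinates listed in `I`. -/
def isInfo (I : List ℕ) (M : List (List ℕ)) : Bool :=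
  M.length == 12 && I.length == 12 && I.all (fun x => Nat.blt x 24) && M.all inCode &&
    (List.range 12).all fun i => (List.range 12).all fun k =>
      (M.getD i []).getD (I.getD k 0) 0 == if i = k then 1 else 0

lemma isInfo_genL : isInfo (List.range 12) genL = true := by decide +kernel

/-- The `k`-th coordinate of an information set. -/
def ix (I : List ℕ) (k : Fin 12) : Fin 24 := Fin.ofNat 24 (I.getD k 0)

section Info

variable {A : Type*} [CommRing A] {I : List ℕ} {M : List (List ℕ)}

lemma isInfo_length (h : isInfo I M = true) : M.length = 12 := by
  simp only [isInfo, Bool.and_eq_true, beq_iff_eq] at h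
  exact h.1.1.1.1

lemma isInfo_mem (hA : ((243 : ℕ) : A) = 0) (h : isInfo I M = true) (i : Fin 12) :
    row A M i ∈ code A := by
  have hl := isInfo_length h
  simp only [isInfo, Bool.and_eq_true, List.all_eq_true] at h
  refine ofL_mem_code hA ?_
  apply h.1.2
  rw [List.getD_eq_getElem _ _ (by omega)]
  exact List.getElem_mem _

lemma isInfo_ix (h : isInfo I M = true) (k : Fin 12) : ((ix I k : Fin 24) : ℕ) = I.getD k 0 := by
  simp only [isInfo, Bool.and_eq_true, List.all_eq_true, beq_iff_eq] at h
  have hl : I.length = 12 := h.1.1.1.2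
  have h24 := h.1.1.2 (I.getD k 0) (by
    rw [List.getD_eq_getElem _ _ (by omega)]; exact List.getElem_mem _)
  simp only [Nat.blt_eq] at h24
  simp only [ix, Fin.ofNat]
  exact Nat.mod_eq_of_lt h24

lemma isInfo_delta (h : isInfo I M = true) (i k : Fin 12) :
    row A M i (ix I k) = if i = k then 1 else 0 := by
  have hx := isInfo_ix h k
  simp only [isInfo, Bool.and_eq_true, List.all_eq_true, beq_iff_eq, List.mem_range] at h
  have := h.2 i i.2 k k.2
  simp only [row, ofL, hx, this, Fin.ext_iff]
  split_ifs <;> simp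

/-- `genL = [1 | B]` with `B Bᵀ = -1`, hence `Bᵀ B = -1`, and the words orthogonal to its rows
are the combinations of its rows. -/
lemma code_eq_genL (hA : ((243 : ℕ) : A) = 0) {c : Fin 24 → A} (hc : c ∈ code A) :
    c = ∑ i : Fin 12, c (Fin.castAdd 12 i) • row A genL i := by
  have hix : ∀ k : Fin 12, ix (List.range 12) k = Fin.castAdd 12 k := by decide
  have hd : ∀ i k : Fin 12, row A genL i (Fin.castAdd 12 k) = if i = k then 1 else 0 := by
    intro i k
    rw [← hix]; exact isInfo_delta isInfo_genL i k
  let B : Matrix (Fin 12) (Fin 12) A := fun i k => row A genL i (Fin.natAdd 12 k)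
  have key : ∀ v ∈ code A, ∀ i : Fin 12,
      v (Fin.castAdd 12 i) + ∑ k, B i k * v (Fin.natAdd 12 k) = 0 := by
    intro v hv i
    have := hv i
    rw [show (∑ j : Fin 24, row A genL i j * v j) =
      ∑ j : Fin (12 + 12), row A genL i j * v j from rfl, Fin.sum_univ_add] at this
    simpa [hd, B] using this
  have hB : B * (-B.transpose) = 1 := by
    ext i k
    have := key _ (isInfo_mem hA isInfo_genL k) i
    rw [hd] at this
    simp only [Matrix.mul_apply, Matrix.neg_apply, Matrix.transpose_apply, Matrix.one_apply,
      mul_neg, Finset.sum_neg_distrib]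
    rw [neg_eq_iff_eq_neg, ← sub_eq_zero, sub_neg_eq_add, add_comm]
    simpa [B, eq_comm] using this
  have hB' : (-B.transpose) * B = 1 := mul_eq_one_comm.mp hB
  have hx : ∀ i : Fin 12, c (Fin.castAdd 12 i) = - ∑ k, B i k * c (Fin.natAdd 12 k) :=
    fun i => eq_neg_of_add_eq_zero_left (key c hc i)
  funext j
  rw [Finset.sum_apply]
  refine Fin.addCases (m := 12) (n := 12) (fun k => ?_) (fun k => ?_) j
  · simp [hd]
  · have h1 : ((-B.transpose) * B).mulVec (fun k => c (Fin.natAdd 12 k)) k =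
        c (Fin.natAdd 12 k) := by rw [hB', Matrix.one_mulVec]
    rw [← Matrix.mulVec_mulVec] at h1
    rw [← h1]
    simp only [Matrix.mulVec, dotProduct, Matrix.neg_apply, Matrix.transpose_apply, Pi.smul_apply,
      smul_eq_mul]
    refine Finset.sum_congr rfl fun i _ => ?_
    rw [hx i]
    simp only [B]
    ring

/-- A code word is determined by its entries on an information set. -/
lemma code_eq_info (hA : ((243 : ℕ) : A) = 0) (h : isInfo I M = true) {c : Fin 24 → A}
    (hc : c ∈ code A) : c = ∑ i : Fin 12, c (ix I i) • row A M i := by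
  let G : Matrix (Fin 12) (Fin 24) A := fun i => row A genL i
  let N : Matrix (Fin 12) (Fin 24) A := fun i => row A M i
  let L : Matrix (Fin 12) (Fin 12) A := fun i k => N i (Fin.castAdd 12 k)
  have vec : ∀ v ∈ code A, v = Matrix.vecMul (fun i : Fin 12 => v (Fin.castAdd 12 i)) G := by
    intro v hv
    funext j
    conv_lhs => rw [code_eq_genL hA hv]
    simp [Matrix.vecMul, dotProduct, G]
  have hN : N = L * G := by
    funext i
    exact (vec _ (isInfo_mem hA h i)).trans (by funext j; rfl)
  let GI : Matrix (Fin 12) (Fin 12) A := fun i k => G i (ix I k)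
  have h1 : L * GI = 1 := by
    ext i k
    have : (L * GI) i k = (L * G) i (ix I k) := rfl
    rw [this, ← hN, Matrix.one_apply]
    exact isInfo_delta h i k
  have h2 : GI * L = 1 := mul_eq_one_comm.mp h1
  have hcI : (fun k => c (ix I k)) = Matrix.vecMul (fun i : Fin 12 => c (Fin.castAdd 12 i)) GI := by
    funext k
    conv_lhs => rw [vec c hc]
    rfl
  have : c = Matrix.vecMul (fun k => c (ix I k)) N := by
    rw [hcI, hN, ← Matrix.vecMul_vecMul, Matrix.vecMul_vecMul _ GI L, h2, Matrix.vecMul_one]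
    exact vec c hc
  funext j
  conv_lhs => rw [this]
  simp [Matrix.vecMul, dotProduct, N]

/-- The code is self-orthogonal. -/
lemma code_orth (hA : ((243 : ℕ) : A) = 0) {c d : Fin 24 → A} (hc : c ∈ code A)
    (hd : d ∈ code A) : ∑ j, c j * d j = 0 := by
  rw [code_eq_genL hA hc]
  simp only [Finset.sum_apply, Pi.smul_apply, smul_eq_mul, Finset.sum_mul]
  rw [Finset.sum_comm]
  refine Finset.sum_eq_zero fun i _ => ?_
  simp only [mul_assoc]
  rw [← Finset.mul_sum, hd i, mul_zero]

end Info

/-! ### Words of weight at most nine modulo 3 -/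

/-- The Hamming weight of a word modulo 3. -/
def wt (w : Fin 24 → ZMod 3) : ℕ := ∑ j, if w j = 0 then 0 else 1

/-- The first `n` entries of a list, packed as digits in base 64. -/
def pk (n : ℕ) : List ℕ → ℕ :=
  Nat.rec (fun _ => 0) (fun _ ih l => l.headD 0 + 64 * ih l.tail) n

/-- The number of digits in base 64, among the first `n`, that are not divisible by 3. -/
def wtP (n : ℕ) : ℕ → ℕ :=
  Nat.rec (fun _ => 0) (fun _ ih x => (x % 64 % 3 + 1) / 2 + ih (x / 64)) n

/-- The sum of `t` over the combinations of the packed rows `l` with at most `k` nonzero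
coefficients from `{1, 2}`, shifted by `acc`; the first argument of `t` is the number of
coefficients not used. -/
def lowCount (t : ℕ → ℕ → ℕ) (l : List ℕ) : ℕ → ℕ → ℕ :=
  List.rec (fun k acc => t k acc)
    (fun m _ ih k acc => Nat.rec (t 0 acc)
      (fun k _ => ih (k + 1) acc + (ih k (1 * m + acc) + ih k (2 * m + acc))) k) l

/-- Reduction of a matrix modulo 3. -/
def red3 (M : List (List ℕ)) : List (List ℕ) := M.map fun l => l.map (· % 3)

/-- Indicator of the condition that `4 - k` plus the weight of `x` is at most 9. -/
def testL (k x : ℕ) : ℕ := 1 - (wtP 12 x - (5 + k))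

/-- As `testL`, with the further condition that `x` has weight at least 5. -/
def testR (k x : ℕ) : ℕ := (1 - (wtP 12 x - (5 + k))) * (1 - (5 - wtP 12 x))

/-- The two counts from complementary information sets add up to at most `N`. -/
def lowOK (M M' : List (List ℕ)) (s s' : ℕ) (t t' : ℕ → ℕ → ℕ) (k N : ℕ) : Bool :=
  Nat.ble (lowCount t ((red3 M).map fun l => pk 12 (l.drop s)) k 0 +
      lowCount t' ((red3 M').map fun l => pk 12 (l.drop s')) k 0) N

lemma lowOK_true : lowOK genL genR 12 0 testL testR 4 4049 = true := by decide +kernel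

lemma pk_nil (n : ℕ) : pk n [] = 0 := by
  induction n with
  | zero => rfl
  | succ n ih =>
    have h : pk (n + 1) [] = 0 + 64 * pk n [] := rfl
    rw [h, ih]

lemma isInfo_genR : isInfo (List.range' 12 12) genR = true := by decide +kernel

lemma pk_addS (n k : ℕ) (m a : List ℕ) : pk n (addS k m a) = k * pk n m + pk n a := by
  induction n generalizing m a with
  | zero => simp [pk]
  | succ n ih =>
    have h : ∀ l, pk (n + 1) l = l.headD 0 + 64 * pk n l.tail := fun _ => rfl
    rw [h, h, h]
    cases m with
    | nil => simp [addS, pk_nil]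
    | cons x m => cases a with
      | nil =>
        have := ih m []
        simp only [addS, List.headD_cons, List.tail_cons, List.headD_nil, List.tail_nil, this]
        ring
      | cons y a =>
        have := ih m a
        simp only [addS, List.headD_cons, List.tail_cons, this]
        ring

lemma drop_addS (s k : ℕ) (m a : List ℕ) :
    (addS k m a).drop s = addS k (m.drop s) (a.drop s) := by
  induction s generalizing m a with
  | zero => simp
  | succ s ih =>
    cases m with
    | nil => simp [addS]
    | cons x m => cases a with
      | nil => simpa [addS] using ih m []
      | cons y a => simpa [addS] using ih m a

lemma wtP_pk (n : ℕ) (l : List ℕ) (h : ∀ j, l.getD j 0 < 64) :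
    wtP n (pk n l) = ∑ j : Fin n, if l.getD j 0 % 3 = 0 then 0 else 1 := by
  induction n generalizing l with
  | zero => simp [wtP]
  | succ n ih =>
    have h1 : pk (n + 1) l = l.headD 0 + 64 * pk n l.tail := rfl
    have h2 : ∀ x, wtP (n + 1) x = (x % 64 % 3 + 1) / 2 + wtP n (x / 64) := fun _ => rfl
    have h0 : l.headD 0 < 64 := by have := h 0; cases l <;> simpa using this
    have ht : ∀ j, l.tail.getD j 0 = l.getD (j + 1) 0 := by intro j; cases l <;> simp
    rw [h1, h2, Fin.sum_univ_succ, show (l.headD 0 + 64 * pk n l.tail) % 64 = l.headD 0 by omega,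
      show (l.headD 0 + 64 * pk n l.tail) / 64 = pk n l.tail by omega,
      ih l.tail (fun j => by rw [ht]; exact h _)]
    simp only [Fin.val_zero, Fin.val_succ, ht]
    congr 1
    cases l with
    | nil => simp
    | cons x l =>
      simp only [List.headD_cons, List.getD_cons_zero, List.headD_cons]
      split_ifs <;> omega

/-- The number of nonzero coefficients. -/
def nz (κ : List ℕ) : ℕ := (κ.map fun x => if x = 0 then 0 else 1).sum

/-- `lowCount` is the sum of `t` over a list which contains every combination of the rows with at
most `k` nonzero coefficients. -/
lemma lowCount_spec (s : ℕ) (t : ℕ → ℕ → ℕ) (rows : List (List ℕ)) (k : ℕ) (acc : List ℕ) :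
    ∃ L : List (ℕ × List ℕ),
      (∀ κ : List ℕ, κ.length = rows.length → (∀ x ∈ κ, x < 3) → nz κ ≤ k →
        ∃ l, (k - nz κ, l) ∈ L ∧
          ∀ j, l.getD j 0 = (combL κ rows).getD j 0 + acc.getD j 0) ∧
      (L.map fun p => t p.1 (pk 12 (p.2.drop s))).sum =
        lowCount t (rows.map fun l => pk 12 (l.drop s)) k (pk 12 (acc.drop s)) := by
  have nz0 : ∀ κ : List ℕ, nz κ = 0 → ∀ rows j, (combL κ rows).getD j 0 = 0 := by
    intro κ
    induction κ with
    | nil => intro _ rows j; simp [combL]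
    | cons x κ ih =>
      intro h rows j
      have hx : x = 0 := by
        by_contra hx; simp [nz, hx] at h
      subst hx
      cases rows with
      | nil => simp [combL]
      | cons m ms => rw [combL, getD_addS, ih (by simpa [nz] using h)]; simp
  induction rows generalizing k acc with
  | nil =>
    refine ⟨[(k, acc)], fun κ hl _ _ => ?_, by simp [lowCount]⟩
    obtain rfl := List.length_eq_zero_iff.mp hl
    exact ⟨acc, by simp [nz], by simp [combL]⟩
  | cons m ms ih =>
    cases k with
    | zero =>
      refine ⟨[(0, acc)], fun κ hl _ h0 => ⟨acc, by simp, fun j => ?_⟩, by simp [lowCount]⟩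
      rw [nz0 κ (by omega)]; simp
    | succ k =>
      obtain ⟨L0, h0, e0⟩ := ih (k + 1) acc
      obtain ⟨L1, h1, e1⟩ := ih k (addS 1 m acc)
      obtain ⟨L2, h2, e2⟩ := ih k (addS 2 m acc)
      refine ⟨L0 ++ (L1 ++ L2), fun κ hl hκ hk => ?_, ?_⟩
      · cases κ with
        | nil => simp at hl
        | cons x κ =>
          have hl' : κ.length = ms.length := by simpa using hl
          have hκ' : ∀ y ∈ κ, y < 3 := fun y hy => hκ y (by simp [hy])
          have hx : x < 3 := hκ x (by simp)
          have hn : nz (x :: κ) = (if x = 0 then 0 else 1) + nz κ := by simp [nz]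
          rw [hn] at hk ⊢
          interval_cases x
          · obtain ⟨l, hm, hl⟩ := h0 κ hl' hκ' (by simpa using hk)
            refine ⟨l, by simpa using Or.inl hm, fun j => ?_⟩
            rw [hl, combL, getD_addS]; ring
          · obtain ⟨l, hm, hl⟩ := h1 κ hl' hκ' (by simp at hk; omega)
            refine ⟨l, ?_, fun j => ?_⟩
            · rw [show k + 1 - ((if (1 : ℕ) = 0 then 0 else 1) + nz κ) = k - nz κ by simp; omega]
              simp [hm]
            · rw [hl, combL, getD_addS, getD_addS]; ring
          · obtain ⟨l, hm, hl⟩ := h2 κ hl' hκ' (by simp at hk; omega)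
            refine ⟨l, ?_, fun j => ?_⟩
            · rw [show k + 1 - ((if (2 : ℕ) = 0 then 0 else 1) + nz κ) = k - nz κ by simp; omega]
              simp [hm]
            · rw [hl, combL, getD_addS, getD_addS]; ring
      · rw [List.map_append, List.map_append, List.sum_append, List.sum_append, e0, e1, e2]
        simp only [drop_addS, pk_addS, List.map_cons]
        rfl

lemma combL_le (κ : List ℕ) (rows : List (List ℕ)) (hκ : ∀ x ∈ κ, x < 3)
    (hr : ∀ m ∈ rows, ∀ j, m.getD j 0 ≤ 2) (j : ℕ) : (combL κ rows).getD j 0 ≤ 4 * nz κ := by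
  induction κ generalizing rows with
  | nil => simp [combL]
  | cons x κ ih =>
    cases rows with
    | nil => simp [combL]
    | cons m ms =>
      have h1 := ih ms (fun y hy => hκ y (by simp [hy])) (fun r hr' => hr r (by simp [hr']))
      have h2 := hr m (by simp) j
      have h3 := hκ x (by simp)
      have hn : nz (x :: κ) = (if x = 0 then 0 else 1) + nz κ := by simp [nz]
      rw [combL, getD_addS, hn]
      split_ifs with h0
      · subst h0; omega
      · have : x * m.getD j 0 ≤ 2 * 2 := Nat.mul_le_mul (by omega) h2
        omega

lemma getD_map_mod (n : ℕ) (l : List ℕ) (j : ℕ) : (l.map (· % n)).getD j 0 = l.getD j 0 % n := by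
  induction l generalizing j with
  | nil => simp
  | cons x l ih => cases j with
    | zero => simp
    | succ j => simpa using ih j

lemma card_le_sum {α β : Type*} (X : Finset α) (L : List β) (f : β → α) (t : β → ℕ)
    (h : ∀ x ∈ X, ∃ b ∈ L, f b = x ∧ 1 ≤ t b) : X.card ≤ (L.map t).sum := by
  have h1 : X ⊆ ((L.filter fun b => 1 ≤ t b).map f).toFinset := by
    intro x hx
    obtain ⟨b, hb, rfl, ht⟩ := h x hx
    simp only [List.mem_toFinset, List.mem_map, List.mem_filter, decide_eq_true_eq]
    exact ⟨b, ⟨hb, ht⟩, rfl⟩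
  refine (Finset.card_le_card h1).trans ((List.toFinset_card_le _).trans ?_)
  rw [List.length_map]
  clear h h1
  induction L with
  | nil => simp
  | cons b L ih =>
    rw [List.filter_cons]
    split_ifs with hb
    · simp only [decide_eq_true_eq] at hb
      simp only [List.length_cons, List.map_cons, List.sum_cons]; omega
    · simp only [List.map_cons, List.sum_cons]; omega

lemma row_red3 (M : List (List ℕ)) (i : ℕ) : row (ZMod 3) (red3 M) i = row (ZMod 3) M i := by
  have h3 : ((3 : ℕ) : ZMod 3) = 0 := by decide
  have : (red3 M).getD i [] = (M.getD i []).map (· % 3) := by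
    simp only [red3, List.getD_eq_getElem?_getD, List.getElem?_map]
    cases M[i]? <;> simp
  funext j
  rw [row, row, this, ofL, ofL, getD_map_mod, cast_mod h3]

lemma h243_3 : ((243 : ℕ) : ZMod 3) = 0 := by decide

/-- Words with at most `k` nonzero entries on an information set `I` and a weight condition on
the block of coordinates `s, …, s + 11` are counted by `lowCount`. -/
lemma card_low_half {I : List ℕ} {M : List (List ℕ)} (h : isInfo I M = true) (s : ℕ)
    (t : ℕ → ℕ → ℕ) (k : ℕ) (hk : k < 8) (X : Finset (Fin 24 → ZMod 3))
    (hX : ∀ x ∈ X, x ∈ code (ZMod 3) ∧ (∑ i, if x (ix I i) = 0 then 0 else 1) ≤ k ∧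
      ∀ l : List ℕ, (∀ j, l.getD j 0 < 64) → ofL (ZMod 3) l = x →
        1 ≤ t (k - ∑ i, if x (ix I i) = 0 then 0 else 1) (pk 12 (l.drop s))) :
    X.card ≤ lowCount t ((red3 M).map fun l => pk 12 (l.drop s)) k 0 := by
  obtain ⟨L, hL, e⟩ := lowCount_spec s t (red3 M) k []
  rw [List.drop_nil, pk_nil] at e
  rw [← e]
  refine card_le_sum X L (fun p => ofL (ZMod 3) p.2) _ fun x hx => ?_
  obtain ⟨hc, h4, hl⟩ := hX x hx
  let κ : List ℕ := List.ofFn fun i => (x (ix I i)).val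
  have hn : nz κ = ∑ i, if x (ix I i) = 0 then 0 else 1 := by
    rw [nz, List.map_ofFn, List.sum_ofFn]
    simp [ZMod.val_eq_zero]
  have hκ : ∀ y ∈ κ, y < 3 := by
    intro y hy
    obtain ⟨i, rfl⟩ := List.mem_ofFn.mp hy
    exact ZMod.val_lt _
  have hlen : (red3 M).length = 12 := by rw [red3, List.length_map, isInfo_length h]
  obtain ⟨l, hmem, hget⟩ := hL κ (by rw [hlen]; simp [κ]) hκ (by rw [hn]; exact h4)
  have hlx : ofL (ZMod 3) l = x := by
    have : ofL (ZMod 3) l = ofL (ZMod 3) (combL κ (red3 M)) := by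
      funext j; rw [ofL, ofL, hget, List.getD_nil, add_zero]
    rw [this, ofL_combL _ 12 _ _ hlen]
    conv_rhs => rw [code_eq_info h243_3 h hc]
    refine Finset.sum_congr rfl fun i _ => ?_
    have hi : κ.getD i 0 = (x (ix I i)).val := by
      rw [List.getD_eq_getElem _ _ (by simp only [κ, List.length_ofFn]; exact i.2),
        List.getElem_ofFn]
    rw [row_red3, hi, ZMod.natCast_zmod_val]
  refine ⟨_, hmem, hlx, ?_⟩
  rw [hn]
  refine hl l (fun j => ?_) hlx
  have := combL_le κ (red3 M) hκ (by
    intro m hm j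
    obtain ⟨m', _, rfl⟩ := List.mem_map.mp hm
    rw [getD_map_mod]; omega) j
  rw [hget, List.getD_nil]
  omega

lemma card_low_two {I I' : List ℕ} {M M' : List (List ℕ)} (h : isInfo I M = true)
    (h' : isInfo I' M' = true) (s s' : ℕ) (t t' : ℕ → ℕ → ℕ) (k : ℕ) (hk : k < 8)
    (X X' : Finset (Fin 24 → ZMod 3))
    (hX : ∀ x ∈ X, x ∈ code (ZMod 3) ∧ (∑ i, if x (ix I i) = 0 then 0 else 1) ≤ k ∧
      ∀ l : List ℕ, (∀ j, l.getD j 0 < 64) → ofL (ZMod 3) l = x →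
        1 ≤ t (k - ∑ i, if x (ix I i) = 0 then 0 else 1) (pk 12 (l.drop s)))
    (hX' : ∀ x ∈ X', x ∈ code (ZMod 3) ∧ (∑ i, if x (ix I' i) = 0 then 0 else 1) ≤ k ∧
      ∀ l : List ℕ, (∀ j, l.getD j 0 < 64) → ofL (ZMod 3) l = x →
        1 ≤ t' (k - ∑ i, if x (ix I' i) = 0 then 0 else 1) (pk 12 (l.drop s')))
    (N : ℕ) (hN : lowOK M M' s s' t t' k N = true) :
    X.card + X'.card ≤ N :=
  (Nat.add_le_add (card_low_half h s t k hk X hX) (card_low_half h' s' t' k hk X' hX')).trans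
    (Nat.le_of_ble_eq_true hN)

lemma wtP_half {l : List ℕ} (hl : ∀ j, l.getD j 0 < 64) (s : ℕ) (p : Fin 12 → Fin 24)
    (hp : ∀ j, ((p j : Fin 24) : ℕ) = s + j) :
    wtP 12 (pk 12 (l.drop s)) = ∑ j, if ofL (ZMod 3) l (p j) = 0 then 0 else 1 := by
  have hd : ∀ j, (l.drop s).getD j 0 = l.getD (s + j) 0 := by
    intro j; simp [List.getD_eq_getElem?_getD]
  rw [wtP_pk _ _ (fun j => by rw [hd]; exact hl _)]
  refine Finset.sum_congr rfl fun j _ => ?_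
  rw [hd, ofL, hp]
  have : ((l.getD (s + j) 0 : ℕ) : ZMod 3) = 0 ↔ l.getD (s + j) 0 % 3 = 0 := by
    rw [ZMod.natCast_eq_zero_iff]; omega
  simp only [this]

lemma card_low : (Finset.univ.filter fun w => w ∈ code (ZMod 3) ∧ wt w ≤ 9).card ≤ 4049 := by
  have hw : ∀ w, wt w = (∑ i : Fin 12, if w (Fin.castAdd 12 i) = 0 then 0 else 1) +
      ∑ i : Fin 12, if w (Fin.natAdd 12 i) = 0 then 0 else 1 := by
    intro w
    rw [wt]
    exact Fin.sum_univ_add (a := 12) (b := 12) fun j => if w j = 0 then 0 else 1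
  have hiL : ∀ k : Fin 12, ix (List.range 12) k = Fin.castAdd 12 k := by decide
  have hiR : ∀ k : Fin 12, ix (List.range' 12 12) k = Fin.natAdd 12 k := by decide
  let XL := Finset.univ.filter fun w => w ∈ code (ZMod 3) ∧ wt w ≤ 9 ∧
    (∑ i : Fin 12, if w (Fin.castAdd 12 i) = 0 then 0 else 1) ≤ 4
  let XR := Finset.univ.filter fun w => w ∈ code (ZMod 3) ∧ wt w ≤ 9 ∧
    5 ≤ (∑ i : Fin 12, if w (Fin.castAdd 12 i) = 0 then 0 else 1)
  have hsub : (Finset.univ.filter fun w => w ∈ code (ZMod 3) ∧ wt w ≤ 9) ⊆ XL ∪ XR := by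
    intro w hw
    simp only [XL, XR, Finset.mem_union, Finset.mem_filter, Finset.mem_univ, true_and] at hw ⊢
    rcases Nat.lt_or_ge 4 (∑ i : Fin 12, if w (Fin.castAdd 12 i) = 0 then 0 else 1) with h | h
    · exact Or.inr ⟨hw.1, hw.2, h⟩
    · exact Or.inl ⟨hw.1, hw.2, h⟩
  refine (Finset.card_le_card hsub).trans ((Finset.card_union_le _ _).trans ?_)
  refine card_low_two isInfo_genL isInfo_genR 12 0 testL testR 4 (by norm_num) XL XR ?_ ?_ 4049
    lowOK_true
  · intro x hx
    simp only [XL, Finset.mem_filter, Finset.mem_univ, true_and] at hx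
    simp only [hiL]
    refine ⟨hx.1, hx.2.2, fun l hl hlx => ?_⟩
    have h1 := hx.2.1
    rw [hw] at h1
    rw [testL, wtP_half hl 12 (Fin.natAdd 12) (fun j => rfl), hlx]
    omega
  · intro x hx
    simp only [XR, Finset.mem_filter, Finset.mem_univ, true_and] at hx
    simp only [hiR]
    have h1 := hx.2.1
    rw [hw] at h1
    refine ⟨hx.1, by omega, fun l hl hlx => ?_⟩
    rw [testR, wtP_half hl 0 (Fin.castAdd 12) (fun j => by simp), hlx]
    refine Nat.mul_pos ?_ ?_ <;> omega

/-! ### Reduction maps and the summands of the transformed enumerator -/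

/-- Reduction modulo a divisor of 243. -/
def Rd (m : ℕ) (h : m ∣ 243 := by decide) : ZMod 243 →+* ZMod m := ZMod.castHom h (ZMod m)

/-- Reduction from `ℤ/9` to `ℤ/3`. -/
def S3 : ZMod 9 →+* ZMod 3 := ZMod.castHom (by decide) (ZMod 3)

/-- Coordinatewise application of a ring homomorphism. -/
def mp {A B : Type*} [CommRing A] [CommRing B] (f : A →+* B) (c : Fin 24 → A) : Fin 24 → B :=
  fun j => f (c j)

lemma h243_9 : ((243 : ℕ) : ZMod 9) = 0 := by decide
lemma h243_27 : ((243 : ℕ) : ZMod 27) = 0 := by decide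
lemma h243 : ((243 : ℕ) : ZMod 243) = 0 := ZMod.natCast_self 243

lemma mp_ofL {A B : Type*} [CommRing A] [CommRing B] (f : A →+* B) (l : List ℕ) :
    mp f (ofL A l) = ofL B l := by
  funext j; simp [mp, ofL]

lemma mp_row {A B : Type*} [CommRing A] [CommRing B] (f : A →+* B) (M : List (List ℕ)) (i : ℕ) :
    mp f (row A M i) = row B M i := mp_ofL f _

lemma mp_code {A B : Type*} [CommRing A] [CommRing B] (f : A →+* B) {c : Fin 24 → A}
    (hc : c ∈ code A) : mp f c ∈ code B := by
  intro i
  have := congrArg f (hc i)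
  rw [map_sum, map_zero] at this
  rw [← this]
  refine Finset.sum_congr rfl fun j _ => ?_
  rw [map_mul, ← mp_row f]
  rfl

lemma S3_R9 (a : ZMod 243) : S3 (Rd 9 (by decide) a) = Rd 3 (by decide) a := by
  have : S3.comp (Rd 9) = Rd 3 := Subsingleton.elim _ _
  exact congrArg (fun f => f a) this

/-- For `a = 27 t` the class of `t` modulo 9. -/
def quo (a : ZMod 243) : ZMod 9 := ((a.val / 27 : ℕ) : ZMod 9)

lemma quo_natCast (n : ℕ) : quo (n : ZMod 243) = ((n / 27 : ℕ) : ZMod 9) := by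
  rw [quo, ZMod.val_natCast]
  refine cast_eq_of_mod (N := 9) (by decide) ?_
  omega

lemma R_natCast (m : ℕ) (h : m ∣ 243) (n : ℕ) : Rd m h (n : ZMod 243) = (n : ZMod m) := by
  simp [Rd]

lemma quo_add (a d : ZMod 243) : quo (a + 27 * d) = quo a + Rd 9 (by decide) d := by
  obtain ⟨x, rfl⟩ := ZMod.natCast_zmod_surjective a
  obtain ⟨y, rfl⟩ := ZMod.natCast_zmod_surjective d
  rw [show ((x : ZMod 243) + 27 * (y : ZMod 243)) = ((x + 27 * y : ℕ) : ZMod 243) by push_cast; rfl,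
    quo_natCast, quo_natCast, R_natCast, ← Nat.cast_add]
  congr 1
  omega

lemma exists_of_R27 {a : ZMod 243} (h : Rd 27 (by decide) a = 0) : ∃ d, a = 27 * d := by
  obtain ⟨x, rfl⟩ := ZMod.natCast_zmod_surjective a
  rw [R_natCast, ZMod.natCast_eq_zero_iff] at h
  obtain ⟨y, rfl⟩ := h
  exact ⟨y, by push_cast; rfl⟩

lemma quo_27 (d : ZMod 243) : quo (27 * d) = Rd 9 (by decide) d := by
  have := quo_add 0 d
  rw [zero_add] at this
  rw [this]; simp [quo]

lemma quo_mul (u : ZMod 243) {a : ZMod 243} (h : Rd 27 (by decide) a = 0) :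
    quo (u * a) = Rd 9 (by decide) u * quo a := by
  obtain ⟨d, rfl⟩ := exists_of_R27 h
  rw [show u * (27 * d) = 27 * (u * d) by ring, quo_27, quo_27, map_mul]

/-- `c` vanishes modulo 27 where `b` does not vanish. -/
def Dj (c : Fin 24 → ZMod 243) (b : Fin 24 → ZMod 9) : Prop :=
  ∀ j, Rd 27 (by decide) (c j) = 0 ∨ b j = 0

/-- The index of the variable attached to a pair of coordinates: `x_0, x_1, x_2` record the valuation
of `a` when `a` is nonzero modulo 27, and otherwise `y_0, y_1, z` record the valuation of `β`. -/
def ex (a : ZMod 243) (β : ZMod 9) : Fin 6 :=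
  if Rd 27 (by decide) a = 0 then (if β = 0 then 5 else if S3 β = 0 then 4 else 3)
  else if Rd 3 (by decide) a ≠ 0 then 0 else if Rd 9 (by decide) a ≠ 0 then 1 else 2

/-- The average over the units `η` of `ℤ/9` of `ψ (η k)`, for a faithful character `ψ`. -/
def rho (k : ZMod 9) : ℚ := if k = 0 then 1 else if 3 * k = 0 then -1 / 2 else 0

/-- The contribution of a pair of words to the transformed enumerator. -/
def term (c : Fin 24 → ZMod 243) (b : Fin 24 → ZMod 9) : MvPolynomial (Fin 6) ℚ :=
  if Dj c b then C (rho (∑ j, b j * quo (c j))) * ∏ j, X (ex (c j) (b j)) else 0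

/-- The sum over the pairs of words whose monomials are divisible by `x_0 y_0`, with a prescribed reduction of
the first word modulo 3. -/
def Fsum (w : Fin 24 → ZMod 3) : MvPolynomial (Fin 6) ℚ :=
  ∑ c : Fin 24 → ZMod 243, ∑ b : Fin 24 → ZMod 9,
    if c ∈ code (ZMod 243) ∧ mp (Rd 3) c = w ∧ b ∈ code (ZMod 9) ∧ mp S3 b ≠ 0 then term c b else 0

/-- Every code word that is nonzero modulo 3 and disjoint from a lift of `w` has weight nine
modulo 3. -/
def Nine (w : Fin 24 → ZMod 3) : Prop :=
  ∀ c ∈ code (ZMod 243), ∀ b ∈ code (ZMod 9), mp S3 b = w → mp (Rd 3) c ≠ 0 → Dj c b →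
    wt (mp (Rd 3) c) = 9

lemma rho_mul {u : ZMod 9} (hu : IsUnit u) (k : ZMod 9) : rho (u * k) = rho k := by
  simp only [rho, mul_left_comm 3 u k, hu.mul_right_eq_zero]

lemma ex_mul {u : ZMod 243} (hu : IsUnit u) {v : ZMod 9} (hv : IsUnit v) (a : ZMod 243)
    (β : ZMod 9) : ex (u * a) (v * β) = ex a β := by
  simp only [ex, map_mul, (hu.map _).mul_right_eq_zero, hv.mul_right_eq_zero,
    (hv.map S3).mul_right_eq_zero, ne_eq]

lemma Dj_mul {c c' : Fin 24 → ZMod 243} {b b' : Fin 24 → ZMod 9} (π : Equiv.Perm (Fin 24))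
    (u : Fin 24 → ZMod 243) (hu : ∀ j, IsUnit (u j)) (v : Fin 24 → ZMod 9) (hv : ∀ j, IsUnit (v j))
    (hc : ∀ j, c' j = u j * c (π j)) (hb : ∀ j, b' j = v j * b (π j)) : Dj c' b' ↔ Dj c b := by
  simp only [Dj, hc, hb, map_mul, ((hu _).map _).mul_right_eq_zero, (hv _).mul_right_eq_zero]
  exact π.forall_congr_left.trans (by simp)

/-- Permuting the coordinates and multiplying them by units does not change `term`, if the
multipliers are compatible with the argument of `rho`. -/
lemma term_mul {c c' : Fin 24 → ZMod 243} {b b' : Fin 24 → ZMod 9} (π : Equiv.Perm (Fin 24))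
    (u : Fin 24 → ZMod 243) (hu : ∀ j, IsUnit (u j)) (v : Fin 24 → ZMod 9) (hv : ∀ j, IsUnit (v j))
    (hc : ∀ j, c' j = u j * c (π j)) (hb : ∀ j, b' j = v j * b (π j)) (η : ZMod 9) (hη : IsUnit η)
    (huv : ∀ j, v j * Rd 9 (by decide) (u j) = η) : term c' b' = term c b := by
  have hD := Dj_mul π u hu v hv hc hb
  by_cases h : Dj c b
  · rw [term, term, if_pos h, if_pos (hD.mpr h)]
    have h1 : ∑ j, b' j * quo (c' j) = η * ∑ j, b (π j) * quo (c (π j)) := by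
      rw [Finset.mul_sum]
      refine Finset.sum_congr rfl fun j _ => ?_
      rw [hb, hc]
      rcases h (π j) with h0 | h0
      · rw [quo_mul _ h0, ← huv j]; ring
      · rw [h0]; ring
    have h2 : ∏ j, (X (ex (c' j) (b' j)) : MvPolynomial (Fin 6) ℚ) = ∏ j, X (ex (c j) (b j)) := by
      rw [← Equiv.prod_comp π fun j => (X (ex (c j) (b j)) : MvPolynomial (Fin 6) ℚ)]
      exact Finset.prod_congr rfl fun j _ => by rw [hc, hb, ex_mul (hu j) (hv j)]
    rw [h1, h2, rho_mul hη, Equiv.sum_comp π fun j => b j * quo (c j)]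
  · rw [term, term, if_neg h, if_neg (fun h' => h (hD.mp h'))]

lemma term_add_27 {c d : Fin 24 → ZMod 243} {b : Fin 24 → ZMod 9} (hd : d ∈ code (ZMod 243))
    (hb : b ∈ code (ZMod 9)) : term (c + (27 : ZMod 243) • d) b = term c b := by
  have h27 : Rd 27 (by decide) 27 = 0 := by
    have := R_natCast 27 (by decide) 27
    simp only [Nat.cast_ofNat] at this
    rw [this]; decide
  have hR : ∀ j, Rd 27 (by decide) ((c + (27 : ZMod 243) • d) j) = Rd 27 (by decide) (c j) := by
    intro j; simp [h27]
  have hD : Dj (c + (27 : ZMod 243) • d) b ↔ Dj c b := by simp only [Dj, hR]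
  have hE : ∀ j, ex ((c + (27 : ZMod 243) • d) j) (b j) = ex (c j) (b j) := by
    intro j
    have h3 : Rd 3 (by decide) 27 = 0 := by
      have := R_natCast 3 (by decide) 27
      simp only [Nat.cast_ofNat] at this
      rw [this]; decide
    have h9 : Rd 9 (by decide) 27 = 0 := by
      have := R_natCast 9 (by decide) 27
      simp only [Nat.cast_ofNat] at this
      rw [this]; decide
    simp only [ex, hR]
    simp [h3, h9]
  have hS : ∑ j, b j * quo ((c + (27 : ZMod 243) • d) j) = ∑ j, b j * quo (c j) := by
    have : ∀ j, b j * quo ((c + (27 : ZMod 243) • d) j) =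
        b j * quo (c j) + b j * mp (Rd 9) d j := by
      intro j
      rw [Pi.add_apply, Pi.smul_apply, smul_eq_mul, quo_add, mul_add]; rfl
    simp only [this, Finset.sum_add_distrib]
    rw [code_orth h243_9 hb (mp_code (Rd 9) hd), add_zero]
  simp only [term, hD, hE, hS]

/-! ### Monomial automorphisms -/

/-- A signed permutation of the coordinates preserving the code. -/
structure SPerm where
  π : Equiv.Perm (Fin 24)
  ε : Fin 24 → ℤ
  hε : ∀ j, ε j = 1 ∨ ε j = -1
  hcode : ∀ (A : Type) [CommRing A], ((243 : ℕ) : A) = 0 → ∀ c ∈ code A,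
    (fun j => (ε j : A) * c (π j)) ∈ code A

namespace SPerm

/-- The action of a signed permutation on words. -/
def act (s : SPerm) {A : Type} [CommRing A] (c : Fin 24 → A) : Fin 24 → A :=
  fun j => (s.ε j : A) * c (s.π j)

variable (s : SPerm) {A B : Type} [CommRing A] [CommRing B]

lemma sq (j : Fin 24) : (s.ε j : A) * (s.ε j : A) = 1 := by
  rcases s.hε j with h | h <;> simp [h]

/-- The action as a bijection of the set of words. -/
def actE : (Fin 24 → A) ≃ (Fin 24 → A) where
  toFun := s.act
  invFun c := fun j => (s.ε (s.π.symm j) : A) * c (s.π.symm j)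
  left_inv c := by
    funext j
    simp only [act, Equiv.apply_symm_apply, ← mul_assoc, s.sq, one_mul]
  right_inv c := by
    funext j
    simp only [act, Equiv.symm_apply_apply, ← mul_assoc, s.sq, one_mul]

lemma act_mem_iff [Finite A] (hA : ((243 : ℕ) : A) = 0) {c : Fin 24 → A} :
    s.act c ∈ code A ↔ c ∈ code A := by
  refine ⟨fun h => ?_, fun h => s.hcode A hA c h⟩
  have hsub : s.actE '' (code A : Set (Fin 24 → A)) ⊆ code A := by
    rintro _ ⟨c, hc, rfl⟩
    exact s.hcode A hA c hc
  have heq := Set.eq_of_subset_of_ncard_le hsub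
    (by rw [Set.ncard_image_of_injective _ s.actE.injective]) (Set.toFinite _)
  have : s.actE c ∈ s.actE '' (code A : Set (Fin 24 → A)) := by rw [heq]; exact h
  obtain ⟨c', hc', e⟩ := this
  rw [← s.actE.injective e]; exact hc'

lemma mp_act (f : A →+* B) (c : Fin 24 → A) : mp f (s.act c) = s.act (mp f c) := by
  funext j; simp [mp, act]

lemma isUnit_ε (j : Fin 24) : IsUnit (s.ε j : A) := IsUnit.of_mul_eq_one _ (s.sq j)

lemma act_inj {c d : Fin 24 → A} : s.act c = s.act d ↔ c = d := s.actE.injective.eq_iff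

lemma act_zero : s.act (0 : Fin 24 → A) = 0 := by funext j; simp [act]

lemma term_act (c : Fin 24 → ZMod 243) (b : Fin 24 → ZMod 9) :
    term (s.act c) (s.act b) = term c b := by
  refine term_mul s.π (fun j => (s.ε j : ZMod 243)) (fun j => s.isUnit_ε j)
    (fun j => (s.ε j : ZMod 9)) (fun j => s.isUnit_ε j) (fun _ => rfl) (fun _ => rfl) 1
    isUnit_one fun j => ?_
  rw [map_intCast, s.sq]

lemma Dj_act (c : Fin 24 → ZMod 243) (b : Fin 24 → ZMod 9) :
    Dj (s.act c) (s.act b) ↔ Dj c b :=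
  Dj_mul s.π (fun j => (s.ε j : ZMod 243)) (fun j => s.isUnit_ε j)
    (fun j => (s.ε j : ZMod 9)) (fun j => s.isUnit_ε j) (fun _ => rfl) (fun _ => rfl)

lemma Fsum_act (w : Fin 24 → ZMod 3) : Fsum (s.act w) = Fsum w := by
  rw [Fsum, ← Equiv.sum_comp s.actE]
  refine Finset.sum_congr rfl fun c _ => ?_
  rw [← Equiv.sum_comp s.actE]
  refine Finset.sum_congr rfl fun b _ => ?_
  have h1 : ∀ (c : Fin 24 → ZMod 243), s.actE c = s.act c := fun _ => rfl
  have h2 : ∀ (c : Fin 24 → ZMod 9), s.actE c = s.act c := fun _ => rfl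
  have h3 : s.act (mp S3 b) = 0 ↔ mp S3 b = 0 := by
    rw [← s.act_inj (c := mp S3 b), s.act_zero]
  simp only [h1, h2, s.act_mem_iff h243, s.act_mem_iff h243_9, s.mp_act, s.act_inj, s.term_act,
    ne_eq, h3]

lemma wt_act (w : Fin 24 → ZMod 3) : wt (s.act w) = wt w := by
  have h : ∀ j, s.act w j = 0 ↔ w (s.π j) = 0 := fun j =>
    IsUnit.mul_right_eq_zero (s.isUnit_ε (A := ZMod 3) j)
  rw [wt, wt, ← Equiv.sum_comp s.π fun j => if w j = 0 then (0 : ℕ) else 1]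
  exact Finset.sum_congr rfl fun j _ => by simp only [h]

lemma Nine_act {w : Fin 24 → ZMod 3} (h : Nine w) : Nine (s.act w) := by
  intro c hc b hb hbw hc0 hD
  obtain ⟨c, rfl⟩ := s.actE.surjective c
  obtain ⟨b, rfl⟩ := s.actE.surjective b
  have h1 : s.actE c = s.act c := rfl
  have h2 : s.actE b = s.act b := rfl
  rw [h1] at hc hc0 hD ⊢
  rw [h2] at hb hbw hD
  rw [s.act_mem_iff h243] at hc
  rw [s.act_mem_iff h243_9] at hb
  rw [s.mp_act, s.act_inj] at hbw
  rw [s.mp_act] at hc0 ⊢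
  rw [s.wt_act]
  refine h c hc b hb hbw (fun h0 => hc0 ?_) ((s.Dj_act c b).mp hD)
  rw [h0, s.act_zero]

end SPerm

/-! ### The orbit of a word of weight nine -/

/-- The cyclic shift of the first 23 coordinates. -/
def autT : List (ℕ × ℕ) :=
  [(1, 22), (1, 0), (1, 1), (1, 2), (1, 3), (1, 4), (1, 5), (1, 6), (1, 7), (1, 8), (1, 9), (1,
    10), (1, 11), (1, 12), (1, 13), (1, 14), (1, 15), (1, 16), (1, 17), (1, 18), (1, 19), (1, 20),
    (1, 21), (1, 23)]

/-- The multiplier `j ↦ 2 j` modulo 23. -/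
def autM : List (ℕ × ℕ) :=
  [(1, 0), (1, 2), (1, 4), (1, 6), (1, 8), (1, 10), (1, 12), (1, 14), (1, 16), (1, 18), (1, 20),
    (1, 22), (1, 1), (1, 3), (1, 5), (1, 7), (1, 9), (1, 11), (1, 13), (1, 15), (1, 17), (1, 19),
    (1, 21), (1, 23)]

/-- The signed inversion `j ↦ -1 / j` of the projective line over the field with 23 elements. -/
def autW : List (ℕ × ℕ) :=
  [(242, 23), (1, 22), (1, 11), (1, 15), (1, 17), (242, 9), (1, 19), (242, 13), (1, 20), (1, 5),
    (242, 16), (242, 2), (1, 21), (1, 7), (242, 18), (242, 3), (1, 10), (242, 4), (1, 14), (242,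
    6), (242, 8), (242, 12), (242, 1), (1, 0)]

/-- A word of weight nine modulo 3. -/
def wordZ : List ℕ := [1, 1, 1, 2, 2, 0, 1, 0, 1, 0, 0, 2, 0, 0, 0, 0, 0, 0, 0, 0, 0, 0, 0, 1]

/-- The automorphism of `autT` on lists of length 24. -/
def permT : List ℕ → List ℕ
  | [x0, x1, x2, x3, x4, x5, x6, x7, x8, x9, x10, x11, x12, x13, x14, x15, x16, x17, x18, x19,
      x20, x21, x22, x23] =>
    [x22, x0, x1, x2, x3, x4, x5, x6, x7, x8, x9, x10, x11, x12, x13, x14, x15, x16, x17, x18,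
      x19, x20, x21, x23]
  | l => l

/-- The automorphism of `autM` on lists of length 24. -/
def permM : List ℕ → List ℕ
  | [x0, x1, x2, x3, x4, x5, x6, x7, x8, x9, x10, x11, x12, x13, x14, x15, x16, x17, x18, x19,
      x20, x21, x22, x23] =>
    [x0, x2, x4, x6, x8, x10, x12, x14, x16, x18, x20, x22, x1, x3, x5, x7, x9, x11, x13, x15,
      x17, x19, x21, x23]
  | l => l

/-- The automorphism of `autW` on lists of length 24 with entries modulo 3. -/
def permW : List ℕ → List ℕ
  | [x0, x1, x2, x3, x4, x5, x6, x7, x8, x9, x10, x11, x12, x13, x14, x15, x16, x17, x18, x19,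
      x20, x21, x22, x23] =>
    [2 * x23 % 3, x22, x11, x15, x17, 2 * x9 % 3, x19, 2 * x13 % 3, x20, x5, 2 * x16 % 3, 2 * x2 %
      3, x21, x7, 2 * x18 % 3, 2 * x3 % 3, x10, 2 * x4 % 3, x14, 2 * x6 % 3, 2 * x8 % 3, 2 * x12 %
      3, 2 * x1 % 3, x0]
  | l => l

/-- The list of signs and indices of the negation. -/
def autN : List (ℕ × ℕ) := (List.range 24).map fun j => (242, j)

/-- The source coordinate of a signed permutation stored in a list. -/
def sIdx (s : List (ℕ × ℕ)) (j : Fin 24) : Fin 24 := Fin.ofNat 24 (s.getD j (0, 0)).2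

/-- The sign of a signed permutation stored in a list. -/
def sSgn (s : List (ℕ × ℕ)) (j : Fin 24) : ℤ := if (s.getD j (0, 0)).1 = 1 then 1 else -1

/-- The action of a signed permutation on lists, the sign `-1` being written as 242. -/
def sigL (s : List (ℕ × ℕ)) (l : List ℕ) : List ℕ :=
  (List.range 24).map fun j =>
    (if (s.getD j (0, 0)).1 = 1 then 1 else 242) * l.getD ((s.getD j (0, 0)).2 % 24) 0

lemma getD_sigL (s : List (ℕ × ℕ)) (l : List ℕ) (j : Fin 24) : (sigL s l).getD j 0 =
    (if (s.getD j (0, 0)).1 = 1 then 1 else 242) * l.getD (sIdx s j) 0 := by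
  rw [sigL, List.getD_eq_getElem _ _ (by simp), List.getElem_map, List.getElem_range]
  rfl

lemma ofL_sigL {A : Type} [CommRing A] (hA : ((243 : ℕ) : A) = 0) (s : List (ℕ × ℕ))
    (l : List ℕ) : ofL A (sigL s l) = fun j => (sSgn s j : A) * ofL A l (sIdx s j) := by
  have h242 : ((242 : ℕ) : A) = -1 := by
    rw [eq_neg_iff_add_eq_zero, ← hA]; push_cast; norm_num
  funext j
  rw [ofL, getD_sigL, ofL, sSgn]
  split_ifs
  · simp
  · rw [Nat.cast_mul, h242]; simp

/-- The automorphism given by a list of signs and indices. -/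
def mkSPerm (s : List (ℕ × ℕ)) (hs : Function.Injective (sIdx s))
    (hc : (List.range 12).all (fun i => inCode (sigL s (genL.getD i []))) = true) : SPerm where
  π := Equiv.ofBijective _ (Finite.injective_iff_bijective.mp hs)
  ε := sSgn s
  hε j := by rw [sSgn]; split_ifs <;> simp
  hcode A _ hA c h := by
    simp only [List.all_eq_true, List.mem_range] at hc
    have e : (fun j => (sSgn s j : A) * c (sIdx s j)) =
        ∑ i : Fin 12, c (Fin.castAdd 12 i) • ofL A (sigL s (genL.getD i [])) := by
      funext j
      conv_lhs => rw [code_eq_genL hA h]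
      simp only [Finset.sum_apply, Pi.smul_apply, smul_eq_mul, ofL_sigL hA, Finset.mul_sum, row]
      exact Finset.sum_congr rfl fun i _ => by ring
    change (fun j => (sSgn s j : A) * c (sIdx s j)) ∈ code A
    rw [e]
    exact Submodule.sum_mem _ fun i _ => Submodule.smul_mem _ _ (ofL_mem_code hA (hc i i.2))

/-- The automorphism of `autT`. -/
def symT : SPerm := mkSPerm autT (by decide +kernel) (by decide +kernel)

/-- The automorphism of `autM`. -/
def symM : SPerm := mkSPerm autM (by decide +kernel) (by decide +kernel)

/-- The automorphism of `autW`. -/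
def symW : SPerm := mkSPerm autW (by decide +kernel) (by decide +kernel)

/-- The automorphism of `autN`. -/
def symN : SPerm := mkSPerm autN (by decide +kernel) (by decide +kernel)

/-- `f` computes the automorphism `s` on words modulo 3 stored as lists of digits. -/
def Computes (f : List ℕ → List ℕ) (s : SPerm) : Prop :=
  ∀ l : List ℕ, l.length = 24 → (∀ x ∈ l, x < 3) →
    (f l).length = 24 ∧ (∀ x ∈ f l, x < 3) ∧ ofL (ZMod 3) (f l) = s.act (ofL (ZMod 3) l)

lemma computes_of (f : List ℕ → List ℕ) (s : List (ℕ × ℕ)) (hs) (hc)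
    (h : ∀ v : Fin 24 → ℕ, (f (List.ofFn v)).length = 24 ∧
      ((∀ j, v j < 3) → ∀ x ∈ f (List.ofFn v), x < 3) ∧
      ∀ j : Fin 24, (f (List.ofFn v)).getD j 0 % 3 = (sigL s (List.ofFn v)).getD j 0 % 3) :
    Computes f (mkSPerm s hs hc) := by
  intro l hl h3
  obtain ⟨v, rfl⟩ : ∃ v : Fin 24 → ℕ, l = List.ofFn v :=
    ⟨fun j => l[j], by
      apply List.ext_getElem
      · simp [hl]
      · intro i h1 h2; rw [List.getElem_ofFn]; rfl⟩
  obtain ⟨h1, h2, h4⟩ := h v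
  refine ⟨h1, h2 (fun j => h3 _ (List.mem_ofFn.mpr ⟨j, rfl⟩)), ?_⟩
  refine Eq.trans ?_ (ofL_sigL h243_3 s _)
  funext j
  exact cast_eq_of_mod (N := 3) (by decide) (h4 j)

lemma computes_T : Computes permT symT := by
  refine computes_of _ _ _ _ fun v => ⟨rfl, ?_, fun j => ?_⟩
  · intro hv x hx
    simp only [List.ofFn_succ, List.ofFn_zero, permT, List.mem_cons, List.not_mem_nil,
      or_false] at hx
    rcases hx with h | h | h | h | h | h | h | h | h | h | h | h | h | h | h | h | h | h | h | h |
      h | h | h | h <;> rw [h] <;> exact hv _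
  · fin_cases j <;> simp [List.ofFn_succ, permT, sigL, autT]

lemma computes_M : Computes permM symM := by
  refine computes_of _ _ _ _ fun v => ⟨rfl, ?_, fun j => ?_⟩
  · intro hv x hx
    simp only [List.ofFn_succ, List.ofFn_zero, permM, List.mem_cons, List.not_mem_nil,
      or_false] at hx
    rcases hx with h | h | h | h | h | h | h | h | h | h | h | h | h | h | h | h | h | h | h | h |
      h | h | h | h <;> rw [h] <;> exact hv _
  · fin_cases j <;> simp [List.ofFn_succ, permM, sigL, autM]

lemma computes_W : Computes permW symW := by
  refine computes_of _ _ _ _ fun v => ⟨rfl, ?_, fun j => ?_⟩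
  · intro hv x hx
    simp only [List.ofFn_succ, List.ofFn_zero, permW, List.mem_cons, List.not_mem_nil,
      or_false] at hx
    rcases hx with h | h | h | h | h | h | h | h | h | h | h | h | h | h | h | h | h | h | h | h |
      h | h | h | h <;> rw [h] <;> first | exact hv _ | omega
  · fin_cases j <;> simp [List.ofFn_succ, permW, sigL, autW] <;> omega

/-- Negation of a word modulo 3. -/
def negL (l : List ℕ) : List ℕ := l.map fun x => 2 * x % 3

lemma computes_N : Computes negL symN := by
  refine computes_of _ _ _ _ fun v => ⟨by simp [negL], ?_, fun j => ?_⟩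
  · intro hv x hx
    obtain ⟨y, _, rfl⟩ := List.mem_map.mp hx
    omega
  · have h : autN.getD j (0, 0) = (242, (j : ℕ)) := by
      rw [autN, List.getD_eq_getElem _ _ (by simp), List.getElem_map, List.getElem_range]
    have hi : sIdx autN j = j := by
      rw [sIdx, h]; exact Fin.ext (Nat.mod_eq_of_lt j.2)
    have e : (negL (List.ofFn v)).getD j 0 = 2 * (List.ofFn v).getD j 0 % 3 := by
      rw [negL, List.getD_eq_getElem _ _ (by simp), List.getElem_map,
        List.getD_eq_getElem _ _ (by simp)]
    rw [getD_sigL, h, hi, e]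
    simp only [show ¬ (242 : ℕ) = 1 by norm_num, if_false]
    omega

/-- The first `n` iterates of `f`. -/
def iterL (f : List ℕ → List ℕ) : ℕ → List ℕ → List (List ℕ)
  | 0, _ => []
  | n + 1, x => x :: iterL f n (f x)

/-- Words of weight nine, one from each pair `{w, -w}`. -/
def orbHalf : List (List ℕ) :=
  (wordZ :: [0, 1, 2, 3, 6, 8, 12].map fun a => permW (permT^[a] wordZ)).flatMap fun r =>
    (iterL permM 11 r).flatMap (iterL permT 23)

/-- The words of weight nine. -/
def orb : List (List ℕ) := orbHalf ++ orbHalf.map negL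

/-- The first twelve digits of a word as a number in base 3. -/
def enc (l : List ℕ) : ℕ := (l.take 12).foldr (fun x a => x + 3 * a) 0

/-- The entries of a list are distinct, and not among the positions of the bits of `acc`. -/
def bs (l : List ℕ) : ℕ → Bool :=
  List.rec (fun _ => true) (fun x _ ih acc => Nat.beq (Nat.land (Nat.shiftRight acc x) 1) 0 &&
    ih (Nat.lor acc (Nat.shiftLeft 1 x))) l

lemma bs_orb : bs (orb.map enc) 0 = true := by decide +kernel

lemma length_orb : orb.length = 4048 := by decide +kernel

lemma bs_spec (l : List ℕ) (acc : ℕ) (h : bs l acc = true) :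
    l.Nodup ∧ ∀ x ∈ l, acc.testBit x = false := by
  induction l generalizing acc with
  | nil => simp
  | cons x l ih =>
    have h' : (Nat.beq (Nat.land (Nat.shiftRight acc x) 1) 0 &&
      bs l (Nat.lor acc (Nat.shiftLeft 1 x))) = true := h
    rw [Bool.and_eq_true] at h'
    obtain ⟨h1, h2⟩ := h'
    obtain ⟨hn, hb⟩ := ih _ h2
    have hb' : ∀ y ∈ l, acc.testBit y = false ∧ y ≠ x := by
      intro y hy
      have := hb y hy
      change (acc ||| 1 <<< x).testBit y = false at this
      rw [Nat.testBit_or, Bool.or_eq_false_iff] at this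
      refine ⟨this.1, ?_⟩
      rintro rfl
      have h3 := this.2
      simp [Nat.testBit_shiftLeft] at h3
    refine ⟨List.nodup_cons.mpr ⟨fun hx => (hb' x hx).2 rfl, hn⟩, ?_⟩
    intro y hy
    rcases List.mem_cons.mp hy with rfl | hy
    · have h3 : (acc >>> y) &&& 1 = 0 := Nat.eq_of_beq_eq_true h1
      rw [Nat.testBit, Nat.land_comm, h3]; rfl
    · exact (hb' y hy).1

lemma mem_iterL {f : List ℕ → List ℕ} {P : List ℕ → Prop} (hf : ∀ l, P l → P (f l)) (n : ℕ)
    {x : List ℕ} (hx : P x) : ∀ y ∈ iterL f n x, P y := by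
  induction n generalizing x with
  | zero => simp [iterL]
  | succ n ih =>
    intro y hy
    rw [iterL, List.mem_cons] at hy
    rcases hy with rfl | hy
    · exact hx
    · exact ih (hf _ hx) y hy

lemma wordZ_mem : ofL (ZMod 3) wordZ ∈ code (ZMod 3) := by
  have h : ofL (ZMod 3) wordZ = ofL (ZMod 3) (combL (wordZ.take 12) genL) :=
    ofL_eq_of_eqModL (N := 3) (by decide) (by decide +kernel)
  rw [h, ofL_combL _ 12 _ _ rfl]
  exact Submodule.sum_mem _ fun i _ => Submodule.smul_mem _ _ (isInfo_mem h243_3 isInfo_genL i)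

lemma wordZ_wt : wt (ofL (ZMod 3) wordZ) = 9 := by decide +kernel

/-- The automorphisms act transitively on the 4048 words of weight nine, and there are no nonzero
words of smaller weight. -/
lemma orbit (G : (Fin 24 → ZMod 3) → Prop) (h0 : G (ofL (ZMod 3) wordZ))
    (hact : ∀ (s : SPerm) w, G w → G (s.act w)) (hG : ∀ w, G w → w ∈ code (ZMod 3) ∧ wt w = 9) :
    (Finset.univ.filter fun w => w ∈ code (ZMod 3) ∧ w ≠ 0 ∧ wt w ≤ 9).card = 4048 ∧
      ∀ w ∈ code (ZMod 3), w ≠ 0 → wt w ≤ 9 → G w := by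
  let P : List ℕ → Prop := fun l => l.length = 24 ∧ (∀ x ∈ l, x < 3) ∧ G (ofL (ZMod 3) l)
  have hP : ∀ {f : List ℕ → List ℕ} {s : SPerm}, Computes f s → ∀ l, P l → P (f l) := by
    intro f s hf l hl
    obtain ⟨h1, h2, h3⟩ := hf l hl.1 hl.2.1
    exact ⟨h1, h2, by rw [h3]; exact hact s _ hl.2.2⟩
  have hZ : P wordZ := ⟨rfl, by decide, h0⟩
  have hit : ∀ a, P (permT^[a] wordZ) := by
    intro a
    induction a with
    | zero => exact hZ
    | succ a ih => rw [Function.iterate_succ_apply']; exact hP computes_T _ ih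
  have hhalf : ∀ l ∈ orbHalf, P l := by
    intro l hl
    rw [orbHalf, List.mem_flatMap] at hl
    obtain ⟨r, hr, hl⟩ := hl
    obtain ⟨q, hq, hl⟩ := List.mem_flatMap.mp hl
    refine mem_iterL (hP computes_T) 23 (mem_iterL (hP computes_M) 11 ?_ q hq) l hl
    rcases List.mem_cons.mp hr with rfl | hr
    · exact hZ
    · obtain ⟨a, _, rfl⟩ := List.mem_map.mp hr
      exact hP computes_W _ (hit a)
  have horb : ∀ l ∈ orb, P l := by
    intro l hl
    rw [orb, List.mem_append] at hl
    rcases hl with hl | hl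
    · exact hhalf l hl
    · obtain ⟨r, hr, rfl⟩ := List.mem_map.mp hl
      exact hP computes_N _ (hhalf r hr)
  have hnd : (orb.map (ofL (ZMod 3))).Nodup := by
    refine List.Nodup.map_on ?_ (List.Nodup.of_map enc (bs_spec _ _ bs_orb).1)
    intro l hl l' hl' e
    obtain ⟨h1, h2, _⟩ := horb l hl
    obtain ⟨h1', h2', _⟩ := horb l' hl'
    refine List.ext_getElem (h1.trans h1'.symm) fun i hi hi' => ?_
    have he := congrFun e ⟨i, by omega⟩
    simp only [ofL] at he
    rw [List.getD_eq_getElem _ _ hi, List.getD_eq_getElem _ _ hi', ZMod.natCast_eq_natCast_iff']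
      at he
    rwa [Nat.mod_eq_of_lt (h2 _ (List.getElem_mem _)),
      Nat.mod_eq_of_lt (h2' _ (List.getElem_mem _))] at he
  let O : Finset (Fin 24 → ZMod 3) := (orb.map (ofL (ZMod 3))).toFinset
  have hO : O.card = 4048 := by
    rw [List.toFinset_card_of_nodup hnd, List.length_map, length_orb]
  have hOG : ∀ w ∈ O, G w := by
    intro w hw
    obtain ⟨l, hl, rfl⟩ := List.mem_map.mp (List.mem_toFinset.mp hw)
    exact (horb l hl).2.2
  have hwt0 : wt 0 = 0 := by simp [wt]
  let Y := Finset.univ.filter fun w => w ∈ code (ZMod 3) ∧ w ≠ 0 ∧ wt w ≤ 9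
  have hsub : O ⊆ Y := by
    intro w hw
    obtain ⟨h1, h2⟩ := hG w (hOG w hw)
    refine Finset.mem_filter.mpr ⟨Finset.mem_univ _, h1, ?_, h2.le⟩
    rintro rfl
    omega
  have hY : Y.card ≤ 4048 := by
    have h1 : insert 0 Y ⊆ Finset.univ.filter fun w => w ∈ code (ZMod 3) ∧ wt w ≤ 9 := by
      intro w hw
      rcases Finset.mem_insert.mp hw with rfl | hw
      · exact Finset.mem_filter.mpr ⟨Finset.mem_univ _, Submodule.zero_mem _, by omega⟩
      · have := (Finset.mem_filter.mp hw).2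
        exact Finset.mem_filter.mpr ⟨Finset.mem_univ _, this.1, this.2.2⟩
    have h2 := (Finset.card_le_card h1).trans card_low
    rw [Finset.card_insert_of_notMem (by simp [Y])] at h2
    omega
  have hOY : O = Y := Finset.eq_of_subset_of_card_le hsub (by omega)
  refine ⟨by rw [← hO, hOY], fun w h1 h2 h3 => hOG w ?_⟩
  rw [hOY]
  exact Finset.mem_filter.mpr ⟨Finset.mem_univ _, h1, h2, h3⟩

/-! ### Words disjoint from a word of weight nine -/

/-- A class of words modulo 3 that vanish on the support of `wordZ`: the class is spanned by the
combination of the first rows of `genS` with coefficients `v`.  The matrix `M` generates the code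
and is systematic on `I`; `t0` is a further coordinate at which the class does not vanish. -/
structure Ent where
  v : List ℕ
  t0 : ℕ
  I : List ℕ
  M : List (List ℕ)

/-- Classes whose reductions modulo 3 have weight nine. -/
def ents9 : List Ent := [
  ⟨[0, 0, 1, 1], 22, [0, 5, 7, 16, 9, 10, 12, 13, 14, 15, 19, 20],
    [[1,70,37,176,2,0,19,0,226,0,0,53,0,0,0,0,0,51,123,0,0,87,207,175],
     [0,91,68,102,44,1,65,0,146,0,0,164,0,0,0,0,0,121,105,0,0,113,6,27],
     [0,201,70,227,183,0,163,1,95,0,0,220,0,0,0,0,0,36,82,0,0,181,6,152],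
     [0,62,156,187,8,0,167,0,9,0,0,147,0,0,0,0,1,139,209,0,0,128,12,113],
     [0,227,176,143,124,0,102,0,172,1,0,5,0,0,0,0,0,123,138,0,0,56,68,141],
     [0,148,17,71,127,0,232,0,65,0,1,44,0,0,0,0,0,67,196,0,0,9,152,146],
     [0,207,192,120,84,0,17,0,67,0,0,31,1,0,0,0,0,191,88,0,0,139,50,121],
     [0,183,2,124,214,0,24,0,116,0,0,129,0,1,0,0,0,159,70,0,0,235,167,199],
     [0,6,207,68,167,0,149,0,91,0,0,23,0,0,1,0,0,193,119,0,0,231,110,237],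
     [0,161,120,105,173,0,222,0,196,0,0,19,0,0,0,1,0,88,88,0,0,209,124,105],
     [0,23,190,238,114,0,237,0,44,0,0,144,0,0,0,0,0,31,19,1,0,147,220,164],
     [0,80,224,141,219,0,62,0,232,0,0,237,0,0,0,0,0,17,222,0,1,167,94,65]]⟩,
  ⟨[0, 1, 0, 0], 22, [0, 5, 9, 13, 7, 12, 14, 16, 17, 18, 19, 21],
    [[1,106,238,224,164,0,115,0,208,0,231,152,0,0,0,222,0,0,0,0,153,0,198,88],
     [0,106,143,55,72,1,192,0,209,0,158,226,0,0,0,55,0,0,0,0,229,0,123,15],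
     [0,76,130,220,138,0,199,0,215,1,25,78,0,0,0,125,0,0,0,0,162,0,90,230],
     [0,137,174,85,41,0,193,0,240,0,189,194,0,1,0,86,0,0,0,0,230,0,186,14],
     [0,242,2,38,169,0,131,1,168,0,204,207,0,0,0,131,0,0,0,0,131,0,37,204],
     [0,169,36,88,215,0,165,0,141,0,155,23,1,0,0,90,0,0,0,0,127,0,52,118],
     [0,105,145,56,166,0,42,0,208,0,156,228,0,0,1,148,0,0,0,0,80,0,122,13],
     [0,211,63,138,30,0,166,0,211,0,43,200,0,0,0,135,1,0,0,0,167,0,106,74],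
     [0,107,68,82,109,0,126,0,4,0,224,122,0,0,0,232,0,1,0,0,89,0,226,155],
     [0,32,105,133,6,0,10,0,70,0,173,33,0,0,0,41,0,0,1,0,178,0,241,66],
     [0,106,68,194,35,0,89,0,171,0,17,160,0,0,0,195,0,0,0,1,51,0,188,192],
     [0,62,44,146,71,0,31,0,100,0,127,79,0,0,0,242,0,0,0,0,105,1,133,233]]⟩,
  ⟨[1, 0, 0, 0], 22, [0, 7, 9, 10, 5, 12, 13, 14, 18, 19, 20, 21],
    [[1,19,55,119,221,0,67,0,100,0,0,161,0,0,0,171,96,12,0,0,0,0,207,61],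
     [0,188,19,12,143,0,147,1,221,0,0,61,0,0,0,36,67,124,0,0,0,0,171,82],
     [0,12,119,129,74,0,167,0,32,1,0,222,0,0,0,160,118,230,0,0,0,0,183,143],
     [0,22,143,211,103,0,92,0,111,0,1,153,0,0,0,31,86,169,0,0,0,0,168,240],
     [0,161,182,100,90,1,154,0,240,0,0,165,0,0,0,97,4,222,0,0,0,0,175,215],
     [0,119,231,13,32,0,118,0,169,0,0,100,1,0,0,183,76,129,0,0,0,0,83,222],
     [0,143,221,74,111,0,86,0,140,0,0,3,0,1,0,168,151,211,0,0,0,0,212,153],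
     [0,171,207,183,212,0,79,0,75,0,0,97,0,0,1,62,214,160,0,0,0,0,160,68],
     [0,36,171,160,168,0,29,0,212,0,0,68,0,0,0,83,79,60,1,0,0,0,62,146],
     [0,182,82,21,240,0,4,0,153,0,0,28,0,0,0,175,89,100,0,1,0,0,146,165],
     [0,96,176,76,157,0,133,0,92,0,0,4,0,0,0,214,103,118,0,0,1,0,164,154],
     [0,67,96,118,151,0,140,0,157,0,0,154,0,0,0,79,133,167,0,0,0,1,214,239]]⟩,
  ⟨[1, 0, 1, 1], 21, [0, 7, 12, 13, 5, 9, 10, 14, 15, 18, 19, 20],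
    [[1,37,1,2,131,0,130,0,37,0,0,206,0,0,0,0,168,75,0,0,0,207,36,205],
     [0,179,46,192,188,0,237,1,131,0,0,160,0,0,0,0,31,214,0,0,0,18,135,10],
     [0,53,24,118,119,0,49,0,76,0,0,97,1,0,0,0,217,222,0,0,0,213,224,99],
     [0,182,23,23,159,0,182,0,206,0,0,60,0,1,0,0,145,145,0,0,0,84,206,60],
     [0,211,221,72,83,1,59,0,38,0,0,182,0,0,0,0,96,100,0,0,0,8,186,183],
     [0,107,23,173,85,0,108,0,37,1,0,230,0,0,0,0,147,144,0,0,0,161,131,228],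
     [0,48,173,177,216,0,237,0,74,0,1,191,0,0,0,0,163,125,0,0,0,218,164,97],
     [0,223,24,115,195,0,126,0,1,0,0,173,0,0,1,0,125,72,0,0,0,193,152,25],
     [0,7,195,103,208,0,11,0,205,0,0,85,0,0,0,1,217,119,0,0,0,40,55,83],
     [0,184,24,116,157,0,88,0,207,0,0,60,0,0,0,0,50,146,1,0,0,82,114,61],
     [0,172,220,221,47,0,23,0,242,0,0,219,0,0,0,0,22,173,0,1,0,47,241,220],
     [0,56,242,147,114,0,209,0,205,0,0,39,0,0,0,0,78,167,0,0,1,188,58,131]]⟩,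
  ⟨[1, 0, 2, 2], 22, [0, 7, 14, 16, 5, 9, 10, 12, 13, 15, 18, 21],
    [[1,115,70,224,11,0,112,0,175,0,0,98,0,0,0,0,0,228,0,84,186,0,207,40],
     [0,162,86,232,126,0,12,1,157,0,0,187,0,0,0,0,0,175,0,155,40,0,201,227],
     [0,23,241,159,155,0,116,0,183,0,0,194,0,0,1,0,0,140,0,133,126,0,147,107],
     [0,209,161,98,56,0,207,0,52,0,0,108,0,0,0,0,1,174,0,49,170,0,42,2],
     [0,56,231,186,203,1,57,0,13,0,0,170,0,0,0,0,0,113,0,117,215,0,29,142],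
     [0,237,201,68,157,0,142,0,105,1,0,191,0,0,0,0,0,229,0,183,230,0,226,148],
     [0,206,139,70,157,0,205,0,42,0,1,161,0,0,0,0,0,168,0,2,231,0,193,180],
     [0,144,37,128,162,0,52,0,237,0,0,34,1,0,0,0,0,195,0,23,187,0,89,10],
     [0,195,75,15,175,0,197,0,229,0,0,69,0,1,0,0,0,148,0,140,130,0,176,19],
     [0,10,63,203,227,0,10,0,148,0,0,241,0,0,0,1,0,19,0,107,101,0,110,161],
     [0,191,205,112,231,0,99,0,101,0,0,207,0,0,0,0,0,46,1,127,57,0,7,233],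
     [0,154,193,207,42,0,7,0,17,0,0,42,0,0,0,0,0,67,0,96,29,1,32,133]]⟩,
  ⟨[1, 1, 0, 0], 22, [0, 9, 10, 12, 5, 7, 13, 16, 17, 19, 20, 21],
    [[1,127,136,35,53,0,94,0,157,0,0,179,0,0,78,168,0,0,132,0,0,0,216,94],
     [0,84,200,232,49,0,209,0,109,1,0,60,0,0,19,95,0,0,67,0,0,0,87,39],
     [0,58,62,168,185,0,194,0,1,0,1,234,0,0,239,66,0,0,182,0,0,0,120,53],
     [0,191,195,231,185,0,218,0,110,0,0,188,1,0,129,223,0,0,71,0,0,0,96,163],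
     [0,233,119,87,120,1,203,0,133,0,0,184,0,0,225,74,0,0,101,0,0,0,155,129],
     [0,44,163,12,66,0,38,1,134,0,0,51,0,0,233,16,0,0,57,0,0,0,161,191],
     [0,215,203,23,4,0,175,0,23,0,0,119,0,1,83,142,0,0,87,0,0,0,175,31],
     [0,144,144,97,75,0,122,0,23,0,0,242,0,0,219,98,1,0,145,0,0,0,47,98],
     [0,135,117,122,62,0,176,0,196,0,0,128,0,0,64,6,0,1,125,0,0,0,8,3],
     [0,110,109,86,1,0,220,0,133,0,0,196,0,0,110,87,0,0,110,1,0,0,23,134],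
     [0,195,212,232,182,0,90,0,110,0,0,69,0,0,23,104,0,0,204,0,1,0,211,155],
     [0,166,42,134,234,0,206,0,87,0,0,52,0,0,37,137,0,0,178,0,0,1,160,69]]⟩,
  ⟨[1, 2, 0, 0], 20, [0, 9, 10, 15, 5, 7, 12, 13, 14, 16, 17, 18],
    [[1,193,193,89,209,0,226,0,70,0,0,53,0,0,0,0,0,0,0,120,207,51,138,19],
     [0,164,89,104,115,0,216,0,7,1,0,149,0,0,0,0,0,0,0,87,120,80,113,96],
     [0,110,25,124,175,0,46,0,3,0,1,179,0,0,0,0,0,0,0,182,93,12,91,75],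
     [0,57,215,50,41,0,222,0,38,0,0,55,0,0,0,1,0,0,0,29,42,65,3,58],
     [0,3,163,69,56,1,154,0,75,0,0,23,0,0,0,0,0,0,0,24,235,118,160,41],
     [0,224,28,25,165,0,59,1,167,0,0,226,0,0,0,0,0,0,0,140,200,215,34,148],
     [0,102,139,182,18,0,28,0,144,0,0,133,1,0,0,0,0,0,0,41,157,66,14,40],
     [0,203,44,51,133,0,109,0,50,0,0,27,0,1,0,0,0,0,0,44,182,161,225,48],
     [0,24,146,42,89,0,105,0,191,0,0,128,0,0,1,0,0,0,0,121,11,172,62,141],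
     [0,179,95,206,92,0,51,0,55,0,0,144,0,0,0,0,1,0,0,166,218,186,162,197],
     [0,151,235,72,240,0,40,0,236,0,0,240,0,0,0,0,0,1,0,132,131,214,44,31],
     [0,49,87,202,126,0,203,0,180,0,0,102,0,0,0,0,0,0,1,130,106,119,170,22]]⟩]

/-- Classes whose reductions modulo 3 have weight twelve. -/
def ents12 : List Ent := [
  ⟨[0, 1, 1, 1], 21, [0, 7, 9, 10, 12, 13, 15, 16, 17, 18, 19, 20],
    [[1,85,121,242,206,195,160,0,37,0,0,113,0,0,123,0,0,0,0,0,0,234,84,85],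
     [0,182,143,241,234,218,211,1,205,0,0,232,0,0,52,0,0,0,0,0,0,134,230,137],
     [0,182,50,149,85,126,63,0,112,1,0,236,0,0,147,0,0,0,0,0,0,137,227,231],
     [0,38,76,1,206,1,206,0,38,0,1,207,0,0,169,0,0,0,0,0,0,38,37,131],
     [0,108,144,242,158,219,136,0,38,0,0,159,1,0,145,0,0,0,0,0,0,61,61,61],
     [0,242,150,150,1,152,96,0,1,0,0,3,0,1,94,0,0,0,0,0,0,2,241,94],
     [0,219,128,152,48,223,118,0,1,0,0,50,0,0,70,1,0,0,0,0,0,25,171,117],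
     [0,182,147,2,84,72,153,0,206,0,0,178,0,0,143,0,1,0,0,0,0,230,136,227],
     [0,136,194,96,83,118,104,0,206,0,0,176,0,0,96,0,0,1,0,0,0,32,90,180],
     [0,145,71,94,120,70,96,0,169,0,0,213,0,0,218,0,0,0,1,0,0,191,100,96],
     [0,99,117,93,121,115,49,0,167,0,0,118,0,0,172,0,0,0,0,1,0,143,147,50],
     [0,84,118,240,113,193,67,0,36,0,0,17,0,0,30,0,0,0,0,0,1,232,178,236]]⟩,
  ⟨[0, 1, 2, 2], 22, [0, 7, 9, 10, 13, 14, 15, 16, 17, 18, 20, 21],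
    [[1,112,229,227,179,93,217,0,133,0,0,155,87,0,0,0,0,0,0,87,0,0,198,22],
     [0,110,134,133,86,1,219,1,134,0,0,156,87,0,0,0,0,0,0,86,0,0,197,24],
     [0,92,239,147,150,148,153,0,1,1,0,150,95,0,0,0,0,0,0,1,0,0,94,1],
     [0,236,67,160,205,96,115,0,156,0,1,227,108,0,0,0,0,0,0,110,0,0,196,69],
     [0,62,87,87,135,1,71,0,179,0,0,110,132,1,0,0,0,0,0,134,0,0,46,23],
     [0,90,9,7,201,92,169,0,62,0,0,131,17,0,1,0,0,0,0,110,0,0,197,219],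
     [0,219,173,174,25,1,48,0,23,0,0,221,23,0,0,1,0,0,0,24,0,0,242,47],
     [0,74,210,115,20,90,100,0,172,0,0,217,175,0,0,0,1,0,0,24,0,0,2,195],
     [0,46,194,196,196,149,2,0,197,0,0,198,47,0,0,0,0,1,0,46,0,0,242,1],
     [0,226,107,108,62,148,175,0,111,0,0,87,157,0,0,0,0,0,1,156,0,0,47,220],
     [0,201,37,38,237,150,223,0,135,0,0,64,181,0,0,0,0,0,0,86,1,0,47,25],
     [0,234,216,67,206,4,210,0,156,0,0,229,107,0,0,0,0,0,0,109,0,1,194,70]]⟩,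
  ⟨[1, 1, 1, 1], 22, [0, 5, 7, 9, 10, 12, 14, 15, 16, 17, 20, 21],
    [[1,13,64,218,50,0,46,0,22,0,0,8,0,147,0,0,0,0,156,138,0,0,198,58],
     [0,41,84,42,42,1,59,0,101,0,0,59,0,142,0,0,0,0,201,83,0,0,184,101],
     [0,138,164,100,176,0,130,1,81,0,0,91,0,89,0,0,0,0,180,240,0,0,115,118],
     [0,71,196,108,128,0,72,0,177,1,0,17,0,232,0,0,0,0,4,123,0,0,19,142],
     [0,215,130,178,7,0,229,0,72,0,1,44,0,3,0,0,0,0,198,53,0,0,163,201],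
     [0,164,197,201,32,0,221,0,181,0,0,109,1,137,0,0,0,0,4,28,0,0,172,143],
     [0,91,110,16,167,0,218,0,86,0,0,140,0,159,1,0,0,0,151,17,0,0,28,160],
     [0,51,175,126,219,0,9,0,133,0,0,85,0,109,0,1,0,0,193,26,0,0,233,59],
     [0,3,214,40,117,0,98,0,231,0,0,132,0,181,0,0,1,0,164,47,0,0,241,100],
     [0,80,46,43,210,0,21,0,212,0,0,135,0,105,0,0,0,1,238,214,0,0,220,101],
     [0,88,137,125,52,0,215,0,95,0,0,159,0,73,0,0,0,0,230,64,1,0,121,59],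
     [0,18,185,19,16,0,141,0,68,0,0,237,0,82,0,0,0,0,226,183,0,1,8,160]]⟩,
  ⟨[1, 1, 2, 2], 21, [0, 5, 7, 9, 10, 12, 13, 14, 15, 16, 17, 19],
    [[1,73,94,239,74,0,76,0,16,0,0,71,0,0,0,0,0,0,186,0,240,72,168,223],
     [0,222,46,99,29,1,124,0,210,0,0,221,0,0,0,0,0,0,183,0,193,25,166,179],
     [0,3,196,200,48,0,46,1,104,0,0,4,0,0,0,0,0,0,55,0,198,199,150,143],
     [0,77,242,152,169,0,168,0,223,1,0,77,0,0,0,0,0,0,147,0,150,77,74,171],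
     [0,90,49,230,193,0,102,0,237,0,1,182,0,0,0,0,0,0,193,0,139,137,96,190],
     [0,223,91,51,225,0,78,0,162,0,0,127,1,0,0,0,0,0,181,0,146,221,166,134],
     [0,78,194,106,124,0,216,0,176,0,0,228,0,1,0,0,0,0,52,0,105,31,74,220],
     [0,227,194,11,125,0,217,0,173,0,0,134,0,0,1,0,0,0,143,0,103,179,72,128],
     [0,190,104,147,140,0,44,0,110,0,0,193,0,0,0,1,0,0,211,0,52,145,152,83],
     [0,94,197,49,47,0,46,0,199,0,0,96,0,0,0,0,1,0,152,0,49,49,1,139],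
     [0,19,199,237,213,0,118,0,128,0,0,114,0,0,0,0,0,1,156,0,143,67,77,61],
     [0,163,96,181,72,0,224,0,207,0,0,12,0,0,0,0,0,0,43,1,184,14,20,217]]⟩,
  ⟨[1, 2, 1, 1], 22, [0, 5, 7, 9, 10, 12, 15, 16, 17, 18, 19, 20],
    [[1,187,130,8,104,0,88,0,178,0,0,50,0,141,12,0,0,0,0,0,0,30,45,217],
     [0,235,228,228,8,1,39,0,8,0,0,24,0,8,23,0,0,0,0,0,0,16,227,23],
     [0,225,11,109,191,0,214,1,162,0,0,103,0,200,141,0,0,0,0,0,0,48,73,226],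
     [0,218,239,95,49,0,9,0,76,1,0,128,0,207,165,0,0,0,0,0,0,65,56,6],
     [0,46,91,16,198,0,167,0,30,0,1,183,0,235,146,0,0,0,0,0,0,22,53,108],
     [0,159,27,125,107,0,100,0,230,0,0,6,1,192,211,0,0,0,0,0,0,202,163,127],
     [0,59,71,95,208,0,169,0,161,0,0,44,0,160,44,1,0,0,0,0,0,102,94,91],
     [0,29,12,110,237,0,18,0,116,0,0,151,0,153,188,0,1,0,0,0,0,50,73,29],
     [0,108,20,165,111,0,119,0,234,0,0,17,0,28,55,0,0,1,0,0,0,88,34,139],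
     [0,219,149,172,46,0,39,0,95,0,0,234,0,169,66,0,0,0,1,0,0,43,5,187],
     [0,47,141,117,173,0,181,0,219,0,0,31,0,52,200,0,0,0,0,1,0,4,43,78],
     [0,170,97,219,27,0,73,0,193,0,0,2,0,157,208,0,0,0,0,0,1,60,107,171]]⟩,
  ⟨[1, 2, 2, 2], 22, [0, 5, 7, 9, 10, 13, 14, 15, 16, 17, 18, 19],
    [[1,13,124,149,20,0,67,0,16,0,0,209,3,0,0,0,0,0,0,0,192,6,180,139],
     [0,210,52,81,164,1,25,0,210,0,0,200,195,0,0,0,0,0,0,0,232,109,217,65],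
     [0,95,69,14,228,0,76,1,185,0,0,3,44,0,0,0,0,0,0,0,61,203,164,207],
     [0,155,203,26,142,0,204,0,223,1,0,92,69,0,0,0,0,0,0,0,18,17,107,183],
     [0,161,54,134,184,0,141,0,75,0,1,205,203,0,0,0,0,0,0,0,131,45,17,176],
     [0,218,43,235,7,0,156,0,14,0,0,68,236,1,0,0,0,0,0,0,55,185,127,11],
     [0,126,204,62,107,0,52,0,92,0,0,180,163,0,1,0,0,0,0,0,87,238,157,100],
     [0,216,10,105,212,0,137,0,191,0,0,198,23,0,0,1,0,0,0,0,8,125,82,6],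
     [0,92,36,127,191,0,151,0,118,0,0,133,73,0,0,0,1,0,0,0,15,144,212,201],
     [0,196,232,138,105,0,181,0,128,0,0,120,222,0,0,0,0,1,0,0,236,43,236,163],
     [0,16,73,105,63,0,132,0,162,0,0,190,145,0,0,0,0,0,1,0,29,212,13,233],
     [0,204,116,40,36,0,137,0,45,0,0,104,83,0,0,0,0,0,0,1,152,132,190,161]]⟩]

/-- The word spanning a class. -/
def Ent.word (e : Ent) : List ℕ := combL e.v genS

/-- Reduction of a list. -/
def modL (n : ℕ) (l : List ℕ) : List ℕ := l.map (· % n)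

/-- The quadruples with entries 0, 3, 6. -/
def lift3 : List (List ℕ) :=
  [0, 3, 6].flatMap fun a => [0, 3, 6].flatMap fun b => [0, 3, 6].flatMap fun c =>
    [0, 3, 6].map fun d => [a, b, c, d]

/-- Coefficients of the words modulo 9 in the class `e`. -/
def coefB (e : Ent) : List (List ℕ) :=
  [1, 2].flatMap fun s => lift3.map fun u => addS 1 u (modL 3 (addS s e.v []))

/-- The words modulo 9 in the class `e`. -/
def bList (e : Ent) : List (List ℕ) := (coefB e).map fun k => modL 9 (combL k genS)

/-- Every nonzero quadruple modulo 3 with equal last entries belongs to some class. -/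
def classOK (es : List Ent) : Bool :=
  (List.range 3).all fun a => (List.range 3).all fun b => (List.range 3).all fun c =>
    (a + b + c == 0) || es.any fun e => [1, 2].any fun s => [a, b, c, c] == modL 3 (addS s e.v [])

lemma classOK_ents : classOK (ents9 ++ ents12) = true := by decide +kernel

lemma isInfo_genS : isInfo setS genS = true := by decide +kernel

lemma ofL_eq_zero_iff (n : ℕ) (l : List ℕ) (j : Fin 24) :
    ofL (ZMod n) l j = 0 ↔ l.getD j 0 % n = 0 := by
  rw [ofL, ZMod.natCast_eq_zero_iff, Nat.dvd_iff_mod_eq_zero]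

lemma ofL_modL {A : Type*} [CommRing A] {n : ℕ} (hn : (n : A) = 0) (l : List ℕ) :
    ofL A (modL n l) = ofL A l := by
  funext j
  rw [ofL, ofL, modL, getD_map_mod, cast_mod hn]

lemma ofL_combL_congr {A : Type*} [CommRing A] {k k' : List ℕ} (M : List (List ℕ))
    (h : ∀ j, ((k.getD j 0 : ℕ) : A) = ((k'.getD j 0 : ℕ) : A)) :
    ofL A (combL k M) = ofL A (combL k' M) := by
  rw [ofL_combL A _ k M rfl, ofL_combL A _ k' M rfl]
  exact Finset.sum_congr rfl fun i _ => by rw [h]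

/-- The support of `wordZ` contains the last eight coordinates of `setS` and coordinate 23, so a
word vanishing there is a combination of the first four rows of `genS`, and the entry at 23 gives
a relation between the last two coefficients. -/
lemma exists_class {x : Fin 24 → ZMod 9} (hx : x ∈ code (ZMod 9))
    (h0 : ∀ j, ofL (ZMod 3) wordZ j ≠ 0 → x j = 0) (hne : mp S3 x ≠ 0) :
    ∃ e ∈ ents9 ++ ents12, (∀ j, mp S3 x j = 0 ↔ ofL (ZMod 3) e.word j = 0) ∧
      ∃ l ∈ bList e, x = ofL (ZMod 9) l := by
  set v : ℕ → ℕ := fun i => (x (ix setS (Fin.ofNat 12 i))).val with hv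
  have hvx : ∀ i, ((v i : ℕ) : ZMod 9) = x (ix setS (Fin.ofNat 12 i)) := fun i =>
    ZMod.natCast_zmod_val _
  have hv9 : ∀ i, v i < 9 := fun i => ZMod.val_lt _
  have hsum := code_eq_info h243_9 isInfo_genS hx
  have h4 : ∀ i : Fin 12, 4 ≤ (i : ℕ) → x (ix setS i) = 0 := by
    intro i hi
    refine h0 _ ?_
    revert i; decide
  have hxk : x = ofL (ZMod 9) (combL [v 0, v 1, v 2, v 3] genS) := by
    rw [ofL_combL (ZMod 9) 12 _ genS (isInfo_length isInfo_genS)]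
    conv_lhs => rw [hsum]
    refine Finset.sum_congr rfl fun i _ => ?_
    congr 1
    by_cases hi : 4 ≤ (i : ℕ)
    · rw [h4 i hi, List.getD_eq_default _ _ (by simpa using hi), Nat.cast_zero]
    · obtain ⟨i, hi'⟩ := i
      simp only [not_le] at hi
      interval_cases i
      exacts [(hvx 0).symm, (hvx 1).symm, (hvx 2).symm, (hvx 3).symm]
  have h23 : x (ix setS 2) * 3 + x (ix setS 3) * 6 = 0 := by
    have e0 : x 23 = 0 := h0 23 (by decide)
    have e1 := congrFun hsum 23
    rw [e0, Finset.sum_apply] at e1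
    rw [e1]
    rw [← Finset.sum_subset (Finset.subset_univ ({0, 1, 2, 3} : Finset (Fin 12)))
      (fun i _ hi => by
        have : 4 ≤ (i : ℕ) := by revert i; decide
        rw [h4 i this, zero_smul]; rfl)]
    have r0 : row (ZMod 9) genS 0 23 = 0 := by decide
    have r1 : row (ZMod 9) genS 1 23 = 0 := by decide
    have r2 : row (ZMod 9) genS 2 23 = 3 := by decide
    have r3 : row (ZMod 9) genS 3 23 = 6 := by decide
    rw [Finset.sum_insert (by decide), Finset.sum_insert (by decide),
      Finset.sum_insert (by decide), Finset.sum_singleton]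
    simp only [Pi.smul_apply, smul_eq_mul]
    have z0 : ((0 : Fin 12) : ℕ) = 0 := rfl
    have z1 : ((1 : Fin 12) : ℕ) = 1 := rfl
    have z2 : ((2 : Fin 12) : ℕ) = 2 := rfl
    have z3 : ((3 : Fin 12) : ℕ) = 3 := rfl
    rw [z0, z1, z2, z3, r0, r1, r2, r3]; ring
  have h23' : v 2 % 3 = v 3 % 3 := by
    have : ∀ a b : ZMod 9, a * 3 + b * 6 = 0 → a.val % 3 = b.val % 3 := by decide
    exact this _ _ h23
  have hclass := classOK_ents
  simp only [classOK, List.all_eq_true, List.mem_range, Bool.or_eq_true, beq_iff_eq,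
    List.any_eq_true] at hclass
  have hS3 : mp S3 x = ofL (ZMod 3) (combL [v 0, v 1, v 2, v 3] genS) := by
    rw [hxk, mp_ofL]
  rcases hclass (v 0 % 3) (Nat.mod_lt _ (by norm_num)) (v 1 % 3) (Nat.mod_lt _ (by norm_num))
    (v 2 % 3) (Nat.mod_lt _ (by norm_num)) with hz | ⟨e, he, s, hs, hes⟩
  · exfalso
    refine hne ?_
    rw [hS3, ofL_combL_congr (k' := []) genS, combL, ofL_nil]
    intro j
    have h3 : ∀ n : ℕ, n % 3 = 0 → ((n : ℕ) : ZMod 3) = ((0 : ℕ) : ZMod 3) := fun n hn =>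
      cast_eq_of_mod (N := 3) (by decide) (by simpa using hn)
    match j with
    | 0 => exact h3 (v 0) (by omega)
    | 1 => exact h3 (v 1) (by omega)
    | 2 => exact h3 (v 2) (by omega)
    | 3 => exact h3 (v 3) (by omega)
    | j + 4 => rfl
  · refine ⟨e, he, ?_, ?_⟩
    · have hs' : IsUnit ((s : ℕ) : ZMod 3) := by
        simp only [List.mem_cons, List.not_mem_nil, or_false] at hs
        rcases hs with rfl | rfl <;> decide
      have hw : mp S3 x = ((s : ℕ) : ZMod 3) • ofL (ZMod 3) e.word := by
        rw [hS3, Ent.word, ofL_combL _ _ e.v genS rfl, Finset.smul_sum,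
          ofL_combL _ _ _ genS rfl]
        refine Finset.sum_congr rfl fun i _ => ?_
        rw [smul_smul]
        congr 1
        have h1 : (([v 0, v 1, v 2, v 3].getD i 0 : ℕ) : ZMod 3) =
            (([v 0 % 3, v 1 % 3, v 2 % 3, v 2 % 3].getD i 0 : ℕ) : ZMod 3) := by
          rw [h23', show [v 0 % 3, v 1 % 3, v 3 % 3, v 3 % 3] = [v 0, v 1, v 3, v 3].map (· % 3)
            from rfl]
          rw [getD_map_mod, cast_mod (by decide)]
          refine cast_eq_of_mod (N := 3) (by decide) ?_
          generalize (i : ℕ) = i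
          match i with
          | 0 | 1 | 3 => rfl
          | 2 => exact h23'
          | j + 4 => rfl
        rw [h1, hes, modL, getD_map_mod, cast_mod (by decide), getD_addS]
        simp
      intro j
      rw [hw, Pi.smul_apply, smul_eq_mul, hs'.mul_right_eq_zero]
    · refine ⟨_, List.mem_map_of_mem (a := [v 0, v 1, v 2, v 3]) ?_, ?_⟩
      · refine List.mem_flatMap.mpr ⟨s, hs, List.mem_map.mpr
          ⟨[v 0 / 3 * 3, v 1 / 3 * 3, v 2 / 3 * 3, v 3 / 3 * 3], ?_, ?_⟩⟩
        · have h3 : ∀ i, v i / 3 * 3 ∈ [0, 3, 6] := by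
            intro i
            have := hv9 i
            have h : v i / 3 < 3 := by omega
            interval_cases v i / 3 <;> simp
          simp only [lift3, List.mem_flatMap, List.mem_map]
          exact ⟨_, h3 0, _, h3 1, _, h3 2, _, h3 3, rfl⟩
        · rw [← hes]
          simp only [addS, h23', List.cons.injEq, and_true]
          omega
      · rw [ofL_modL (by decide)]; exact hxk

/-- Properties of a class of weight twelve. -/
def ent12OK (e : Ent) : Bool :=
  isInfo e.I e.M && Nat.beq (e.I.getD 0 0) 0 && Nat.blt e.t0 24 &&
    ((List.range 12).all fun k => Nat.beq k 0 || !Nat.beq (e.word.getD (e.I.getD k 0) 0 % 3) 0) &&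
    !Nat.beq (e.word.getD e.t0 0 % 3) 0 &&
    !Nat.beq ((e.M.getD 0 []).getD e.t0 0 % 27) 0 &&
    ((List.range 24).all fun j => !Nat.beq (e.word.getD j 0 % 3) 0 ||
      !Nat.beq ((e.M.getD 0 []).getD j 0 % 9) 0) &&
    ((List.range 24).all fun j => Nat.beq j e.t0 || Nat.beq (e.word.getD j 0 % 3) 0 ||
      Nat.beq ((e.M.getD 0 []).getD j 0 % 27) 0)

lemma ents12_OK : ents12.all ent12OK = true := by decide +kernel

lemma ent12OK_spec {e : Ent} (h : ent12OK e = true) :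
    isInfo e.I e.M = true ∧ ix e.I 0 = 0 ∧ ∃ t : Fin 24,
      (∀ k : Fin 12, k ≠ 0 → ofL (ZMod 3) e.word (ix e.I k) ≠ 0) ∧
      ofL (ZMod 3) e.word t ≠ 0 ∧ row (ZMod 27) e.M 0 t ≠ 0 ∧
      (∀ j, ofL (ZMod 3) e.word j ≠ 0 ∨ row (ZMod 9) e.M 0 j ≠ 0) ∧
      ∀ j, j = t ∨ ofL (ZMod 3) e.word j = 0 ∨ row (ZMod 27) e.M 0 j = 0 := by
  simp only [ent12OK, Bool.and_eq_true, List.all_eq_true, List.mem_range, Bool.or_eq_true,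
    Bool.not_eq_true', Nat.beq_eq, Nat.blt_eq, ← Bool.not_eq_true, or_assoc] at h
  obtain ⟨⟨⟨⟨⟨⟨⟨h1, h2⟩, h3⟩, h4⟩, h5⟩, h6⟩, h7⟩, h8⟩ := h
  refine ⟨h1, ?_, ⟨e.t0, h3⟩, ?_, ?_, ?_, ?_, ?_⟩
  · exact Fin.ext ((isInfo_ix h1 0).trans h2)
  · intro k hk
    rw [Ne, ofL_eq_zero_iff, isInfo_ix h1]
    exact (h4 k k.2).resolve_left fun h => hk (Fin.ext h)
  · rwa [Ne, ofL_eq_zero_iff]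
  · rwa [Ne, row, ofL_eq_zero_iff]
  · intro j
    rw [row, Ne, Ne, ofL_eq_zero_iff, ofL_eq_zero_iff]
    exact h7 j j.2
  · intro j
    rw [row, ofL_eq_zero_iff, ofL_eq_zero_iff, Fin.ext_iff]
    exact h8 j j.2

lemma isUnit_iff_S3 (a : ZMod 9) : IsUnit a ↔ S3 a ≠ 0 := by
  revert a
  have : ∀ a : ZMod 9, S3 a ≠ 0 ↔ ∃ b, a * b = 1 := by decide
  intro a
  rw [this, isUnit_iff_exists_inv]

lemma R3_of_R27 {a : ZMod 243} (h : Rd 27 (by decide) a = 0) : Rd 3 (by decide) a = 0 := by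
  obtain ⟨d, rfl⟩ := exists_of_R27 h
  rw [map_mul, show Rd 3 (by decide) (27 : ZMod 243) = 0 from R_natCast 3 (by decide) 27, zero_mul]

lemma R9_of_R27 {a : ZMod 243} (h : Rd 27 (by decide) a = 0) : Rd 9 (by decide) a = 0 := by
  obtain ⟨d, rfl⟩ := exists_of_R27 h
  rw [map_mul, show Rd 9 (by decide) (27 : ZMod 243) = 0 from R_natCast 9 (by decide) 27, zero_mul]

lemma isUnit_of_R3 {a : ZMod 243} (h : Rd 3 (by decide) a ≠ 0) : IsUnit a := by
  obtain ⟨x, rfl⟩ := ZMod.natCast_zmod_surjective a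
  rw [R_natCast, Ne, ZMod.natCast_eq_zero_iff] at h
  rw [ZMod.isUnit_iff_coprime, show 243 = 3 ^ 5 by norm_num]
  exact (((Nat.Prime.coprime_iff_not_dvd Nat.prime_three).mpr h).pow_left 5).symm

/-- No word over `wordZ` is disjoint from a word in a class of weight twelve: it would be,
modulo 27, a multiple of the first row of `M`, which does not vanish at `t0`. -/
lemma not_Dj_ents12 {c : Fin 24 → ZMod 243} {b : Fin 24 → ZMod 9} {e : Ent} (he : e ∈ ents12)
    (hc : c ∈ code (ZMod 243)) (hcZ : mp (Rd 3) c = ofL (ZMod 3) wordZ)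
    (hbe : ∀ j, mp S3 b j = 0 ↔ ofL (ZMod 3) e.word j = 0) (hD : Dj c b) : False := by
  obtain ⟨hI, hI0, t, h1, h2, h3, -, -⟩ := ent12OK_spec (List.all_eq_true.mp ents12_OK e he)
  have hb : ∀ j, ofL (ZMod 3) e.word j ≠ 0 → mp (Rd 27) c j = 0 := by
    intro j hj
    refine (hD j).resolve_right fun h => hj ((hbe j).mp ?_)
    rw [mp, h, map_zero]
  have hu : IsUnit (mp (Rd 27) c 0) := by
    refine (isUnit_of_R3 ?_).map _
    have := congrFun hcZ 0
    rw [mp] at this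
    rw [this]; decide
  have hs := congrFun (code_eq_info h243_27 hI (mp_code (Rd 27) hc)) t
  rw [hb t h2, Finset.sum_apply, Finset.sum_eq_single 0 ?_ (by simp)] at hs
  · rw [hI0, Pi.smul_apply, smul_eq_mul, eq_comm, hu.mul_right_eq_zero] at hs
    exact h3 hs
  · intro k _ hk
    rw [hb _ (h1 k hk), zero_smul]; rfl

/-- Properties of a class of weight nine. -/
def ent9OK (e : Ent) : Bool :=
  isInfo e.I e.M && Nat.beq (e.I.getD 0 0) 0 && Nat.blt e.t0 24 &&
    ((List.range 12).all fun k => Nat.beq k 0 ||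
      Nat.beq (wordZ.getD (e.I.getD k 0) 0) 0) &&
    ((List.range 12).all fun k => Nat.blt k 4 ||
      !Nat.beq (e.word.getD (e.I.getD k 0) 0 % 3) 0) &&
    !Nat.beq (e.word.getD e.t0 0 % 3) 0 &&
    Nat.beq (wtP 24 (pk 24 (modL 3 e.word))) 9 &&
    eqModL 3 (e.M.getD 0 []) wordZ

lemma ents9_OK : ents9.all ent9OK = true := by decide +kernel

lemma ent9OK_spec {e : Ent} (h : ent9OK e = true) :
    isInfo e.I e.M = true ∧ ix e.I 0 = 0 ∧ ∃ t : Fin 24, (t : ℕ) = e.t0 ∧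
      (∀ k : Fin 12, k ≠ 0 → ofL (ZMod 3) wordZ (ix e.I k) = 0) ∧
      (∀ k : Fin 12, 4 ≤ (k : ℕ) → ofL (ZMod 3) e.word (ix e.I k) ≠ 0) ∧
      ofL (ZMod 3) e.word t ≠ 0 ∧ wt (ofL (ZMod 3) e.word) = 9 ∧
      row (ZMod 3) e.M 0 = ofL (ZMod 3) wordZ := by
  simp only [ent9OK, Bool.and_eq_true, List.all_eq_true, List.mem_range, Bool.or_eq_true,
    Bool.not_eq_true', Nat.beq_eq, Nat.blt_eq, ← Bool.not_eq_true] at h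
  obtain ⟨⟨⟨⟨⟨⟨⟨h1, h2⟩, h3⟩, h4⟩, h5⟩, h6⟩, h7⟩, h8⟩ := h
  refine ⟨h1, ?_, ⟨e.t0, h3⟩, rfl, ?_, ?_, ?_, ?_, ?_⟩
  · exact Fin.ext ((isInfo_ix h1 0).trans h2)
  · intro k hk
    rw [ofL_eq_zero_iff, isInfo_ix h1,
      (h4 k k.2).resolve_left fun h => hk (Fin.ext h), Nat.zero_mod]
  · intro k hk
    rw [Ne, ofL_eq_zero_iff, isInfo_ix h1]
    exact (h5 k k.2).resolve_left (by omega)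
  · rwa [Ne, ofL_eq_zero_iff]
  · rw [wtP_pk] at h7
    · rw [wt, ← h7]
      refine Finset.sum_congr rfl fun j _ => ?_
      simp only [ofL_eq_zero_iff, modL, getD_map_mod, Nat.mod_mod]
    · intro j
      rw [modL, getD_map_mod]; omega
  · exact ofL_eq_of_eqModL (N := 3) (by decide) h8

lemma Nine_wordZ : Nine (ofL (ZMod 3) wordZ) := by
  intro c hc b hb hbZ hc0 hD
  have hb0 : ∀ j, ofL (ZMod 3) wordZ j ≠ 0 → Rd 27 (by decide) (c j) = 0 := by
    intro j hj
    refine (hD j).resolve_right fun h => hj ?_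
    rw [← hbZ, mp, h, map_zero]
  have hS : mp S3 (mp (Rd 9) c) = mp (Rd 3) c := by
    funext j; exact S3_R9 _
  obtain ⟨e, he, hce, -⟩ := exists_class (mp_code (Rd 9) hc) (fun j hj => R9_of_R27 (hb0 j hj))
    (by rwa [hS])
  rw [hS] at hce
  rcases List.mem_append.mp he with he | he
  · obtain ⟨-, -, t, -, -, -, -, h9, -⟩ := ent9OK_spec (List.all_eq_true.mp ents9_OK e he)
    rw [← h9, wt, wt]
    exact Finset.sum_congr rfl fun j _ => by simp only [hce]
  · exfalso
    obtain ⟨hI, hI0, t, h1, h2, h3, h4, h5⟩ := ent12OK_spec (List.all_eq_true.mp ents12_OK e he)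
    have hT : ∀ j, ofL (ZMod 3) e.word j ≠ 0 → b j = 0 := by
      intro j hj
      refine (hD j).resolve_left fun h => hj ((hce j).mp (R3_of_R27 h))
    have hu : IsUnit (b 0) := by
      rw [isUnit_iff_S3]
      have := congrFun hbZ 0
      rw [mp] at this
      rw [this]; decide
    have hbM : ∀ j, b j = b 0 * row (ZMod 9) e.M 0 j := by
      intro j
      have hs := congrFun (code_eq_info h243_9 hI hb) j
      rw [Finset.sum_apply, Finset.sum_eq_single 0 ?_ (by simp)] at hs
      · rw [hs, hI0]; rfl
      · intro k _ hk
        rw [hT _ (h1 k hk), zero_smul]; rfl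
    have hc27 : ∀ j, ofL (ZMod 3) e.word j = 0 → mp (Rd 27) c j = 0 := by
      intro j hj
      refine (hD j).resolve_right fun h => ?_
      rw [hbM, hu.mul_right_eq_zero] at h
      exact (h4 j).elim (fun h' => h' hj) (fun h' => h' h)
    have ho := code_orth h243_27 (mp_code (Rd 27) hc) (isInfo_mem h243_27 hI 0)
    rw [Finset.sum_eq_single t ?_ (by simp)] at ho
    · have hut : IsUnit (mp (Rd 27) c t) :=
        (isUnit_of_R3 fun h => h2 ((hce t).mp h)).map _
      rw [hut.mul_right_eq_zero] at ho
      exact h3 ho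
    · intro j _ hj
      rcases (h5 j).resolve_left hj with h | h
      · rw [hc27 j h, zero_mul]
      · exact mul_eq_zero_of_right _ h

/-- The words without zero entries modulo 3, lifted to code words modulo 9. -/
def fullWords : List (List ℕ) :=
  [[1,1,1,1,1,1,1,1,1,1,1,1,1,1,1,1,1,1,1,1,1,1,1,7],
   [1,1,1,1,1,2,2,2,2,1,2,1,2,8,7,7,2,2,7,1,5,7,8,5],
   [1,1,1,1,2,1,2,1,1,2,2,1,1,2,2,1,2,1,2,2,2,2,5,1],
   [1,1,1,1,2,2,2,2,1,2,1,2,8,7,7,2,2,7,1,5,7,8,1,5],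
   [1,1,1,2,1,2,1,1,2,2,1,1,2,2,1,2,1,2,2,2,2,5,1,1],
   [1,1,1,2,2,2,2,1,2,1,2,2,1,1,8,8,7,4,5,1,8,1,7,8],
   [1,1,2,1,2,1,1,1,1,1,2,2,5,2,4,5,7,5,8,1,7,5,2,2],
   [1,1,2,1,2,1,1,2,2,1,1,2,2,1,2,1,2,2,2,2,5,1,1,1],
   [1,1,2,2,1,1,2,1,2,1,1,1,1,7,2,2,2,2,1,2,1,2,2,2],
   [1,1,2,2,1,1,2,2,1,2,1,2,2,2,2,5,1,1,1,1,2,1,2,1],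
   [1,1,2,2,1,2,1,2,2,2,2,2,7,7,4,4,2,7,2,7,1,2,5,7],
   [1,1,2,2,2,2,1,2,1,2,2,1,1,8,8,7,4,5,1,8,1,7,1,8],
   [1,2,1,1,1,1,1,2,2,2,2,1,8,4,5,8,4,1,8,8,4,7,5,8],
   [1,2,1,1,2,2,1,1,2,2,1,2,1,2,2,2,2,5,1,1,1,1,2,1],
   [1,2,1,2,1,1,1,1,1,2,2,2,8,1,8,1,5,5,1,4,5,2,4,8],
   [1,2,1,2,1,1,2,2,1,1,2,2,1,2,1,2,2,2,2,5,1,1,1,1],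
   [1,2,1,2,2,1,1,2,2,1,1,2,1,2,1,1,1,1,7,2,2,2,2,2],
   [1,2,1,2,2,2,2,2,1,1,1,1,8,1,5,1,7,8,8,4,1,8,5,1],
   [1,2,2,1,1,2,1,2,1,1,1,1,7,2,2,2,2,1,2,1,2,2,1,2],
   [1,2,2,1,1,2,2,1,1,2,1,2,1,1,1,1,7,2,2,2,2,1,2,2],
   [1,2,2,1,1,2,2,1,2,1,2,2,2,2,5,1,1,1,1,2,1,2,1,1],
   [1,2,2,1,2,1,2,2,2,2,2,1,1,7,1,8,7,5,7,4,2,5,7,1],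
   [1,2,2,2,2,1,2,1,2,2,1,1,8,8,7,4,5,1,8,1,7,1,1,8],
   [1,2,2,2,2,2,1,1,1,1,2,1,5,4,7,2,2,1,4,5,5,7,5,1],
   [2,1,1,1,1,1,2,2,2,2,1,2,7,8,5,1,1,2,8,7,7,5,7,2],
   [2,1,1,1,1,2,1,2,1,1,2,2,4,4,5,8,7,2,4,2,5,2,2,4],
   [2,1,1,2,1,2,1,1,1,1,1,2,2,5,2,4,5,7,5,8,1,7,5,2],
   [2,1,1,2,2,1,1,2,1,2,1,1,1,1,7,2,2,2,2,1,2,1,2,2],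
   [2,1,1,2,2,1,1,2,2,1,2,1,2,2,2,2,5,1,1,1,1,2,1,1],
   [2,1,1,2,2,1,2,1,2,2,2,2,5,1,1,1,1,2,1,2,1,1,2,1],
   [2,1,2,1,1,1,1,1,2,2,2,2,4,2,7,2,5,4,4,8,2,4,7,2],
   [2,1,2,1,1,2,2,1,1,2,2,1,2,1,2,2,2,2,5,1,1,1,1,1],
   [2,1,2,1,2,2,1,1,2,2,1,1,2,1,2,1,1,1,1,7,2,2,2,2],
   [2,1,2,1,2,2,2,2,2,1,1,1,4,2,4,2,7,7,2,8,7,1,8,4],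
   [2,1,2,2,1,1,2,2,1,1,2,1,2,1,1,1,1,7,2,2,2,2,1,2],
   [2,1,2,2,2,2,2,1,1,1,1,2,4,8,7,4,8,2,4,4,8,5,7,4],
   [2,2,1,1,1,1,2,1,2,1,1,2,2,4,4,5,8,7,2,4,2,5,2,4],
   [2,2,1,1,2,1,2,1,1,1,1,1,5,5,8,8,1,5,1,5,2,1,7,5],
   [2,2,1,1,2,2,1,1,2,1,2,1,1,1,1,7,2,2,2,2,1,2,1,2],
   [2,2,1,1,2,2,1,2,1,2,2,2,2,5,1,1,1,1,2,1,2,1,1,1],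
   [2,2,1,2,1,2,2,1,1,2,2,1,1,2,1,2,1,1,1,1,7,2,2,2],
   [2,2,1,2,1,2,2,2,2,2,1,1,7,1,8,7,5,7,4,2,5,7,1,1],
   [2,2,2,1,1,1,1,2,1,2,1,1,2,2,4,4,5,8,7,2,4,2,5,4],
   [2,2,2,1,2,1,2,2,1,1,2,2,1,1,2,1,2,1,1,1,1,7,2,2],
   [2,2,2,2,1,1,1,1,2,1,2,1,4,5,5,1,1,5,2,7,5,4,2,7],
   [2,2,2,2,1,2,1,2,2,1,1,2,2,1,1,2,1,2,1,1,1,1,7,2],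
   [2,2,2,2,2,1,1,1,1,2,1,2,1,4,5,5,1,1,5,2,7,5,4,7],
   [2,2,2,2,2,2,2,2,2,2,2,2,2,2,2,2,2,2,2,2,2,2,2,5]]

/-! ### Two disjoint words of weight twelve -/

/-- The test `t` holds for all combinations of the packed rows `l` with coefficients 1 and 2,
shifted by `acc`; `κ` collects the coefficients in reverse order. -/
def fullDFS (t : List ℕ → ℕ → Bool) (l : List ℕ) : List ℕ → ℕ → Bool :=
  List.rec (fun κ acc => t κ acc)
    (fun m _ ih κ acc => ih (1 :: κ) (1 * m + acc) && ih (2 :: κ) (2 * m + acc)) l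

/-- The packed word `x` has a zero entry, or its coefficients are those of a listed word. -/
def fullLeaf (κ : List ℕ) (x : ℕ) : Bool :=
  Nat.blt (wtP 12 x) 12 || fullWords.any fun p => modL 3 (p.take 12) == κ.reverse

/-- The search over all combinations of the rows of `M` succeeds. -/
def fullOK (M : List (List ℕ)) : Bool :=
  fullDFS fullLeaf ((red3 M).map fun l => pk 12 (l.drop 12)) [] 0

lemma fullOK_genL : fullOK genL = true := by decide +kernel

lemma fullDFS_spec (t : List ℕ → ℕ → Bool) (rows : List (List ℕ)) (κ₀ acc : List ℕ)
    (h : fullDFS t (rows.map fun l => pk 12 (l.drop 12)) κ₀ (pk 12 (acc.drop 12)) = true)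
    (κ : List ℕ) (hl : κ.length = rows.length) (hκ : ∀ x ∈ κ, x = 1 ∨ x = 2) :
    ∃ l : List ℕ, (∀ j, l.getD j 0 = (combL κ rows).getD j 0 + acc.getD j 0) ∧
      t (κ.reverse ++ κ₀) (pk 12 (l.drop 12)) = true := by
  induction rows generalizing κ₀ acc κ with
  | nil =>
    obtain rfl := List.length_eq_zero_iff.mp hl
    exact ⟨acc, by simp [combL], h⟩
  | cons m rows ih =>
    cases κ with
    | nil => simp at hl
    | cons k κ =>
      have h' : (fullDFS t (rows.map fun l => pk 12 (l.drop 12)) (1 :: κ₀)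
          (1 * pk 12 (m.drop 12) + pk 12 (acc.drop 12)) &&
          fullDFS t (rows.map fun l => pk 12 (l.drop 12)) (2 :: κ₀)
          (2 * pk 12 (m.drop 12) + pk 12 (acc.drop 12))) = true := h
      rw [Bool.and_eq_true, ← pk_addS, ← pk_addS, ← drop_addS, ← drop_addS] at h'
      have hk : fullDFS t (rows.map fun l => pk 12 (l.drop 12)) (k :: κ₀)
          (pk 12 ((addS k m acc).drop 12)) = true := by
        rcases hκ k (by simp) with rfl | rfl
        exacts [h'.1, h'.2]
      obtain ⟨l, hl1, hl2⟩ := ih (k :: κ₀) (addS k m acc) hk κ (by simpa using hl)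
        (fun x hx => hκ x (by simp [hx]))
      refine ⟨l, fun j => ?_, by simpa using hl2⟩
      rw [hl1, combL, getD_addS, getD_addS]; ring

/-- The listed words are code words modulo 9. -/
def fullMem (M : List (List ℕ)) : Bool :=
  fullWords.all fun p => eqModL 9 p (combL (p.take 12) M)

lemma fullMem_genL : fullMem genL = true := by decide +kernel

lemma fullWords_eq {p : List ℕ} (hp : p ∈ fullWords) :
    ofL (ZMod 9) p = ofL (ZMod 9) (combL (p.take 12) genL) :=
  ofL_eq_of_eqModL (N := 9) (by decide) (List.all_eq_true.mp fullMem_genL p hp)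

lemma fullWords_mem {p : List ℕ} (hp : p ∈ fullWords) : ofL (ZMod 9) p ∈ code (ZMod 9) := by
  rw [fullWords_eq hp, ofL_combL _ 12 _ _ (isInfo_length isInfo_genL)]
  exact Submodule.sum_mem _ fun i _ => Submodule.smul_mem _ _ (isInfo_mem h243_9 isInfo_genL i)

lemma nz_le (κ : List ℕ) : nz κ ≤ κ.length := by
  induction κ with
  | nil => simp [nz]
  | cons x κ ih =>
    simp only [nz, List.length_cons, List.map_cons, List.sum_cons] at ih ⊢
    split_ifs <;> omega

lemma exists_fullWord {w : Fin 24 → ZMod 3} (hw : w ∈ code (ZMod 3)) (h0 : ∀ j, w j ≠ 0) :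
    ∃ p ∈ fullWords, w = ofL (ZMod 3) p := by
  set κ : List ℕ := List.ofFn fun i : Fin 12 => (w (Fin.castAdd 12 i)).val with hκ
  have hκi : ∀ i : Fin 12, κ.getD i 0 = (w (Fin.castAdd 12 i)).val := by
    intro i
    rw [List.getD_eq_getElem _ _ (by simp [hκ])]
    exact List.getElem_ofFn _
  have h12 : ∀ x ∈ κ, x = 1 ∨ x = 2 := by
    intro x hx
    obtain ⟨i, rfl⟩ := (List.mem_ofFn' _ _).mp hx
    have : ∀ a : ZMod 3, a ≠ 0 → a.val = 1 ∨ a.val = 2 := by decide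
    exact this _ (h0 _)
  have hw1 : ∀ κ' : List ℕ, (∀ i : Fin 12, ((κ'.getD i 0 : ℕ) : ZMod 3) = w (Fin.castAdd 12 i)) →
      w = ofL (ZMod 3) (combL κ' genL) := by
    intro κ' h
    rw [ofL_combL _ 12 _ _ (isInfo_length isInfo_genL)]
    conv_lhs => rw [code_eq_genL h243_3 hw]
    exact Finset.sum_congr rfl fun i _ => by rw [h]
  obtain ⟨l, hl1, hl2⟩ := fullDFS_spec fullLeaf (red3 genL) [] [] fullOK_genL κ
    (by simp [hκ, red3, isInfo_length isInfo_genL]) h12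
  have hlw : ofL (ZMod 3) l = w := by
    have : ofL (ZMod 3) l = ofL (ZMod 3) (combL κ (red3 genL)) := by
      funext j
      rw [ofL, hl1]; simp [ofL]
    rw [this, ofL_combL _ 12 _ _ (by simp [red3, isInfo_length isInfo_genL])]
    conv_rhs => rw [code_eq_genL h243_3 hw]
    refine Finset.sum_congr rfl fun i _ => ?_
    rw [hκi, row_red3, ZMod.natCast_zmod_val]
  have hl64 : ∀ j, l.getD j 0 < 64 := by
    intro j
    have h1 := combL_le κ (red3 genL) (fun x hx => by rcases h12 x hx with rfl | rfl <;> omega)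
      (fun m hm j => by
        obtain ⟨m', -, rfl⟩ := List.mem_map.mp hm
        rw [getD_map_mod]; omega) j
    have h2 := nz_le κ
    have h3 : κ.length = 12 := by simp [hκ]
    rw [hl1]
    simp only [List.getD_nil]
    omega
  rw [fullLeaf, Bool.or_eq_true, Nat.blt_eq, wtP_half hl64 12 (Fin.natAdd 12) (fun j => rfl), hlw,
    List.any_eq_true] at hl2
  rcases hl2 with hl2 | ⟨p, hp, hpκ⟩
  · simp [h0] at hl2
  · refine ⟨p, hp, ?_⟩
    rw [beq_iff_eq, List.append_nil, List.reverse_reverse] at hpκ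
    have h3 := congrArg (mp S3) (fullWords_eq hp)
    rw [mp_ofL, mp_ofL] at h3
    rw [h3]
    refine hw1 _ fun i => ?_
    have h4 : ((p.take 12).getD i 0) % 3 = κ.getD i 0 := by
      rw [← hpκ, modL, getD_map_mod]
    rw [← cast_mod (N := 3) (by decide), h4, hκi, ZMod.natCast_zmod_val]

/-- If `p` and `q` are independent modulo 3, the reduction of `p - q` is not orthogonal to
`p + q` modulo 9. -/
def pairOK (p q : List ℕ) : Bool :=
  (modL 3 (addS 2 q p)).all (Nat.beq 0) || (modL 3 (addS 1 q p)).all (Nat.beq 0) ||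
    !Nat.beq (dotL 24 (modL 3 (addS 2 q p)) (addS 1 q p) % 9) 0

/-- The previous condition for all pairs from a list. -/
def pairsOK (L : List (List ℕ)) : Bool := L.all fun p => L.all (pairOK p)

lemma pairsOK_fullWords : pairsOK fullWords = true := by decide +kernel

/-- Two disjoint words of weight twelve do not exist: their sum and difference have no zero
entries modulo 3, and `pairOK` contradicts the orthogonality of the code modulo 9. -/
lemma not_Dj_twelve {c : Fin 24 → ZMod 243} {b : Fin 24 → ZMod 9} (hc : c ∈ code (ZMod 243))
    (hb : b ∈ code (ZMod 9)) (hcw : wt (mp (Rd 3) c) = 12) (hbw : wt (mp S3 b) = 12)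
    (hD : Dj c b) : False := by
  set wc := mp (Rd 3) c with hwc
  set wb := mp S3 b with hwb
  have hwcm : wc ∈ code (ZMod 3) := mp_code _ hc
  have hwbm : wb ∈ code (ZMod 3) := mp_code _ hb
  have hdis : ∀ j, wc j = 0 ∨ wb j = 0 := fun j => by
    rcases hD j with h | h
    · exact Or.inl (R3_of_R27 h)
    · exact Or.inr (by rw [hwb, mp, h, map_zero])
  have hone : ∀ j, wc j = 0 → wb j ≠ 0 := by
    have hle : ∀ j ∈ Finset.univ, ((if wc j = 0 then 0 else 1) + (if wb j = 0 then 0 else 1)) ≤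
        (1 : ℕ) := by
      intro j _
      rcases hdis j with h | h <;> simp only [h, if_true] <;> split_ifs <;> omega
    have hs := (Finset.sum_eq_sum_iff_of_le hle).mp (by
      rw [Finset.sum_add_distrib]
      have h1 : (∑ j, if wc j = 0 then 0 else 1) = 12 := hcw
      have h2 : (∑ j, if wb j = 0 then 0 else 1) = 12 := hbw
      rw [h1, h2]; simp)
    intro j h1 h2
    have := hs j (Finset.mem_univ _)
    simp [h1, h2] at this
  have hone' : ∀ j, wb j ≠ 0 → wc j = 0 := fun j h => (hdis j).resolve_right h
  obtain ⟨p, hp, hpw⟩ := exists_fullWord (Submodule.add_mem _ hwcm hwbm) (fun j => by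
    rw [Pi.add_apply]
    by_cases h : wc j = 0
    · rw [h, zero_add]; exact hone j h
    · rwa [(hdis j).resolve_left h, add_zero])
  obtain ⟨q, hq, hqw⟩ := exists_fullWord (Submodule.sub_mem _ hwcm hwbm) (fun j => by
    rw [Pi.sub_apply]
    by_cases h : wc j = 0
    · rw [h, zero_sub]; exact neg_ne_zero.mpr (hone j h)
    · rwa [(hdis j).resolve_left h, sub_zero])
  have h3 : (3 : ZMod 3) = 0 := by decide
  have e1 : ofL (ZMod 3) (modL 3 (addS 2 q p)) = -wb := by
    rw [ofL_modL (by decide), ofL_addS, ← hpw, ← hqw]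
    funext j
    simp only [Pi.add_apply, Pi.smul_apply, Pi.sub_apply, Pi.neg_apply, smul_eq_mul]
    push_cast
    linear_combination (wc j) * h3
  have e2 : ofL (ZMod 3) (addS 1 q p) = -wc := by
    rw [ofL_addS, ← hpw, ← hqw]
    funext j
    simp only [Pi.add_apply, Pi.smul_apply, Pi.sub_apply, Pi.neg_apply, smul_eq_mul]
    push_cast
    linear_combination (wc j) * h3
  have hall : ∀ l : List ℕ, (modL 3 l).all (Nat.beq 0) = true → ofL (ZMod 3) l = 0 := by
    intro l hl
    funext j
    rw [Pi.zero_apply, ofL_eq_zero_iff, ← getD_map_mod]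
    by_cases hj : (j : ℕ) < (l.map (· % 3)).length
    · rw [List.getD_eq_getElem _ _ hj]
      have := List.all_eq_true.mp hl _ (List.getElem_mem hj)
      exact (Nat.beq_eq ▸ this : _ = _).symm
    · rw [List.getD_eq_default _ _ (by omega)]
  have hzero : ∀ w : Fin 24 → ZMod 3, wt w = 12 → w ≠ 0 := by
    rintro w hw rfl
    simp [wt] at hw
  have hpair := List.all_eq_true.mp (List.all_eq_true.mp pairsOK_fullWords p hp) q hq
  simp only [pairOK, Bool.or_eq_true, Bool.not_eq_true', ← Bool.not_eq_true, Nat.beq_eq] at hpair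
  rcases hpair with (h | h) | h
  · have := hall _ h
    rw [← ofL_modL (n := 3) (by decide), e1, neg_eq_zero] at this
    exact hzero _ hbw this
  · have := hall _ h
    rw [e2, neg_eq_zero] at this
    exact hzero _ hcw this
  · refine h ?_
    have hmem : ofL (ZMod 9) (addS 1 q p) ∈ code (ZMod 9) := by
      rw [ofL_addS]
      exact Submodule.add_mem _ (Submodule.smul_mem _ _ (fullWords_mem hq)) (fullWords_mem hp)
    have ho := code_orth h243_9 hb hmem
    rw [← Nat.dvd_iff_mod_eq_zero, ← ZMod.natCast_eq_zero_iff, dotL_eq]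
    have hS : ∀ x y : ZMod 9, S3 x = 0 → S3 y = 0 → x * y = 0 := by decide
    have hSo : ∀ l j, S3 (ofL (ZMod 9) l j) = ofL (ZMod 3) l j := fun l j =>
      congrFun (mp_ofL S3 l) j
    rw [← neg_eq_zero, ← ho, ← Finset.sum_neg_distrib]
    refine Finset.sum_congr rfl fun j _ => ?_
    rw [neg_eq_iff_add_eq_zero]
    change ofL (ZMod 9) (modL 3 (addS 2 q p)) j * ofL (ZMod 9) (addS 1 q p) j + _ = 0
    rw [← add_mul]
    by_cases h : wb j = 0
    · have hcj : wc j ≠ 0 := fun h' => hone j h' h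
      have hbj : b j = 0 := (hD j).resolve_left fun h' => hcj (R3_of_R27 h')
      have : (addS 2 q p).getD j 0 % 3 = 0 := by
        rw [← ofL_eq_zero_iff, ← ofL_modL (n := 3) (by decide), e1, Pi.neg_apply, h, neg_zero]
      rw [hbj, ofL, modL, getD_map_mod, this]; simp
    · refine hS _ _ ?_ ?_
      · rw [map_add, hSo, e1]; simp [hwb, mp]
      · rw [hSo, e2, Pi.neg_apply, hone' j h, neg_zero]

/-! ### Reduction to a single word of weight nine -/

lemma three_dvd_wt {w : Fin 24 → ZMod 3} (hw : w ∈ code (ZMod 3)) : wt w % 3 = 0 := by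
  have ho := code_orth h243_3 hw hw
  have hsq : ∀ a : ZMod 3, a * a = ((if a = 0 then 0 else 1 : ℕ) : ZMod 3) := by decide
  simp only [hsq] at ho
  rw [← Nat.cast_sum, ZMod.natCast_eq_zero_iff] at ho
  exact Nat.mod_eq_zero_of_dvd ho

lemma wt_add_le {w v : Fin 24 → ZMod 3} (h : ∀ j, w j = 0 ∨ v j = 0) : wt w + wt v ≤ 24 := by
  rw [wt, wt, ← Finset.sum_add_distrib]
  refine (Finset.sum_le_card_nsmul _ _ 1 fun j _ => ?_).trans (by simp)
  rcases h j with h | h <;> simp only [h, if_true] <;> split_ifs <;> omega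

lemma low_words :
    (Finset.univ.filter fun w : Fin 24 → ZMod 3 =>
      w ∈ code (ZMod 3) ∧ w ≠ 0 ∧ wt w ≤ 9).card = 4048 ∧
    ∀ w ∈ code (ZMod 3), w ≠ 0 → wt w ≤ 9 →
      (Fsum w = Fsum (ofL (ZMod 3) wordZ) ∧ Nine w) ∧ w ∈ code (ZMod 3) ∧ wt w = 9 :=
  orbit (fun w => (Fsum w = Fsum (ofL (ZMod 3) wordZ) ∧ Nine w) ∧ w ∈ code (ZMod 3) ∧ wt w = 9)
    ⟨⟨rfl, Nine_wordZ⟩, wordZ_mem, wordZ_wt⟩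
    (fun s w hw => ⟨⟨(s.Fsum_act w).trans hw.1.1, s.Nine_act hw.1.2⟩,
      (s.act_mem_iff h243_3).mpr hw.2.1, (s.wt_act w).trans hw.2.2⟩)
    (fun _ hw => hw.2)

/-- Words of weight at least twelve do not contribute. -/
lemma Fsum_eq_zero {w : Fin 24 → ZMod 3} (hw : 9 < wt w) : Fsum w = 0 := by
  refine Finset.sum_eq_zero fun c _ => Finset.sum_eq_zero fun b _ => ?_
  split_ifs with h
  · obtain ⟨hc, hcw, hb, hb0⟩ := h
    rw [term, if_neg]
    intro hD
    have hbm : mp S3 b ∈ code (ZMod 3) := mp_code _ hb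
    have hcm : mp (Rd 3) c ∈ code (ZMod 3) := mp_code _ hc
    have hc0 : mp (Rd 3) c ≠ 0 := by
      intro h
      rw [← hcw, h] at hw
      simp [wt] at hw
    by_cases h9 : wt (mp S3 b) ≤ 9
    · have := (low_words.2 _ hbm hb0 h9).1.2 c hc b hb rfl hc0 hD
      rw [hcw] at this
      omega
    · have h1 := three_dvd_wt hbm
      have h2 := three_dvd_wt hcm
      have h3 : wt (mp (Rd 3) c) + wt (mp S3 b) ≤ 24 := wt_add_le fun j => by
        rcases hD j with h | h
        · exact Or.inl (R3_of_R27 h)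
        · exact Or.inr (by rw [mp, h, map_zero])
      rw [← hcw] at hw
      exact not_Dj_twelve hc hb (by omega) (by omega) hD
  · rfl

lemma sum_Fsum : (∑ w : Fin 24 → ZMod 3, if w ∈ code (ZMod 3) ∧ w ≠ 0 then Fsum w else 0) =
    4048 * Fsum (ofL (ZMod 3) wordZ) := by
  have h : ∀ w : Fin 24 → ZMod 3, (if w ∈ code (ZMod 3) ∧ w ≠ 0 then Fsum w else 0) =
      if w ∈ code (ZMod 3) ∧ w ≠ 0 ∧ wt w ≤ 9 then Fsum (ofL (ZMod 3) wordZ) else 0 := by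
    intro w
    by_cases h9 : wt w ≤ 9
    · by_cases h1 : w ∈ code (ZMod 3) ∧ w ≠ 0
      · rw [if_pos h1, if_pos ⟨h1.1, h1.2, h9⟩, (low_words.2 w h1.1 h1.2 h9).1.1]
      · rw [if_neg h1, if_neg fun h => h1 ⟨h.1, h.2.1⟩]
    · have hF : Fsum w = 0 := Fsum_eq_zero (by omega)
      have hn : ¬(w ∈ code (ZMod 3) ∧ w ≠ 0 ∧ wt w ≤ 9) := fun h => h9 h.2.2
      rw [hF, ite_self, if_neg hn]
  rw [Finset.sum_congr rfl fun w _ => h w, ← Finset.sum_filter, Finset.sum_const, low_words.1,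
    nsmul_eq_mul]
  norm_num

/-! ### Enumeration of the pairs over `wordZ` -/

/-- Multiples of 3 modulo 27. -/
def r27 : List ℕ := [0, 3, 6, 9, 12, 15, 18, 21, 24]

/-- Coefficients modulo 27 of the candidates for words over `wordZ`. -/
def lift27 : List (List ℕ) :=
  r27.flatMap fun a => r27.flatMap fun b => r27.map fun c => [1, a, b, c]

/-- The candidates that vanish at `t0` modulo 27. -/
def cList (e : Ent) : List (List ℕ) :=
  (lift27.filter fun k => Nat.beq (dotL 4 k (e.M.map fun m => m.getD e.t0 0) % 27) 0).map
    fun k => modL 243 (combL k e.M)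

/-- The support of a list modulo `n` as a bit mask. -/
def maskL (n : ℕ) (l : List ℕ) : ℕ := l.foldr (fun x a => 2 * a + (1 - (1 - x % n))) 0

/-- `List.filter`, in a form that reduces well. -/
def filt {α : Type} (p : α → Bool) (l : List α) : List α :=
  List.rec [] (fun a _ ih => Bool.rec ih (a :: ih) (p a)) l

/-- The index of the variable attached to a pair of residues, see `ex`. -/
def exN (n m : ℕ) : ℕ :=
  bif Nat.beq (n % 27) 0 then
    (bif Nat.beq (m % 9) 0 then 5 else bif Nat.beq (m % 3) 0 then 4 else 3)
  else bif Nat.beq (n % 3) 0 then (bif Nat.beq (n % 9) 0 then 2 else 1) else 0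

/-- Exponents of the monomial attached to a pair of words. -/
def cnts (c l : List ℕ) : List ℕ :=
  (List.range 6).map fun i =>
    ((List.range 24).map fun j => 1 - (exN (c.getD j 0) (l.getD j 0) - i) -
      (i - exN (c.getD j 0) (l.getD j 0))).sum

/-- The type of a pair of disjoint words: `2 i + 1` for the `i`-th monomial with factor 1, `2 i + 2`
for the `i`-th monomial with factor `-1/2`, and 0 for factor zero. -/
def pairType (c l : List ℕ) : ℕ :=
  (fun q => bif Nat.beq (q % 3) 0 then
    (fun K => bif K == [9, 2, 1, 9, 2, 1] then 1 else bif K == [9, 2, 2, 9, 2, 0] then 3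
      else bif K == [9, 3, 0, 9, 3, 0] then 5 else 99) (cnts c l) +
      (bif Nat.beq q 0 then 0 else 1)
    else 0) (dotL 24 l (c.map (· / 27)) % 9)

/-- The types of the disjoint pairs in a class. -/
def typesE (e : Ent) : List ℕ :=
  (fun cs => (bList e).flatMap fun l =>
    (filt (fun p => Nat.beq (Nat.land p.1 (maskL 9 l)) 0) cs).map fun p => pairType p.2 l)
  ((cList e).map fun c => (maskL 27 c, c))

/-- The nonzero types, over all classes of weight nine. -/
def typeLit : List ℕ :=
  [3, 4, 2, 2, 3, 4, 3, 4, 2, 3, 4, 2, 2, 3, 4, 3, 4, 2, 3, 4, 2, 2, 3, 4, 3, 4, 2, 3, 4, 2, 3, 4,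
    2, 2, 3, 4, 3, 4, 2, 3, 4, 2, 2, 3, 4, 3, 4, 2, 3, 4, 2, 2, 3, 4, 3, 4, 2, 4, 2, 3, 2, 3, 4, 6,
    4, 2, 3, 2, 3, 4, 3, 4, 2, 6, 2, 3, 4, 3, 4, 2, 4, 2, 3, 6, 4, 2, 3, 3, 4, 2, 2, 3, 4, 6, 3, 4,
    2, 2, 3, 4, 4, 2, 3, 6, 2, 3, 4, 4, 2, 3, 3, 4, 2, 6]

/-- The types of all disjoint pairs agree with the list `typeLit`. -/
def typesOK : Bool :=
  filt (fun t => !Nat.beq t 0) (ents9.flatMap typesE) == typeLit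

lemma typesOK_true : typesOK = true := by decide +kernel

lemma beq_zero (k : ℕ) : Nat.beq k 0 = decide (k = 0) := by
  cases k <;> rfl

lemma getD_map_div (l : List ℕ) (j : ℕ) : (l.map (· / 27)).getD j 0 = l.getD j 0 / 27 := by
  induction l generalizing j with
  | nil => simp
  | cons a l ih => cases j with
    | zero => rfl
    | succ j => exact ih j

lemma filt_eq {α : Type} (p : α → Bool) (l : List α) : filt p l = l.filter p := by
  induction l with
  | nil => rfl
  | cons a l ih =>
    rw [List.filter_cons, ← ih]
    cases h : p a <;> simp [filt, h]

/-- The monomial with factor belonging to a type. -/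
def typeVal (t : ℕ) : MvPolynomial (Fin 6) ℚ :=
  if t = 0 then 0 else
    C (if t % 2 = 1 then 1 else -1 / 2) *
      (if t ≤ 2 then X 0 ^ 9 * X 1 ^ 2 * X 2 * X 3 ^ 9 * X 4 ^ 2 * X 5
        else if t ≤ 4 then X 0 ^ 9 * X 1 ^ 2 * X 2 ^ 2 * X 3 ^ 9 * X 4 ^ 2
        else X 0 ^ 9 * X 1 ^ 3 * X 3 ^ 9 * X 4 ^ 3)

lemma sum_filter_types (T : List ℕ) :
    (T.map typeVal).sum = ((T.filter fun t => !Nat.beq t 0).map typeVal).sum := by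
  induction T with
  | nil => rfl
  | cons t T ih =>
    by_cases h : t = 0
    · subst h
      rw [List.filter_cons_of_neg (by decide), List.map_cons, List.sum_cons, ih, typeVal, if_pos rfl,
        zero_add]
    · rw [List.filter_cons_of_pos (by rw [beq_zero]; simpa using h), List.map_cons, List.sum_cons, List.map_cons,
        List.sum_cons, ih]

lemma sum_types : ((ents9.flatMap typesE).map typeVal).sum =
    18 * (X 0 ^ 9 * X 1 ^ 2 * X 2 ^ 2 * X 3 ^ 9 * X 4 ^ 2) -
      18 * (X 0 ^ 9 * X 1 ^ 2 * X 2 * X 3 ^ 9 * X 4 ^ 2 * X 5) -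
      3 * (X 0 ^ 9 * X 1 ^ 3 * X 3 ^ 9 * X 4 ^ 3) := by
  have h := typesOK_true
  rw [typesOK, beq_iff_eq, filt_eq] at h
  rw [sum_filter_types, h, Finset.sum_list_map_count]
  have ht : typeLit.toFinset = {2, 3, 4, 6} := by decide +kernel
  have h2 : typeLit.count 2 = 36 := by decide +kernel
  have h3 : typeLit.count 3 = 36 := by decide +kernel
  have h4 : typeLit.count 4 = 36 := by decide +kernel
  have h6 : typeLit.count 6 = 6 := by decide +kernel
  rw [ht, Finset.sum_insert (by decide), Finset.sum_insert (by decide),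
    Finset.sum_insert (by decide), Finset.sum_singleton, h2, h3, h4, h6]
  have hC : (2 : MvPolynomial (Fin 6) ℚ) * C (1 / 2) = 1 := by
    rw [show (2 : MvPolynomial (Fin 6) ℚ) = C 2 from (map_ofNat C 2).symm, ← C_mul]
    norm_num
  simp only [typeVal, nsmul_eq_mul]
  norm_num
  linear_combination (-(18 * (X 0 ^ 9 * X 1 ^ 2 * X 2 * X 3 ^ 9 * X 4 ^ 2 * X 5)) -
    18 * (X 0 ^ 9 * X 1 ^ 2 * X 2 ^ 2 * X 3 ^ 9 * X 4 ^ 2) -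
    3 * (X 0 ^ 9 * X 1 ^ 3 * X 3 ^ 9 * X 4 ^ 3)) * hC

lemma type_cases {e : Ent} (he : e ∈ ents9) {t : ℕ} (ht : t ∈ typesE e) : t < 7 := by
  have h := typesOK_true
  rw [typesOK, beq_iff_eq, filt_eq] at h
  by_cases h0 : t = 0
  · omega
  · have : t ∈ typeLit := by
      rw [← h, List.mem_filter]
      exact ⟨List.mem_flatMap.mpr ⟨e, he, ht⟩, by rw [beq_zero]; simpa using h0⟩
    have hall : ∀ t ∈ typeLit, t < 7 := by decide +kernel
    exact hall t this

lemma testBit_maskL (n : ℕ) (l : List ℕ) (j : ℕ) :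
    (maskL n l).testBit j = true ↔ l.getD j 0 % n ≠ 0 := by
  induction l generalizing j with
  | nil => simp [maskL]
  | cons x l ih =>
    have hx : maskL n (x :: l) = 2 * maskL n l + (1 - (1 - x % n)) := rfl
    cases j with
    | zero =>
      rw [hx, Nat.testBit_zero]
      simp only [List.getD_cons_zero, decide_eq_true_eq]
      omega
    | succ j =>
      rw [hx, Nat.testBit_succ, List.getD_cons_succ, ← ih j]
      congr! 2
      omega

lemma land_mask_iff (c l : List ℕ) (hl : l.length ≤ 24) :
    Nat.land (maskL 27 c) (maskL 9 l) = 0 ↔ Dj (ofL (ZMod 243) c) (ofL (ZMod 9) l) := by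
  have hR : ∀ j, Rd 27 (by decide) (ofL (ZMod 243) c j) = ofL (ZMod 27) c j := fun j =>
    congrFun (mp_ofL (Rd 27) c) j
  have h1 : Nat.land (maskL 27 c) (maskL 9 l) = maskL 27 c &&& maskL 9 l := rfl
  rw [h1]
  constructor
  · intro h j
    rw [hR, ofL_eq_zero_iff, ofL_eq_zero_iff]
    by_contra hcon
    rw [not_or] at hcon
    have : (maskL 27 c &&& maskL 9 l).testBit j = true := by
      rw [Nat.testBit_and, Bool.and_eq_true]
      exact ⟨(testBit_maskL _ _ _).mpr hcon.1, (testBit_maskL _ _ _).mpr hcon.2⟩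
    rw [h] at this
    simp at this
  · intro h
    refine Nat.eq_of_testBit_eq fun j => ?_
    rw [Nat.zero_testBit, ← Bool.not_eq_true, Nat.testBit_and, Bool.and_eq_true, testBit_maskL,
      testBit_maskL]
    rintro ⟨h2, h3⟩
    by_cases hj : j < 24
    · have := h ⟨j, hj⟩
      rw [hR, ofL_eq_zero_iff, ofL_eq_zero_iff] at this
      exact this.elim h2 h3
    · exact h3 (by rw [List.getD_eq_default _ _ (by omega), Nat.zero_mod])

lemma rho_natCast (q : ℕ) :
    rho (q : ZMod 9) = if q % 9 = 0 then 1 else if q % 3 = 0 then -1 / 2 else 0 := by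
  have h : (3 : ZMod 9) * (q : ZMod 9) = ((3 * q : ℕ) : ZMod 9) := by push_cast; rfl
  rw [rho, h]
  simp only [ZMod.natCast_eq_zero_iff]
  have h1 : 9 ∣ q ↔ q % 9 = 0 := Nat.dvd_iff_mod_eq_zero
  have h2 : 9 ∣ 3 * q ↔ q % 3 = 0 := by omega
  simp only [h1, h2]

lemma ex_exN (n m : ℕ) : ((ex (n : ZMod 243) (m : ZMod 9) : Fin 6) : ℕ) = exN n m := by
  have h3 : S3 (m : ZMod 9) = (m : ZMod 3) := by simp
  have z : ∀ k N : ℕ, (k : ZMod N) = 0 ↔ k % N = 0 := fun k N => by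
    rw [ZMod.natCast_eq_zero_iff, Nat.dvd_iff_mod_eq_zero]
  simp only [ex, exN, R_natCast, h3, z, ne_eq]
  simp only [beq_zero, Bool.cond_decide]
  split_ifs <;> rfl

lemma prod_X_fin {n : ℕ} (f : Fin n → Fin 6) :
    ∏ j, (X (f j) : MvPolynomial (Fin 6) ℚ) =
      ∏ i : Fin 6, X i ^ (∑ j, (1 - ((f j : ℕ) - i) - (i - (f j : ℕ)))) := by
  have h1 : ∀ k : Fin 6, (X k : MvPolynomial (Fin 6) ℚ) =
      ∏ i : Fin 6, X i ^ (1 - ((k : ℕ) - i) - (i - (k : ℕ))) := by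
    intro k
    rw [Finset.prod_eq_single k]
    · simp
    · intro i _ hi
      have : (i : ℕ) ≠ k := fun h => hi (Fin.ext h)
      rw [show 1 - ((k : ℕ) - i) - (i - k) = 0 by omega, pow_zero]
    · simp
  simp only [← Finset.prod_pow_eq_pow_sum]
  rw [Finset.prod_comm]
  exact Finset.prod_congr rfl fun j _ => h1 (f j)

lemma getD_map_range {n i : ℕ} (f : ℕ → ℕ) (h : i < n) :
    ((List.range n).map f).getD i 0 = f i := by
  simp [h]

lemma sum_map_range (n : ℕ) (f : ℕ → ℕ) : ((List.range n).map f).sum = ∑ j : Fin n, f j := by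
  rw [Fin.sum_univ_eq_sum_range f n, Finset.sum_eq_multiset_sum, Finset.range_val, Multiset.range,
    Multiset.map_coe, Multiset.sum_coe]

lemma prod_ex (c l : List ℕ) :
    ∏ j, (X (ex (ofL (ZMod 243) c j) (ofL (ZMod 9) l j)) : MvPolynomial (Fin 6) ℚ) =
      ∏ i : Fin 6, X i ^ ((cnts c l).getD i 0) := by
  rw [prod_X_fin]
  refine Finset.prod_congr rfl fun i _ => ?_
  rw [cnts, getD_map_range _ i.2, sum_map_range]
  simp only [ofL, ex_exN]

lemma term_lists {c l : List ℕ} (hD : Dj (ofL (ZMod 243) c) (ofL (ZMod 9) l))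
    (ht : pairType c l < 7) :
    term (ofL (ZMod 243) c) (ofL (ZMod 9) l) = typeVal (pairType c l) := by
  rw [term, if_pos hD, prod_ex]
  have hq : ∑ j, ofL (ZMod 9) l j * quo (ofL (ZMod 243) c j) =
      ((dotL 24 l (c.map (· / 27)) % 9 : ℕ) : ZMod 9) := by
    rw [cast_mod (by decide), dotL_eq]
    refine Finset.sum_congr rfl fun j _ => ?_
    rw [ofL, ofL, quo_natCast]
    rw [getD_map_div]
  rw [hq]
  simp only [pairType] at ht ⊢
  have hlt : dotL 24 l (c.map (· / 27)) % 9 < 9 := Nat.mod_lt _ (by norm_num)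
  generalize dotL 24 l (c.map (· / 27)) % 9 = q at ht hlt ⊢
  simp only [beq_zero, Bool.cond_decide] at ht ⊢
  by_cases h3 : q % 3 = 0
  · rw [if_pos h3] at ht ⊢
    have hr : rho (q : ZMod 9) = if q = 0 then 1 else -1 / 2 := by
      rw [rho_natCast]
      split_ifs <;> first | rfl | omega
    rw [hr]
    by_cases k1 : cnts c l = [9, 2, 1, 9, 2, 1]
    · rw [k1]
      by_cases q0 : q = 0 <;> simp [q0, typeVal, Fin.prod_univ_succ] <;> ring
    by_cases k2 : cnts c l = [9, 2, 2, 9, 2, 0]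
    · rw [k2]
      by_cases q0 : q = 0 <;> simp [q0, typeVal, Fin.prod_univ_succ] <;> ring
    by_cases k3 : cnts c l = [9, 3, 0, 9, 3, 0]
    · rw [k3]
      by_cases q0 : q = 0 <;> simp [q0, typeVal, Fin.prod_univ_succ] <;> ring
    exfalso
    simp only [beq_eq_false_iff_ne.mpr k1, beq_eq_false_iff_ne.mpr k2, beq_eq_false_iff_ne.mpr k3,
      cond_false] at ht
    omega
  · rw [if_neg h3, typeVal, if_pos rfl]
    have hr : rho (q : ZMod 9) = 0 := by
      rw [rho_natCast]
      split_ifs <;> first | rfl | omega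
    rw [hr, C_0, zero_mul]

/-! ### The sum over the words above `wordZ` -/

/-- The coefficients of a digit vector on the rows other than the first. -/
def dd (d : Fin 11 → Fin 9) (i : Fin 12) : ℕ := if h : i = 0 then 0 else d (i.pred h)

/-- Parametrization of the words above `wordZ` that can be disjoint from a word of a class:
up to a unit `1 + 3 v`, the coefficients modulo 27 are `1, 3 a, 3 b, 3 c, 0, …, 0`. -/
def par (M : List (List ℕ)) (p : Fin 81 × (Fin 11 → Fin 9) × Fin 9 × Fin 9 × Fin 9) :
    Fin 24 → ZMod 243 :=
  ((1 + 3 * (p.1 : ℕ) : ℕ) : ZMod 243) •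
    (ofL (ZMod 243) (combL [1, 3 * p.2.2.1, 3 * p.2.2.2.1, 3 * p.2.2.2.2] M) +
      (27 : ZMod 243) • ∑ i : Fin 12, ((dd p.2.1 i : ℕ) : ZMod 243) • row (ZMod 243) M i)

section Par

variable {I : List ℕ} {M : List (List ℕ)}

lemma combL_mem (hI : isInfo I M = true) {A : Type*} [CommRing A] (hA : ((243 : ℕ) : A) = 0)
    (k : List ℕ) :
    ofL A (combL k M) ∈ code A := by
  rw [ofL_combL A 12 k M (isInfo_length hI)]
  exact Submodule.sum_mem _ fun i _ => Submodule.smul_mem _ _ (isInfo_mem hA hI i)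

lemma combL_ix (hI : isInfo I M = true) {A : Type*} [CommRing A] (k : List ℕ) (i : Fin 12) :
    ofL A (combL k M) (ix I i) = ((k.getD i 0 : ℕ) : A) := by
  rw [ofL_combL A 12 k M (isInfo_length hI), Finset.sum_apply]
  simp only [Pi.smul_apply, isInfo_delta hI, smul_eq_mul]
  simp

lemma par_mem (hI : isInfo I M = true) (p) : par M p ∈ code (ZMod 243) := by
  refine Submodule.smul_mem _ _ (Submodule.add_mem _ (combL_mem hI h243 _)
    (Submodule.smul_mem _ _ ?_))
  exact Submodule.sum_mem _ fun i _ => Submodule.smul_mem _ _ (isInfo_mem h243 hI i)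

lemma par_ix (hI : isInfo I M = true) (p) (i : Fin 12) : par M p (ix I i) = ((1 + 3 * (p.1 : ℕ) : ℕ) : ZMod 243) *
    (([1, 3 * (p.2.2.1 : ℕ), 3 * p.2.2.2.1, 3 * p.2.2.2.2].getD i 0 + 27 * dd p.2.1 i : ℕ) :
      ZMod 243) := by
  rw [par, Pi.smul_apply, Pi.add_apply, combL_ix hI, Pi.smul_apply, Finset.sum_apply]
  simp only [Pi.smul_apply, isInfo_delta hI, smul_eq_mul]
  simp

lemma Rd3_one_add (v : ℕ) : Rd 3 (by decide) ((1 + 3 * v : ℕ) : ZMod 243) = 1 := by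
  rw [R_natCast]
  exact (cast_eq_of_mod (N := 3) (b := 1) (by decide) (by omega)).trans Nat.cast_one

lemma isUnit_one_add (v : ℕ) : IsUnit ((1 + 3 * v : ℕ) : ZMod 243) :=
  isUnit_of_R3 (by rw [Rd3_one_add]; decide)

lemma par_injective (hI : isInfo I M = true) : Function.Injective (par M) := by
  rintro ⟨v, d, a, b, c⟩ ⟨v', d', a', b', c'⟩ h
  have hk := fun i => (par_ix hI ⟨v, d, a, b, c⟩ i).symm.trans
    ((congrFun h (ix I i)).trans (par_ix hI ⟨v', d', a', b', c'⟩ i))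
  have inj : ∀ x y : ℕ, x < 243 → y < 243 → ((x : ℕ) : ZMod 243) = ((y : ℕ) : ZMod 243) →
      x = y := by
    intro x y hx hy hxy
    rw [ZMod.natCast_eq_natCast_iff', Nat.mod_eq_of_lt hx, Nat.mod_eq_of_lt hy] at hxy
    exact hxy
  have hv : v = v' := by
    have h0 := hk 0
    simp only [dd, Fin.coe_ofNat_eq_mod, Nat.zero_mod, List.getD_cons_zero, dif_pos, mul_zero,
      add_zero, Nat.cast_one, mul_one] at h0
    have := inj _ _ (by omega) (by omega) h0
    exact Fin.ext (by omega)
  subst hv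
  have hk' : ∀ i : Fin 12, [1, 3 * (a : ℕ), 3 * b, 3 * c].getD i 0 + 27 * dd d i =
      [1, 3 * (a' : ℕ), 3 * b', 3 * c'].getD i 0 + 27 * dd d' i := by
    intro i
    have hdd : ∀ d : Fin 11 → Fin 9, dd d i ≤ 8 := by
      intro d
      unfold dd
      split_ifs <;> omega
    have hle : ∀ a b c : Fin 9, [1, 3 * (a : ℕ), 3 * b, 3 * c].getD i 0 ≤ 24 := by
      intro a b c
      generalize (i : ℕ) = i
      match i with
      | 0 => simp
      | 1 => simp; omega
      | 2 => simp; omega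
      | 3 => simp; omega
      | i + 4 => simp
    have h1 := hdd d
    have h2 := hdd d'
    have h3 := hle a b c
    have h4 := hle a' b' c'
    exact inj _ _ (by omega) (by omega) ((isUnit_one_add v).mul_left_cancel (hk i))
  have e1 := hk' 1
  have e2 := hk' 2
  have e3 := hk' 3
  have hd : d = d' := by
    funext i
    have h1 := hk' i.succ
    have hle : ∀ a b c : Fin 9, [1, 3 * (a : ℕ), 3 * b, 3 * c].getD i.succ 0 ≤ 24 := by
      intro a b c
      generalize ((Fin.succ i : Fin 12) : ℕ) = i
      match i with
      | 0 => simp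
      | 1 => simp; omega
      | 2 => simp; omega
      | 3 => simp; omega
      | i + 4 => simp
    have h3 := hle a b c
    have h4 := hle a' b' c'
    simp only [dd, Fin.succ_ne_zero, dite_false, Fin.pred_succ] at h1
    exact Fin.ext (by omega)
  subst hd
  have f1 : (a : ℕ) = a' := by simpa using e1
  have f2 : (b : ℕ) = b' := by simpa using e2
  have f3 : (c : ℕ) = c' := by simpa using e3
  rw [Fin.ext f1, Fin.ext f2, Fin.ext f3]

lemma term_par (hI : isInfo I M = true) {b : Fin 24 → ZMod 9} (hb : b ∈ code (ZMod 9)) (p) :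
    term (par M p) b =
      term (ofL (ZMod 243) (combL [1, 3 * p.2.2.1, 3 * p.2.2.2.1, 3 * p.2.2.2.2] M)) b := by
  have hu := isUnit_one_add p.1
  refine (term_mul (Equiv.refl _) (fun _ => ((1 + 3 * (p.1 : ℕ) : ℕ) : ZMod 243)) (fun _ => hu)
    (fun _ => 1) (fun _ => isUnit_one) (fun j => rfl) (fun j => (one_mul _).symm) _ (hu.map (Rd 9))
    (fun _ => one_mul _)).trans ?_
  exact term_add_27 (Submodule.sum_mem _ fun i _ => Submodule.smul_mem _ _ (isInfo_mem h243 hI i)) hb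

/-- The words above `row M 0` that are disjoint from `b` are all parametrized by `par`. -/
lemma exists_par (hI : isInfo I M = true) {w : Fin 24 → ZMod 3} (h0 : row (ZMod 3) M 0 = w) {b : Fin 24 → ZMod 9}
    (hT : ∀ k : Fin 12, 4 ≤ (k : ℕ) → b (ix I k) ≠ 0) {c : Fin 24 → ZMod 243}
    (hc : c ∈ code (ZMod 243)) (hcw : mp (Rd 3) c = w) (hD : Dj c b) : ∃ p, par M p = c := by
  set u := c (ix I 0) with hu
  have hred : ∀ k : Fin 12, Rd 3 (by decide) (c (ix I k)) = if 0 = k then 1 else 0 := by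
    intro k
    have := congrFun hcw (ix I k)
    rw [← h0] at this
    exact this.trans (isInfo_delta hI 0 k)
  have hu1 : Rd 3 (by decide) u = 1 := by simpa using hred 0
  obtain ⟨U, hU⟩ := isUnit_of_R3 (a := u) (by rw [hu1]; decide)
  set n : Fin 12 → ℕ := fun k => ((↑U⁻¹ : ZMod 243) * c (ix I k)).val with hn
  have hnc : ∀ k, ((n k : ℕ) : ZMod 243) = (↑U⁻¹ : ZMod 243) * c (ix I k) := fun k =>
    ZMod.natCast_zmod_val _
  have hn243 : ∀ k, n k < 243 := fun k => ZMod.val_lt _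
  have hn0 : n 0 = 1 := by
    simp only [hn]
    rw [← hu, ← hU, Units.inv_mul]; rfl
  have hn3 : ∀ k : Fin 12, k ≠ 0 → n k % 3 = 0 := by
    intro k hk
    have h1 : Rd 3 (by decide) ((n k : ℕ) : ZMod 243) = 0 := by
      rw [hnc, map_mul, hred, if_neg (Ne.symm hk), mul_zero]
    rwa [R_natCast, ZMod.natCast_eq_zero_iff, Nat.dvd_iff_mod_eq_zero] at h1
  have hn27 : ∀ k : Fin 12, 4 ≤ (k : ℕ) → n k % 27 = 0 := by
    intro k hk
    have h1 : Rd 27 (by decide) ((n k : ℕ) : ZMod 243) = 0 := by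
      rw [hnc, map_mul, (hD _).resolve_right (hT k hk), mul_zero]
    rwa [R_natCast, ZMod.natCast_eq_zero_iff, Nat.dvd_iff_mod_eq_zero] at h1
  have hu3 : u.val % 3 = 1 := by
    have h1 : Rd 3 (by decide) ((u.val : ℕ) : ZMod 243) = ((1 : ℕ) : ZMod 3) := by
      rw [ZMod.natCast_zmod_val, hu1, Nat.cast_one]
    rw [R_natCast, ZMod.natCast_eq_natCast_iff'] at h1
    exact h1
  have hu243 := ZMod.val_lt u
  refine ⟨⟨⟨u.val / 3, by omega⟩, fun i => ⟨n i.succ / 27, by have := hn243 i.succ; omega⟩,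
    ⟨n 1 % 27 / 3, by omega⟩, ⟨n 2 % 27 / 3, by omega⟩, ⟨n 3 % 27 / 3, by omega⟩⟩, ?_⟩
  have key : ∀ k : Fin 12, [1, 3 * (n 1 % 27 / 3), 3 * (n 2 % 27 / 3), 3 * (n 3 % 27 / 3)].getD k 0 +
      27 * dd (fun i => ⟨n i.succ / 27, by have := hn243 i.succ; omega⟩) k = n k := by
    intro k
    have hk27 := hn27 k
    have hk3 := hn3 k
    rcases Fin.eq_zero_or_eq_succ k with rfl | ⟨i, rfl⟩
    · simpa [dd] using hn0.symm
    · have hk3' := hk3 (Fin.succ_ne_zero i)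
      simp only [dd, Fin.succ_ne_zero, dite_false, Fin.pred_succ]
      by_cases hi : 4 ≤ ((i.succ : Fin 12) : ℕ)
      · rw [List.getD_eq_default _ _ (by simpa using hi)]
        have := hk27 hi
        omega
      · have hi' : (i : ℕ) < 3 := by rw [Fin.val_succ] at hi; omega
        obtain ⟨i, hlt⟩ := i
        simp only at hi'
        clear hk27 hi
        interval_cases i
        · change 3 * (n 1 % 27 / 3) + 27 * (n 1 / 27) = n 1
          have : n 1 % 3 = 0 := hk3'
          omega
        · change 3 * (n 2 % 27 / 3) + 27 * (n 2 / 27) = n 2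
          have : n 2 % 3 = 0 := hk3'
          omega
        · change 3 * (n 3 % 27 / 3) + 27 * (n 3 / 27) = n 3
          have : n 3 % 3 = 0 := hk3'
          omega
  refine (code_eq_info h243 hI (par_mem hI _)).trans
    ((Finset.sum_congr rfl fun k _ => ?_).trans (code_eq_info h243 hI hc).symm)
  refine congrArg (· • row (ZMod 243) M k) ((par_ix hI _ k).trans ?_)
  have hus : 1 + 3 * (u.val / 3) = u.val := by omega
  refine (congrArg₂ (fun x y : ℕ => (x : ZMod 243) * (y : ZMod 243)) hus (key k)).trans ?_
  rw [hnc, ZMod.natCast_zmod_val, ← mul_assoc, ← hU, Units.mul_inv, one_mul]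

lemma sum_par (hI : isInfo I M = true) {w : Fin 24 → ZMod 3} (h0 : row (ZMod 3) M 0 = w) {b : Fin 24 → ZMod 9}
    (hb : b ∈ code (ZMod 9)) (hT : ∀ k : Fin 12, 4 ≤ (k : ℕ) → b (ix I k) ≠ 0) :
    (∑ c, if c ∈ code (ZMod 243) ∧ mp (Rd 3) c = w then term c b else 0) =
      (81 * 9 ^ 11) * ∑ x : Fin 9, ∑ y : Fin 9, ∑ z : Fin 9,
        term (ofL (ZMod 243) (combL [1, 3 * x, 3 * y, 3 * z] M)) b := by
  have hw : ∀ p, mp (Rd 3) (par M p) = w := by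
    intro p
    rw [code_eq_info h243_3 hI (mp_code (Rd 3) (par_mem hI p)),
      Finset.sum_eq_single 0 ?_ (by simp)]
    · rw [mp, par_ix hI, map_mul, Rd3_one_add]
      simp [dd, ← h0]
    · intro k _ hk
      rw [mp, par_ix hI, map_mul, R_natCast, R_natCast]
      have : ((([1, 3 * (p.2.2.1 : ℕ), 3 * p.2.2.2.1, 3 * p.2.2.2.2].getD k 0 +
          27 * dd p.2.1 k : ℕ)) : ZMod 3) = 0 := by
        rw [ZMod.natCast_eq_zero_iff]
        refine dvd_add ?_ (Dvd.dvd.mul_right (by norm_num) _)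
        rcases Fin.eq_zero_or_eq_succ k with rfl | ⟨i, rfl⟩
        · exact absurd rfl hk
        · rw [Fin.val_succ]
          generalize (i : ℕ) = i
          match i with
          | 0 | 1 | 2 => simp
          | i + 3 => simp
      rw [this, mul_zero, zero_smul]
  have h1 := Finset.sum_of_injOn (s := Finset.univ) (t := Finset.univ) (f := fun p =>
      term (ofL (ZMod 243) (combL [1, 3 * p.2.2.1, 3 * p.2.2.2.1, 3 * p.2.2.2.2] M)) b)
    (g := fun c => if c ∈ code (ZMod 243) ∧ mp (Rd 3) c = w then term c b else 0) (par M)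
    (par_injective hI).injOn (fun _ _ => by simp)
    (by
      intro c _ hc
      split_ifs with h
      · by_contra hne
        refine hc ?_
        have hD : Dj c b := by
          by_contra hD
          exact hne (by rw [term, if_neg hD])
        obtain ⟨p, hp⟩ := exists_par hI h0 hT h.1 h.2 hD
        exact ⟨p, by simp, hp⟩
      · rfl)
    (by
      intro p _
      rw [if_pos ⟨par_mem hI p, hw p⟩, term_par hI hb])
  rw [← h1]
  simp only [Fintype.sum_prod_type, Finset.sum_const, Finset.card_univ, Fintype.card_fin,
    nsmul_eq_mul, Fintype.card_pi, Finset.prod_const]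
  push_cast
  ring

end Par

/-! ### The value of `Fsum wordZ` -/

lemma sum_map_flatMap {α β N : Type*} [AddCommMonoid N] (l : List α) (f : α → List β) (g : β → N) :
    ((l.flatMap f).map g).sum = (l.map fun a => ((f a).map g).sum).sum := by
  induction l with
  | nil => rfl
  | cons a l ih => simp [ih]

lemma sum_map_r27 {N : Type*} [AddCommMonoid N] (f : ℕ → N) :
    (r27.map f).sum = ∑ x : Fin 9, f (3 * x) := by
  simp [r27, Fin.sum_univ_succ]

lemma sum_lift27 {N : Type*} [AddCommMonoid N] (f : List ℕ → N) :
    (lift27.map f).sum =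
      ∑ x : Fin 9, ∑ y : Fin 9, ∑ z : Fin 9, f [1, 3 * x, 3 * y, 3 * z] := by
  simp only [lift27, sum_map_flatMap, List.map_map, sum_map_r27, Function.comp_apply]

lemma sum_map_filter {α N : Type*} [AddCommMonoid N] (p : α → Bool) (l : List α) (f : α → N)
    (h : ∀ a ∈ l, p a = false → f a = 0) : ((l.filter p).map f).sum = (l.map f).sum := by
  induction l with
  | nil => rfl
  | cons a l ih =>
    have ih' := ih fun a ha => h a (List.mem_cons_of_mem _ ha)
    cases hp : p a
    · rw [List.filter_cons_of_neg (by simp [hp]), List.map_cons, List.sum_cons, ih',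
        h a List.mem_cons_self hp, zero_add]
    · rw [List.filter_cons_of_pos hp, List.map_cons, List.sum_cons, List.map_cons, List.sum_cons,
        ih']

lemma length_modL_le (n : ℕ) (k : List ℕ) {M : List (List ℕ)} (hM : ∀ m ∈ M, m.length ≤ 24) :
    (modL n (combL k M)).length ≤ 24 := by
  have hadd : ∀ (k : ℕ) (m a : List ℕ), (addS k m a).length ≤ max m.length a.length := by
    intro k m
    induction m with
    | nil => intro a; cases a <;> simp [addS]
    | cons x m ih =>
      intro a
      cases a with
      | nil => have := ih []; simp [addS] at this ⊢; try omega
      | cons y a => have := ih a; simp [addS] at this ⊢; omega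
  rw [modL, List.length_map]
  induction k generalizing M with
  | nil => simp [combL]
  | cons x k ih =>
    cases M with
    | nil => simp [combL]
    | cons m M =>
      refine (hadd _ _ _).trans (max_le (hM m List.mem_cons_self) ?_)
      exact ih fun m hm => hM m (List.mem_cons_of_mem _ hm)

lemma bList_length {e : Ent} {l : List ℕ} (hl : l ∈ bList e) : l.length ≤ 24 := by
  obtain ⟨k, -, rfl⟩ := List.mem_map.mp hl
  exact length_modL_le 9 k (by decide +kernel)

lemma bList_mem {e : Ent} {l : List ℕ} (hl : l ∈ bList e) :
    ofL (ZMod 9) l ∈ code (ZMod 9) := by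
  obtain ⟨k, -, rfl⟩ := List.mem_map.mp hl
  rw [ofL_modL (by decide)]
  exact combL_mem isInfo_genS h243_9 k

lemma bList_red {e : Ent} {l : List ℕ} (hl : l ∈ bList e) (j : Fin 24) :
    ofL (ZMod 3) l j = 0 ↔ ofL (ZMod 3) e.word j = 0 := by
  obtain ⟨k, hk, rfl⟩ := List.mem_map.mp hl
  obtain ⟨s, hs, hk⟩ := List.mem_flatMap.mp hk
  obtain ⟨u, hu, rfl⟩ := List.mem_map.mp hk
  have hs' : IsUnit ((s : ℕ) : ZMod 3) := by
    simp only [List.mem_cons, List.not_mem_nil, or_false] at hs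
    rcases hs with rfl | rfl <;> decide
  have hu3 : ∀ i, u.getD i 0 % 3 = 0 := by
    have h3 : ∀ a ∈ [0, 3, 6], a % 3 = 0 := by decide
    simp only [lift3, List.mem_flatMap, List.mem_map] at hu
    obtain ⟨a, ha, b, hb, c, hc, d, hd, rfl⟩ := hu
    intro i
    match i with
    | 0 => exact h3 a ha
    | 1 => exact h3 b hb
    | 2 => exact h3 c hc
    | 3 => exact h3 d hd
    | i + 4 => rfl
  have hw : ofL (ZMod 3) (modL 9 (combL (addS 1 u (modL 3 (addS s e.v []))) genS)) =
      ((s : ℕ) : ZMod 3) • ofL (ZMod 3) e.word := by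
    rw [ofL_modL (by decide), Ent.word, ofL_combL _ _ e.v genS rfl, Finset.smul_sum,
      ofL_combL _ _ _ genS rfl]
    refine Finset.sum_congr rfl fun i _ => ?_
    rw [smul_smul]
    congr 1
    rw [getD_addS, modL, getD_map_mod, getD_addS, Nat.cast_add, cast_mod (by decide), one_mul,
      show ((u.getD i 0 : ℕ) : ZMod 3) = 0 from (ZMod.natCast_eq_zero_iff _ _).mpr
        (Nat.dvd_of_mod_eq_zero (hu3 i))]
    simp
  rw [hw, Pi.smul_apply, smul_eq_mul, hs'.mul_right_eq_zero]

lemma sum_disjoint (cs : List (List ℕ)) {l : List ℕ} (hl : l.length ≤ 24)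
    (hty : ∀ c ∈ cs, Nat.land (maskL 27 c) (maskL 9 l) = 0 → pairType c l < 7) :
    (cs.map fun c => term (ofL (ZMod 243) c) (ofL (ZMod 9) l)).sum =
      ((cs.filter fun c => Nat.beq (Nat.land (maskL 27 c) (maskL 9 l)) 0).map
        fun c => typeVal (pairType c l)).sum := by
  induction cs with
  | nil => simp
  | cons c cs ih =>
    have ih' := ih fun c hc => hty c (List.mem_cons_of_mem _ hc)
    have hD := land_mask_iff c l hl
    have hc := hty c List.mem_cons_self
    by_cases h0 : Nat.land (maskL 27 c) (maskL 9 l) = 0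
    · rw [List.filter_cons_of_pos (by rw [h0]; rfl), List.map_cons, List.sum_cons, List.map_cons,
        List.sum_cons, ih', term_lists (hD.mp h0) (hc h0)]
    · rw [List.filter_cons_of_neg (by rw [beq_zero]; simpa using h0), List.map_cons, List.sum_cons,
        ih', term, if_neg (fun h => h0 (hD.mpr h)), zero_add]

lemma typesE_eq (e : Ent) : typesE e = (bList e).flatMap fun l =>
    ((cList e).filter fun c => Nat.beq (Nat.land (maskL 27 c) (maskL 9 l)) 0).map
      fun c => pairType c l := by
  rw [typesE]
  simp only [filt_eq, List.filter_map, List.map_map, Function.comp_def]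

lemma mem_typesE {e : Ent} {c l : List ℕ} (hl : l ∈ bList e) (hc : c ∈ cList e)
    (h : Nat.land (maskL 27 c) (maskL 9 l) = 0) : pairType c l ∈ typesE e := by
  rw [typesE_eq]
  refine List.mem_flatMap.mpr ⟨l, hl, List.mem_map.mpr ⟨c, List.mem_filter.mpr ⟨hc, ?_⟩, rfl⟩⟩
  rw [h]; rfl

/-- The contribution of one word of a class. -/
lemma sum_word {e : Ent} (he : e ∈ ents9) {l : List ℕ} (hl : l ∈ bList e) :
    (∑ c, if c ∈ code (ZMod 243) ∧ mp (Rd 3) c = ofL (ZMod 3) wordZ then term c (ofL (ZMod 9) l)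
      else 0) =
    (81 * 9 ^ 11) * (((cList e).filter fun c => Nat.beq (Nat.land (maskL 27 c) (maskL 9 l)) 0).map
      fun c => typeVal (pairType c l)).sum := by
  obtain ⟨hI, -, t, ht, -, hT, htw, -, h0⟩ := ent9OK_spec (List.all_eq_true.mp ents9_OK e he)
  have hbu : ∀ j, ofL (ZMod 3) e.word j ≠ 0 → ofL (ZMod 9) l j ≠ 0 := by
    intro j hj h
    refine hj ((bList_red hl j).mp ?_)
    rw [ofL_eq_zero_iff] at h ⊢
    omega
  rw [sum_par hI h0 (bList_mem hl) fun k hk => hbu _ (hT k hk)]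
  congr 1
  rw [← sum_lift27 fun k => term (ofL (ZMod 243) (combL k e.M)) (ofL (ZMod 9) l)]
  have h1 : ((cList e).map fun c => term (ofL (ZMod 243) c) (ofL (ZMod 9) l)).sum =
      (lift27.map fun k => term (ofL (ZMod 243) (combL k e.M)) (ofL (ZMod 9) l)).sum := by
    rw [cList, List.map_map]
    simp only [Function.comp_def, ofL_modL h243]
    refine sum_map_filter _ _ _ fun k hk hkt => ?_
    rw [term, if_neg]
    intro hD
    have h27 := (hD t).resolve_right (hbu t htw)
    rw [show Rd 27 (by decide) (ofL (ZMod 243) (combL k e.M) t) =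
      ofL (ZMod 27) (combL k e.M) t from congrFun (mp_ofL (Rd 27) _) t] at h27
    have hk4 : k.length = 4 := by
      simp only [lift27, List.mem_flatMap, List.mem_map] at hk
      obtain ⟨a, -, b, -, c, -, rfl⟩ := hk
      rfl
    have hdot : ((dotL 4 k (e.M.map fun m => m.getD e.t0 0) : ℕ) : ZMod 27) = 0 := by
      rw [← h27, ofL_combL _ 12 _ _ (isInfo_length hI), dotL_eq, Finset.sum_apply]
      rw [show (∑ i : Fin 12, (((k.getD i 0 : ℕ) : ZMod 27) • row (ZMod 27) e.M i) t) =
        ∑ i : Fin (4 + 8), (((k.getD i 0 : ℕ) : ZMod 27) • row (ZMod 27) e.M i) t from rfl,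
        Fin.sum_univ_add, Finset.sum_eq_zero (s := Finset.univ (α := Fin 8)), add_zero]
      · refine Finset.sum_congr rfl fun i _ => ?_
        have : (i : ℕ) < e.M.length := by rw [isInfo_length hI]; omega
        simp [row, ofL, ht, this]
      · intro i _
        rw [List.getD_eq_default _ _ (by simp [hk4])]
        simp
    rw [beq_zero] at hkt
    simp only [decide_eq_false_iff_not] at hkt
    rw [ZMod.natCast_eq_zero_iff, Nat.dvd_iff_mod_eq_zero] at hdot
    exact hkt hdot
  rw [← h1]
  exact sum_disjoint _ (bList_length hl) fun c hc h => type_cases he (mem_typesE hl hc h)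

/-- Quadruples as numbers. -/
def encQ (k : List ℕ) : ℕ :=
  k.getD 0 0 + 9 * (k.getD 1 0 + 9 * (k.getD 2 0 + 9 * k.getD 3 0))

/-- The entries of a list are distinct and avoid the bits of `m`. -/
def nodupM : ℕ → List ℕ → Bool
  | _, [] => true
  | m, a :: l => Bool.and (!m.testBit a) (nodupM (Nat.lor m (2 ^ a)) l)

lemma nodupM_spec {m : ℕ} {l : List ℕ} (h : nodupM m l = true) :
    l.Nodup ∧ ∀ a ∈ l, m.testBit a = false := by
  induction l generalizing m with
  | nil => simp
  | cons a l ih =>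
    simp only [nodupM, Bool.and_eq_true, Bool.not_eq_true'] at h
    obtain ⟨h1, h2⟩ := ih h.2
    have h3 : ∀ b ∈ l, m.testBit b = false ∧ b ≠ a := by
      intro b hb
      have : (m ||| 2 ^ a).testBit b = false := h2 b hb
      rw [Nat.testBit_or, Bool.or_eq_false_iff] at this
      refine ⟨this.1, ?_⟩
      rintro rfl
      simp at this
    refine ⟨List.nodup_cons.mpr ⟨fun ha => (h3 a ha).2 rfl, h1⟩, ?_⟩
    intro b hb
    rcases List.mem_cons.mp hb with rfl | hb
    · exact h.1
    · exact (h3 b hb).1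

/-- The coefficient vectors of all classes of weight nine are distinct. -/
def coefOK : Bool :=
  nodupM 0 ((ents9.flatMap coefB).map encQ) &&
    (ents9.flatMap coefB).all fun k => Nat.beq k.length 4 && k.all fun x => Nat.blt x 9

lemma coefOK_true : coefOK = true := by decide +kernel

lemma nodup_words :
    (((ents9.flatMap bList).map fun l => ofL (ZMod 9) l)).Nodup := by
  have h := coefOK_true
  simp only [coefOK, Bool.and_eq_true, List.all_eq_true, Nat.beq_eq, Nat.blt_eq] at h
  have hn : (ents9.flatMap coefB).Nodup := List.Nodup.of_map _ (nodupM_spec h.1).1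
  have e : (ents9.flatMap bList).map (fun l => ofL (ZMod 9) l) =
      (ents9.flatMap coefB).map fun k => ofL (ZMod 9) (combL k genS) := by
    simp only [bList, List.map_flatMap, List.map_map, Function.comp_def,
      ofL_modL (show ((9 : ℕ) : ZMod 9) = 0 by decide)]
  rw [e]
  refine List.Nodup.map_on ?_ hn
  intro k hk k' hk' hkk
  obtain ⟨l4, lt⟩ := h.2 k hk
  obtain ⟨l4', lt'⟩ := h.2 k' hk'
  refine List.ext_getElem (l4.trans l4'.symm) fun i hi hi' => ?_
  have h1 := congrFun hkk (ix setS ⟨i, by omega⟩)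
  rw [combL_ix isInfo_genS, combL_ix isInfo_genS, ZMod.natCast_eq_natCast_iff',
    List.getD_eq_getElem _ _ hi, List.getD_eq_getElem _ _ hi',
    Nat.mod_eq_of_lt (lt _ (List.getElem_mem _)), Nat.mod_eq_of_lt (lt' _ (List.getElem_mem _))] at h1
  exact h1

/-- The contribution of all words modulo 9 in the classes of weight nine. -/
lemma sum_classes (H : (Fin 24 → ZMod 9) → MvPolynomial (Fin 6) ℚ)
    (hH : ∀ e ∈ ents9, ∀ l ∈ bList e, H (ofL (ZMod 9) l) = (81 * 9 ^ 11) *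
      (((cList e).filter fun c => Nat.beq (Nat.land (maskL 27 c) (maskL 9 l)) 0).map
        fun c => typeVal (pairType c l)).sum) :
    (((ents9.flatMap bList).map fun l => ofL (ZMod 9) l).map H).sum =
      (81 * 9 ^ 11) * ((ents9.flatMap typesE).map typeVal).sum := by
  have h9 : ∀ es : List Ent, (∀ e ∈ es, e ∈ ents9) →
      (((es.flatMap bList).map fun l => ofL (ZMod 9) l).map H).sum =
        (81 * 9 ^ 11) * ((es.flatMap typesE).map typeVal).sum := by
    intro es hes
    rw [List.map_map, sum_map_flatMap, sum_map_flatMap, ← List.sum_map_mul_left]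
    congr 1
    refine List.map_congr_left fun e he => ?_
    rw [typesE_eq, sum_map_flatMap, ← List.sum_map_mul_left]
    congr 1
    refine List.map_congr_left fun l hl => ?_
    rw [Function.comp_apply, hH e (hes e he) l hl, List.map_map, Function.comp_def]
  exact h9 ents9 fun _ h => h

lemma Fsum_wordZ : Fsum (ofL (ZMod 3) wordZ) = (81 * 9 ^ 11) *
    (18 * (X 0 ^ 9 * X 1 ^ 2 * X 2 ^ 2 * X 3 ^ 9 * X 4 ^ 2) -
      18 * (X 0 ^ 9 * X 1 ^ 2 * X 2 * X 3 ^ 9 * X 4 ^ 2 * X 5) -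
      3 * (X 0 ^ 9 * X 1 ^ 3 * X 3 ^ 9 * X 4 ^ 3)) := by
  rw [Fsum, Finset.sum_comm]
  set H : (Fin 24 → ZMod 9) → MvPolynomial (Fin 6) ℚ := fun b =>
    ∑ c, if c ∈ code (ZMod 243) ∧ mp (Rd 3) c = ofL (ZMod 3) wordZ then term c b else 0 with hH
  obtain ⟨L, hL⟩ : ∃ L, L = (ents9.flatMap bList).map fun l => ofL (ZMod 9) l := ⟨_, rfl⟩
  have hterm : ∀ e ∈ ents9, ∀ l ∈ bList e, mp S3 (ofL (ZMod 9) l) ≠ 0 := by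
    intro e he l hl h
    obtain ⟨hI, -, t, ht, -, hT, htw, -, h0⟩ := ent9OK_spec (List.all_eq_true.mp ents9_OK e he)
    refine htw ((bList_red hl t).mp ?_)
    have := congrFun h t
    rwa [mp_ofL] at this
  have hL_mem : ∀ b, b ∈ L ↔ ∃ e ∈ ents9, ∃ l ∈ bList e, ofL (ZMod 9) l = b := by
    intro b
    simp only [hL, List.mem_map, List.mem_flatMap]
    constructor
    · rintro ⟨l, ⟨e, he, hl⟩, rfl⟩; exact ⟨e, he, l, hl, rfl⟩
    · rintro ⟨e, he, l, hl, rfl⟩; exact ⟨l, ⟨e, he, hl⟩, rfl⟩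
  have h1 : ∀ b : Fin 24 → ZMod 9, (∑ c : Fin 24 → ZMod 243,
      if c ∈ code (ZMod 243) ∧ mp (Rd 3) c = ofL (ZMod 3) wordZ ∧ b ∈ code (ZMod 9) ∧ mp S3 b ≠ 0
        then term c b else 0) = if b ∈ L.toFinset then H b else 0 := by
    intro b
    by_cases hb : b ∈ L.toFinset
    · rw [if_pos hb]
      rw [List.mem_toFinset, hL_mem] at hb
      obtain ⟨e, he, l, hl, rfl⟩ := hb
      refine Finset.sum_congr rfl fun c _ => ?_
      have hm := bList_mem hl
      have h0 := hterm e he l hl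
      simp only [hm, h0, ne_eq, not_false_eq_true, and_true]
    · rw [if_neg hb]
      refine Finset.sum_eq_zero fun c _ => ?_
      split_ifs with h
      · obtain ⟨hc, hcZ, hbc, hb0⟩ := h
        by_contra hne
        have hD : Dj c b := by
          by_contra hD
          exact hne (by rw [term, if_neg hD])
        obtain ⟨e, he, hbe, l, hl, hbl⟩ := exists_class hbc (fun j hj => by
          refine (hD j).resolve_left fun h27 => hj ?_
          rw [← hcZ]; exact R3_of_R27 h27) hb0
        rcases List.mem_append.mp he with he | he
        · exact hb (List.mem_toFinset.mpr ((hL_mem b).mpr ⟨e, he, l, hl, hbl.symm⟩))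
        · exact not_Dj_ents12 he hc hcZ hbe hD
      · rfl
  rw [Finset.sum_congr rfl fun b _ => h1 b, Finset.sum_ite_mem, Finset.univ_inter,
    List.sum_toFinset _ (hL ▸ nodup_words), hL, sum_classes H (fun e he l hl => sum_word he hl),
    sum_types]

/-! ### The Fourier transform of the substitution -/

/-- The polynomial substituted for a coordinate with value `a`. -/
def phi (R : Type*) [CommRing R] (a : ZMod 243) : MvPolynomial (Fin 6) R :=
  if Rd 27 (by decide) a = 0 then
    if quo a = 0 then X 5 + 2 * X 4 + 6 * X 3
    else if 3 * quo a = 0 then X 5 + 2 * X 4 - 3 * X 3 else X 5 - X 4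
  else X (ex a 0)

/-- A faithful complex character of `ℤ/9`. -/
def psi : AddChar (ZMod 9) ℂ := ZMod.stdAddChar

lemma psi_ne_one {k : ZMod 9} (hk : k ≠ 0) : psi k ≠ 1 := by
  intro h
  apply hk
  apply ZMod.injective_stdAddChar (N := 9)
  rw [AddChar.map_zero_eq_one]
  exact h

lemma psi_natCast (n : ℕ) : psi (n : ZMod 9) = psi 1 ^ n := by
  rw [← AddChar.map_nsmul_eq_pow, nsmul_one]

lemma psi_one_cyclotomic : psi 1 ^ 6 + psi 1 ^ 3 + 1 = 0 := by
  have h9 : psi 1 ^ 9 = 1 := by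
    rw [← psi_natCast]; exact AddChar.map_zero_eq_one _
  have h3 : psi 1 ^ 3 ≠ 1 := by
    rw [← psi_natCast]; exact psi_ne_one (by decide)
  have : (psi 1 ^ 3 - 1) * (psi 1 ^ 6 + psi 1 ^ 3 + 1) = 0 := by linear_combination h9
  exact (mul_eq_zero.mp this).resolve_left (sub_ne_zero.mpr h3)

lemma psi_mul (j k : ZMod 9) : psi (j * k) = psi 1 ^ (j.val * k.val % 9) := by
  rw [← psi_natCast, ZMod.natCast_mod]
  push_cast
  rw [ZMod.natCast_zmod_val, ZMod.natCast_zmod_val]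

/-- The contribution of a coordinate pair to the Fourier expansion of `phi`. -/
def kern (a : ZMod 243) (β : ZMod 9) : MvPolynomial (Fin 6) ℂ :=
  if Rd 27 (by decide) a = 0 ∨ β = 0 then C (psi (β * quo a)) * X (ex a β) else 0

lemma sum_zmod9 {M : Type*} [AddCommMonoid M] (f : ZMod 9 → M) :
    ∑ β, f β = f 0 + f 1 + f 2 + f 3 + f 4 + f 5 + f 6 + f 7 + f 8 := by
  have h (g : Fin 9 → M) :
      ∑ β, g β = g 0 + g 1 + g 2 + g 3 + g 4 + g 5 + g 6 + g 7 + g 8 := by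
    rw [Fin.sum_univ_castSucc, Fin.sum_univ_eight]
    rfl
  exact h f

lemma val9 : (0 : ZMod 9).val = 0 ∧ (1 : ZMod 9).val = 1 ∧ (2 : ZMod 9).val = 2 ∧
    (3 : ZMod 9).val = 3 ∧ (4 : ZMod 9).val = 4 ∧ (5 : ZMod 9).val = 5 ∧ (6 : ZMod 9).val = 6 ∧
    (7 : ZMod 9).val = 7 ∧ (8 : ZMod 9).val = 8 := by decide

lemma sum_kern_aux (k : ZMod 9) :
    ∑ β : ZMod 9, C (psi (β * k)) *
      (X (if β = 0 then 5 else if S3 β = 0 then 4 else 3) : MvPolynomial (Fin 6) ℂ) =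
    if k = 0 then X 5 + 2 * X 4 + 6 * X 3
    else if 3 * k = 0 then X 5 + 2 * X 4 - 3 * X 3 else X 5 - X 4 := by
  have hz : (C (psi 1) : MvPolynomial (Fin 6) ℂ) ^ 6 + C (psi 1) ^ 3 + 1 = 0 := by
    have := congrArg (C (σ := Fin 6)) psi_one_cyclotomic
    simpa using this
  have n0 : ∀ k : ZMod 9, k = 0 ↔ k.val = 0 := by decide
  have nS : ∀ k : ZMod 9, S3 k = 0 ↔ k.val % 3 = 0 := by decide
  have n3 : ∀ k : ZMod 9, (3 * k).val = 0 ↔ k.val % 3 = 0 := by decide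
  obtain ⟨v0, v1, v2, v3, v4, v5, v6, v7, v8⟩ := val9
  simp only [sum_zmod9, psi_mul, map_pow, n0, nS, n3, v0, v1, v2, v3, v4,
    v5, v6, v7, v8]
  generalize (C (psi 1) : MvPolynomial (Fin 6) ℂ) = z at hz ⊢
  have hk : k.val < 9 := k.val_lt
  generalize k.val = n at hk ⊢
  interval_cases n <;> norm_num
  · ring
  · linear_combination (X 4 + X 3 * (z + z ^ 2)) * hz
  · linear_combination (X 4 + X 3 * (z + z ^ 2)) * hz
  · linear_combination (3 * X 3) * hz
  · linear_combination (X 4 + X 3 * (z + z ^ 2)) * hz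
  · linear_combination (X 4 + X 3 * (z + z ^ 2)) * hz
  · linear_combination (3 * X 3) * hz
  · linear_combination (X 4 + X 3 * (z + z ^ 2)) * hz
  · linear_combination (X 4 + X 3 * (z + z ^ 2)) * hz

lemma sum_units_psi (k : ZMod 9) :
    ∑ η ∈ ({1, 2, 4, 5, 7, 8} : Finset (ZMod 9)), psi (η * k) = 6 * (rho k : ℂ) := by
  have hz := psi_one_cyclotomic
  obtain ⟨-, v1, v2, -, v4, v5, -, v7, v8⟩ := val9
  rw [show ∑ η ∈ ({1, 2, 4, 5, 7, 8} : Finset (ZMod 9)), psi (η * k) = psi (1 * k) + psi (2 * k)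
      + psi (4 * k) + psi (5 * k) + psi (7 * k) + psi (8 * k) by
    rw [Finset.sum_insert (by decide), Finset.sum_insert (by decide),
      Finset.sum_insert (by decide), Finset.sum_insert (by decide),
      Finset.sum_insert (by decide), Finset.sum_singleton]
    ring]
  have n0 : ∀ k : ZMod 9, k = 0 ↔ k.val = 0 := by decide
  have n3 : ∀ k : ZMod 9, (3 * k).val = 0 ↔ k.val % 3 = 0 := by decide
  simp only [psi_mul, rho, n0, n3, v1, v2, v4, v5, v7, v8]
  generalize psi 1 = z at hz ⊢
  have hk : k.val < 9 := k.val_lt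
  generalize k.val = n at hk ⊢
  interval_cases n <;> norm_num
  · linear_combination (z + z ^ 2) * hz
  · linear_combination (z + z ^ 2) * hz
  · linear_combination 3 * hz
  · linear_combination (z + z ^ 2) * hz
  · linear_combination (z + z ^ 2) * hz
  · linear_combination 3 * hz
  · linear_combination (z + z ^ 2) * hz
  · linear_combination (z + z ^ 2) * hz

lemma sum_kern (a : ZMod 243) : ∑ β, kern a β = phi ℂ a := by
  by_cases h : Rd 27 (by decide) a = 0
  · rw [phi, if_pos h, ← sum_kern_aux]
    exact Finset.sum_congr rfl fun β _ => by rw [kern, if_pos (Or.inl h), ex, if_pos h]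
  · rw [phi, if_neg h, Finset.sum_eq_single 0]
    · rw [kern, if_pos (Or.inr rfl)]; simp
    · intro β _ hβ
      rw [kern, if_neg (by tauto)]
    · simp

/-- The summand of a pair of words before averaging over the units of `ℤ/9`. -/
def pairT (c : Fin 24 → ZMod 243) (b : Fin 24 → ZMod 9) : MvPolynomial (Fin 6) ℂ :=
  if Dj c b then C (psi (∑ j, b j * quo (c j))) * ∏ j, X (ex (c j) (b j)) else 0

lemma psi_sum (k : Fin 24 → ZMod 9) : psi (∑ j, k j) = ∏ j, psi (k j) := by
  induction (Finset.univ : Finset (Fin 24)) using Finset.induction_on with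
  | empty => simp
  | insert j s hj ih => rw [Finset.sum_insert hj, Finset.prod_insert hj, AddChar.map_add_eq_mul, ih]

lemma prod_kern (c : Fin 24 → ZMod 243) (b : Fin 24 → ZMod 9) :
    ∏ j, kern (c j) (b j) = pairT c b := by
  by_cases h : Dj c b
  · rw [pairT, if_pos h, psi_sum, map_prod, ← Finset.prod_mul_distrib]
    exact Finset.prod_congr rfl fun j _ => by rw [kern, if_pos (h j)]
  · rw [pairT, if_neg h]
    simp only [Dj, not_forall] at h
    obtain ⟨j, hj⟩ := h
    exact Finset.prod_eq_zero (Finset.mem_univ j) (by rw [kern, if_neg hj])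

lemma prod_phi (c : Fin 24 → ZMod 243) : ∏ j, phi ℂ (c j) = ∑ b, pairT c b := by
  simp only [← sum_kern, ← prod_kern]
  rw [Finset.prod_univ_sum, Fintype.piFinset_univ]

lemma pairT_add_27 (c d : Fin 24 → ZMod 243) (b : Fin 24 → ZMod 9) :
    pairT (c + (27 : ZMod 243) • d) b = C (psi (∑ j, b j * Rd 9 (by decide) (d j))) * pairT c b := by
  have h27 : Rd 27 (by decide) 27 = 0 := by
    have := R_natCast 27 (by decide) 27
    simp only [Nat.cast_ofNat] at this
    rw [this]; decide
  have hR : ∀ j, Rd 27 (by decide) ((c + (27 : ZMod 243) • d) j) = Rd 27 (by decide) (c j) := by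
    intro j; simp [h27]
  have hD : Dj (c + (27 : ZMod 243) • d) b ↔ Dj c b := by simp only [Dj, hR]
  have hE : ∀ j, ex ((c + (27 : ZMod 243) • d) j) (b j) = ex (c j) (b j) := by
    intro j
    have h3 : Rd 3 (by decide) 27 = 0 := by
      have := R_natCast 3 (by decide) 27
      simp only [Nat.cast_ofNat] at this
      rw [this]; decide
    have h9 : Rd 9 (by decide) 27 = 0 := by
      have := R_natCast 9 (by decide) 27
      simp only [Nat.cast_ofNat] at this
      rw [this]; decide
    simp only [ex, hR]
    simp [h3, h9]
  have hS : ∑ j, b j * quo ((c + (27 : ZMod 243) • d) j) =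
      ∑ j, b j * Rd 9 (by decide) (d j) + ∑ j, b j * quo (c j) := by
    rw [← Finset.sum_add_distrib]
    refine Finset.sum_congr rfl fun j _ => ?_
    rw [Pi.add_apply, Pi.smul_apply, smul_eq_mul, quo_add, mul_add, add_comm]
  simp only [pairT, hD, hE, hS, AddChar.map_add_eq_mul, map_mul]
  split_ifs
  · ring
  · rw [mul_zero]

/-- Orthogonality of characters: the words `b` outside the dual code contribute nothing. -/
lemma sum_pairT_eq_zero {b : Fin 24 → ZMod 9} (hb : b ∉ code (ZMod 9)) :
    ∑ c : Fin 24 → ZMod 243, (if c ∈ code (ZMod 243) then pairT c b else 0) = 0 := by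
  simp only [mem_code, not_forall] at hb
  obtain ⟨i, hi⟩ := hb
  have hd : row (ZMod 243) genL i ∈ code (ZMod 243) := isInfo_mem h243 isInfo_genL i
  generalize hdd : row (ZMod 243) genL i = d at hd
  have hs : ∑ j, b j * Rd 9 (by decide) (d j) ≠ 0 := by
    intro h0
    apply hi
    rw [← h0]
    refine Finset.sum_congr rfl fun j _ => ?_
    rw [mul_comm, ← hdd, ← mp_row (Rd 9) genL i]
    rfl
  have key : ∑ c : Fin 24 → ZMod 243, (if c ∈ code (ZMod 243) then pairT c b else 0) =
      C (psi (∑ j, b j * Rd 9 (by decide) (d j))) *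
        ∑ c : Fin 24 → ZMod 243, (if c ∈ code (ZMod 243) then pairT c b else 0) := by
    refine (Equiv.sum_comp (Equiv.addRight ((27 : ZMod 243) • d)) _).symm.trans ?_
    rw [Finset.mul_sum]
    refine Finset.sum_congr rfl fun c _ => ?_
    rw [Equiv.coe_addRight, pairT_add_27]
    have : c + (27 : ZMod 243) • d ∈ code (ZMod 243) ↔ c ∈ code (ZMod 243) :=
      Submodule.add_mem_iff_left _ (Submodule.smul_mem _ _ hd)
    simp only [this]
    split_ifs
    · rfl
    · rw [mul_zero]
  generalize ∑ c : Fin 24 → ZMod 243, (if c ∈ code (ZMod 243) then pairT c b else 0) = S at key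
  have h1 : (C (psi (∑ j, b j * Rd 9 (by decide) (d j)) - 1) : MvPolynomial (Fin 6) ℂ) * S = 0 := by
    rw [map_sub, sub_mul, ← key, C_1, one_mul, sub_self]
  refine (mul_eq_zero.mp h1).resolve_left ?_
  exact fun h => sub_ne_zero.mpr (psi_ne_one hs) (C_eq_zero.mp h)

lemma sum_units_pairT (c : Fin 24 → ZMod 243) (b : Fin 24 → ZMod 9) :
    ∑ η ∈ ({1, 2, 4, 5, 7, 8} : Finset (ZMod 9)), pairT c (η • b) =
      6 * map (algebraMap ℚ ℂ) (term c b) := by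
  have hu : ∀ η ∈ ({1, 2, 4, 5, 7, 8} : Finset (ZMod 9)), IsUnit η := by
    have : ∀ η ∈ ({1, 2, 4, 5, 7, 8} : Finset (ZMod 9)), η ^ 6 = 1 := by decide
    exact fun η h => IsUnit.of_pow_eq_one (this η h) (by norm_num)
  have h1 : ∀ η ∈ ({1, 2, 4, 5, 7, 8} : Finset (ZMod 9)), pairT c (η • b) =
      if Dj c b then C (psi (η * ∑ j, b j * quo (c j))) * ∏ j, X (ex (c j) (b j)) else 0 := by
    intro η hη
    have hD : Dj c (η • b) ↔ Dj c b := by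
      simp only [Dj, Pi.smul_apply, smul_eq_mul, (hu η hη).mul_right_eq_zero]
    have hE : ∀ j, ex (c j) ((η • b) j) = ex (c j) (b j) := fun j => by
      have := ex_mul isUnit_one (hu η hη) (c j) (b j)
      rwa [one_mul] at this
    have hS : ∑ j, (η • b) j * quo (c j) = η * ∑ j, b j * quo (c j) := by
      rw [Finset.mul_sum]
      exact Finset.sum_congr rfl fun j _ => mul_assoc _ _ _
    simp only [pairT, hD, hE, hS]
  rw [Finset.sum_congr rfl h1, term]
  split_ifs
  · rw [← Finset.sum_mul, ← map_sum, sum_units_psi]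
    simp only [map_X, map_mul, map_C, map_prod, eq_ratCast, map_ofNat]
    rw [mul_assoc]
  · simp

/-- The substituted enumerator as a sum over pairs of code words. -/
lemma sum_phi :
    ∑ c : Fin 24 → ZMod 243, (if c ∈ code (ZMod 243) then ∏ j, phi ℚ (c j) else 0) =
      ∑ c : Fin 24 → ZMod 243, ∑ b : Fin 24 → ZMod 9,
        if c ∈ code (ZMod 243) ∧ b ∈ code (ZMod 9) then term c b else 0 := by
  apply map_injective (algebraMap ℚ ℂ) (algebraMap ℚ ℂ).injective
  have hphi : ∀ a, map (algebraMap ℚ ℂ) (phi ℚ a) = phi ℂ a := by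
    intro a
    simp only [phi]
    split_ifs <;> simp
  have hC : ∀ (p : Prop) (q : MvPolynomial (Fin 6) ℚ), map (algebraMap ℚ ℂ) (if p then q else 0) =
      if p then map (algebraMap ℚ ℂ) q else 0 := by
    intro p q; split_ifs <;> simp
  simp only [map_sum, hC, map_prod, hphi]
  have h6 : (6 : MvPolynomial (Fin 6) ℂ) ≠ 0 := by norm_num
  apply mul_left_cancel₀ h6
  have e1 : ∑ c : Fin 24 → ZMod 243, (if c ∈ code (ZMod 243) then ∏ j, phi ℂ (c j) else 0) =
      ∑ b : Fin 24 → ZMod 9, ∑ c : Fin 24 → ZMod 243,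
        if c ∈ code (ZMod 243) ∧ b ∈ code (ZMod 9) then pairT c b else 0 := by
    have : ∀ c : Fin 24 → ZMod 243, (if c ∈ code (ZMod 243) then ∏ j, phi ℂ (c j) else 0) =
        ∑ b : Fin 24 → ZMod 9, if c ∈ code (ZMod 243) then pairT c b else 0 := by
      intro c
      rw [prod_phi]
      split_ifs
      · rfl
      · simp only [Finset.sum_const_zero]
    simp only [this]
    rw [Finset.sum_comm]
    refine Finset.sum_congr rfl fun b _ => ?_
    by_cases hb : b ∈ code (ZMod 9)
    · simp only [hb, and_true]
    · simp only [hb, and_false, if_false, Finset.sum_const_zero]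
      exact sum_pairT_eq_zero hb
  have e2 : ∀ η ∈ ({1, 2, 4, 5, 7, 8} : Finset (ZMod 9)),
      ∑ b : Fin 24 → ZMod 9, ∑ c : Fin 24 → ZMod 243,
        (if c ∈ code (ZMod 243) ∧ b ∈ code (ZMod 9) then pairT c b else 0) =
      ∑ b : Fin 24 → ZMod 9, ∑ c : Fin 24 → ZMod 243,
        if c ∈ code (ZMod 243) ∧ b ∈ code (ZMod 9) then pairT c (η • b) else 0 := by
    intro η hη
    have hu : IsUnit η := by
      have : ∀ η ∈ ({1, 2, 4, 5, 7, 8} : Finset (ZMod 9)), η ^ 6 = 1 := by decide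
      exact IsUnit.of_pow_eq_one (this η hη) (by norm_num)
    obtain ⟨u, rfl⟩ := hu
    rw [← Equiv.sum_comp (MulAction.toPerm u : Equiv.Perm (Fin 24 → ZMod 9))]
    refine Finset.sum_congr rfl fun b _ => Finset.sum_congr rfl fun c _ => ?_
    have h1 : (MulAction.toPerm u : Equiv.Perm (Fin 24 → ZMod 9)) b = (u : ZMod 9) • b := rfl
    have h2 : (u : ZMod 9) • b ∈ code (ZMod 9) ↔ b ∈ code (ZMod 9) :=
      Submodule.smul_mem_iff_of_isUnit _ u.isUnit
    rw [h1]
    simp only [h2]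
  have hcard : ({1, 2, 4, 5, 7, 8} : Finset (ZMod 9)).card = 6 := by decide
  have e3 := Finset.sum_congr (rfl : ({1, 2, 4, 5, 7, 8} : Finset (ZMod 9)) = _) e2
  rw [Finset.sum_const, hcard, nsmul_eq_mul, Nat.cast_ofNat, ← e1] at e3
  rw [e3, Finset.sum_comm, Finset.sum_comm (s := Finset.univ (α := Fin 24 → ZMod 243)),
    Finset.mul_sum]
  refine Finset.sum_congr rfl fun b _ => ?_
  rw [Finset.sum_comm, Finset.mul_sum]
  refine Finset.sum_congr rfl fun c _ => ?_
  by_cases h : c ∈ code (ZMod 243) ∧ b ∈ code (ZMod 9)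
  · simp only [if_pos h]
    exact sum_units_pairT c b
  · simp only [if_neg h, Finset.sum_const_zero, map_zero, mul_zero]

/-! ### Selecting the monomials divisible by `x_0 y_0` -/

lemma coeff_divPart {σ : Type*} (A : MvPolynomial σ ℚ) (i j : σ) (d : σ →₀ ℕ) :
    coeff d (divPart A i j) = if d i ≠ 0 ∧ d j ≠ 0 then coeff d A else 0 := by
  rw [divPart, coeff_sum]
  simp only [coeff_monomial]
  rw [Finset.sum_ite_eq']
  by_cases hd : coeff d A = 0 <;> simp [hd]

lemma divPart_sum {σ ι : Type*} (s : Finset ι) (A : ι → MvPolynomial σ ℚ) (i j : σ) :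
    divPart (∑ k ∈ s, A k) i j = ∑ k ∈ s, divPart (A k) i j := by
  ext d
  simp only [coeff_divPart, coeff_sum]
  split_ifs
  · rfl
  · simp

lemma divPart_smul {σ : Type*} (q : ℚ) (A : MvPolynomial σ ℚ) (i j : σ) :
    divPart (q • A) i j = q • divPart A i j := by
  ext d
  simp only [coeff_divPart, coeff_smul]
  split_ifs <;> simp

lemma divPart_zero {σ : Type*} (i j : σ) : divPart (0 : MvPolynomial σ ℚ) i j = 0 := by
  ext d
  simp [coeff_divPart]

lemma divPart_prod_X {σ : Type*} (q : ℚ) (e : Fin 24 → σ) (i j : σ) :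
    divPart (C q * ∏ k, X (e k)) i j =
      if (∃ k, e k = i) ∧ (∃ k, e k = j) then C q * ∏ k, X (e k) else 0 := by
  have hm : C q * ∏ k, (X (e k) : MvPolynomial σ ℚ) = monomial (∑ k, Finsupp.single (e k) 1) q := by
    rw [monomial_sum_index]
    rfl
  have hx : ∀ i, (∑ k, Finsupp.single (e k) 1 : σ →₀ ℕ) i ≠ 0 ↔ ∃ k, e k = i := by
    intro i
    rw [Finsupp.finsetSum_apply]
    simp [Finsupp.single_apply]
  rw [hm]
  ext d
  simp only [coeff_divPart, ← hx]
  by_cases hd : ∑ k, Finsupp.single (e k) 1 = d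
  · subst hd
    split_ifs <;> simp
  · rw [coeff_monomial, if_neg hd]
    split_ifs <;> simp [coeff_monomial, hd]

lemma exists_ex_zero (c : Fin 24 → ZMod 243) (b : Fin 24 → ZMod 9) :
    (∃ k, ex (c k) (b k) = 0) ↔ mp (Rd 3) c ≠ 0 := by
  have h : ∀ a β, ex a β = 0 ↔ Rd 3 (by decide) a ≠ 0 := by
    intro a β
    have h27 : Rd 27 (by decide) a = 0 → Rd 3 (by decide) a = 0 := by
      intro h
      obtain ⟨d, rfl⟩ := exists_of_R27 h
      have := R_natCast 3 (by decide) 27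
      simp only [Nat.cast_ofNat] at this
      rw [map_mul, this]
      exact mul_eq_zero_of_left (by decide) _
    simp only [ex]
    split_ifs <;> simp_all
  simp only [h]
  rw [Ne, funext_iff, not_forall]
  rfl

lemma exists_ex_three {c : Fin 24 → ZMod 243} {b : Fin 24 → ZMod 9} (hD : Dj c b) :
    (∃ k, ex (c k) (b k) = 3) ↔ mp S3 b ≠ 0 := by
  have h : ∀ k, ex (c k) (b k) = 3 ↔ S3 (b k) ≠ 0 := by
    intro k
    have := hD k
    simp only [ex]
    split_ifs <;> simp_all
  simp only [h]
  rw [Ne, funext_iff, not_forall]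
  rfl

lemma divPart_term (c : Fin 24 → ZMod 243) (b : Fin 24 → ZMod 9) :
    divPart (term c b) 0 3 = if mp (Rd 3) c ≠ 0 ∧ mp S3 b ≠ 0 then term c b else 0 := by
  rw [term]
  split_ifs with hD h h
  · rw [divPart_prod_X, if_pos]
    rwa [exists_ex_zero, exists_ex_three hD]
  · rw [divPart_prod_X, if_neg]
    rwa [exists_ex_zero, exists_ex_three hD]
  · exact divPart_zero _ _
  · exact divPart_zero _ _

lemma divPart_sum_phi :
    divPart (∑ c : Fin 24 → ZMod 243,
      (if c ∈ code (ZMod 243) then ∏ j, phi ℚ (c j) else 0)) 0 3 =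
    4048 * Fsum (ofL (ZMod 3) wordZ) := by
  rw [sum_phi, ← sum_Fsum, divPart_sum]
  have hw : ∀ w : Fin 24 → ZMod 3, (if w ∈ code (ZMod 3) ∧ w ≠ 0 then Fsum w else 0) =
      ∑ c : Fin 24 → ZMod 243, ∑ b : Fin 24 → ZMod 9,
        if mp (Rd 3) c = w then
          (if c ∈ code (ZMod 243) ∧ mp (Rd 3) c ≠ 0 ∧ b ∈ code (ZMod 9) ∧ mp S3 b ≠ 0 then
            term c b else 0) else 0 := by
    intro w
    rw [Fsum]
    by_cases h : w ∈ code (ZMod 3) ∧ w ≠ 0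
    · rw [if_pos h]
      refine Finset.sum_congr rfl fun c _ => Finset.sum_congr rfl fun b _ => ?_
      by_cases hc : mp (Rd 3) c = w
      · have : mp (Rd 3) c ≠ 0 := hc ▸ h.2
        simp only [hc, h.2, true_and, ne_eq, not_false_eq_true, if_true]
      · simp only [hc, false_and, and_false, if_false]
    · rw [if_neg h]
      symm
      refine Finset.sum_eq_zero fun c _ => Finset.sum_eq_zero fun b _ => ?_
      split_ifs with h1 h2
      · exfalso
        apply h
        rw [← h1]
        exact ⟨mp_code _ h2.1, h2.2.1⟩
      · rfl
      · rfl
  simp only [hw]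
  rw [Finset.sum_comm]
  refine Finset.sum_congr rfl fun c _ => ?_
  rw [divPart_sum, Finset.sum_comm]
  refine Finset.sum_congr rfl fun b _ => ?_
  rw [Finset.sum_ite_eq, if_pos (Finset.mem_univ _)]
  by_cases h : c ∈ code (ZMod 243) ∧ b ∈ code (ZMod 9)
  · rw [if_pos h, divPart_term]
    exact if_congr ⟨fun h' => ⟨h.1, h'.1, h.2, h'.2⟩, fun h' => ⟨h'.2.1, h'.2.2.2⟩⟩ rfl rfl
  · rw [if_neg h, if_neg fun h' => h ⟨h'.1, h'.2.2.1⟩, divPart_zero]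

/-! ### The enumerator as a sum of products over coordinates -/

/-- The index of the enumerator variable recording a coordinate with value `a`. -/
def vidx (a : ZMod 243) : Fin 6 :=
  if a.val % 3 ≠ 0 then 0 else if a.val % 9 ≠ 0 then 1 else if a.val % 27 ≠ 0 then 2
  else if a.val % 81 ≠ 0 then 3 else if a.val ≠ 0 then 4 else 5

lemma padicValNat_three_eq {n : ℕ} (hn : n ≠ 0) (i : ℕ) :
    padicValNat 3 n = i ↔ n % 3 ^ i = 0 ∧ n % 3 ^ (i + 1) ≠ 0 := by
  have : Fact (Nat.Prime 3) := ⟨Nat.prime_three⟩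
  rw [← Nat.dvd_iff_mod_eq_zero, Ne, ← Nat.dvd_iff_mod_eq_zero, padicValNat_dvd_iff_le hn,
    padicValNat_dvd_iff_le hn]
  omega

lemma vidx_eq_castSucc (a : ZMod 243) (i : Fin 5) :
    (a ≠ 0 ∧ padicValNat 3 a.val = (i : ℕ)) ↔ vidx a = Fin.castSucc i := by
  have ha := a.val_lt
  have h0 : a = 0 ↔ a.val = 0 := (ZMod.val_eq_zero a).symm
  rw [Ne, h0]
  simp only [vidx]
  generalize a.val = n at ha
  by_cases hn : n = 0
  · subst hn
    fin_cases i <;> simp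
  · rw [padicValNat_three_eq hn]
    fin_cases i <;> norm_num <;> split_ifs <;> simp <;> omega

lemma vidx_eq_last (a : ZMod 243) : a = 0 ↔ vidx a = Fin.last 5 := by
  have ha := a.val_lt
  have h0 : a = 0 ↔ a.val = 0 := (ZMod.val_eq_zero a).symm
  rw [h0]
  simp only [vidx]
  generalize a.val = n at ha
  split_ifs <;> simp <;> omega

lemma phi_eq_vidx (a : ZMod 243) :
    phi ℚ a = (![X 0, X 1, X 2, X 5 - X 4, X 5 + 2 * X 4 - 3 * X 3, X 5 + 2 * X 4 + 6 * X 3] :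
      Fin 6 → MvPolynomial (Fin 6) ℚ) (vidx a) := by
  have ha := a.val_lt
  have hR : ∀ m (h : m ∣ 243), Rd m h a = 0 ↔ a.val % m = 0 := by
    intro m h
    conv_lhs => rw [← ZMod.natCast_zmod_val a]
    rw [R_natCast, ZMod.natCast_eq_zero_iff, Nat.dvd_iff_mod_eq_zero]
  have hq : quo a = 0 ↔ (a.val / 27) % 9 = 0 := by
    rw [quo, ZMod.natCast_eq_zero_iff, Nat.dvd_iff_mod_eq_zero]
  have hq3 : 3 * quo a = 0 ↔ (3 * (a.val / 27)) % 9 = 0 := by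
    rw [quo, ← Nat.dvd_iff_mod_eq_zero, ← ZMod.natCast_eq_zero_iff]
    push_cast
    rfl
  simp only [phi, ex, hR, hq, hq3, vidx, ne_eq]
  generalize a.val = n at ha
  split_ifs <;> first | rfl | (exfalso; omega)

lemma aeval_swe (D : Submodule (ZMod 243) (Fin 24 → ZMod 243)) :
    aeval (![X 0, X 1, X 2, X 5 - X 4, X 5 + 2 * X 4 - 3 * X 3, X 5 + 2 * X 4 + 6 * X 3] :
      Fin 6 → MvPolynomial (Fin 6) ℚ) (swe 3 5 D) =
    ∑ c : Fin 24 → ZMod 243, if c ∈ D then ∏ j, phi ℚ (c j) else 0 := by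
  simp only [phi_eq_vidx]
  generalize (![X 0, X 1, X 2, X 5 - X 4, X 5 + 2 * X 4 - 3 * X 3, X 5 + 2 * X 4 + 6 * X 3] :
      Fin 6 → MvPolynomial (Fin 6) ℚ) = v
  rw [swe, map_sum]
  refine Finset.sum_congr rfl fun c _ => ?_
  by_cases hc : c ∈ D
  · rw [if_pos hc, if_pos hc, map_mul, map_prod]
    simp only [map_pow, aeval_X, vidx_eq_castSucc, vidx_eq_last]
    rw [← Fin.prod_univ_castSucc
      (fun i : Fin 6 => v i ^ (Finset.univ.filter fun j => vidx (c j) = i).card),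
      ← Finset.prod_fiberwise Finset.univ (fun j => vidx (c j)) fun j => v (vidx (c j))]
    refine Finset.prod_congr rfl fun i _ => ?_
    rw [← Finset.prod_const]
    refine Finset.prod_congr rfl fun j hj => ?_
    rw [(Finset.mem_filter.mp hj).2]
  · rw [if_neg hc, if_neg hc, map_zero]

lemma phi_mul {u : ZMod 243} (hu : IsUnit u) (a : ZMod 243) : phi ℚ (u * a) = phi ℚ a := by
  have h1 : ex (u * a) 0 = ex a 0 := by
    have := ex_mul hu isUnit_one a 0
    rwa [mul_zero] at this
  simp only [phi, map_mul, (hu.map (Rd 27)).mul_right_eq_zero, h1]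
  by_cases h : Rd 27 (by decide) a = 0
  · rw [if_pos h, if_pos h, quo_mul _ h, mul_left_comm]
    simp only [(hu.map (Rd 9)).mul_right_eq_zero]
  · rw [if_neg h, if_neg h]

/-- The substituted enumerator of a monomially equivalent code. -/
lemma sum_phi_congr (D : Submodule (ZMod 243) (Fin 24 → ZMod 243)) (π : Equiv.Perm (Fin 24))
    (u : Fin 24 → (ZMod 243)ˣ)
    (h : ∀ c, c ∈ D ↔ (fun j => (u j : ZMod 243) * c (π j)) ∈ code (ZMod 243)) :
    ∑ c : Fin 24 → ZMod 243, (if c ∈ D then ∏ j, phi ℚ (c j) else 0) =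
      ∑ c : Fin 24 → ZMod 243, if c ∈ code (ZMod 243) then ∏ j, phi ℚ (c j) else 0 := by
  let T : (Fin 24 → ZMod 243) ≃ (Fin 24 → ZMod 243) :=
    { toFun := fun c j => u j * c (π j)
      invFun := fun c j => (u (π.symm j))⁻¹ * c (π.symm j)
      left_inv := fun c => by funext j; simp
      right_inv := fun c => by funext j; simp }
  rw [← Equiv.sum_comp T fun c => if c ∈ code (ZMod 243) then ∏ j, phi ℚ (c j) else 0]
  refine Finset.sum_congr rfl fun c _ => ?_
  refine if_congr (h c) ?_ rfl
  rw [← Equiv.prod_comp π]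
  exact Finset.prod_congr rfl fun j _ => (phi_mul (u j).isUnit _).symm

/-! ### The two cyclic codes -/

/-- The coefficients of one of the two factors of degree 11 of `x^23 - 1` over `ℤ/243`, constant
term first. -/
def polP : List ℕ := [242, 149, 152, 4, 97, 189, 185, 90, 239, 147, 150, 1]

/-- The coefficients of the other factor of degree 11, which is minus the reciprocal polynomial. -/
def polQ : List ℕ := [242, 93, 96, 4, 153, 58, 54, 146, 239, 91, 94, 1]

/-- The coefficients of the inverse power series of `polP` modulo `x^12`. -/
def invP : List ℕ := [242, 94, 3, 151, 149, 148, 239, 92, 93, 95, 3, 150]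

/-- The shifts of `polP`, extended by their parity coordinates multiplied by 13. -/
def rowsP : List (List ℕ) :=
  (List.range 12).map fun i => List.replicate i 0 ++ polP ++ List.replicate (11 - i) 0 ++ [242]

/-- The shifts of `invP`: the coordinates of the rows of `genL` with respect to `rowsP`. -/
def coordP : List (List ℕ) :=
  (List.range 12).map fun k => List.replicate k 0 ++ invP.take (12 - k)

lemma rowsP_inCode : rowsP.all inCode = true := by decide +kernel

lemma genL_coordP : ((List.range 12).all fun k =>
    eqModL 243 (genL.getD k []) (combL (coordP.getD k []) rowsP)) = true := by decide +kernel

lemma rowsP_length : rowsP.length = 12 := rfl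

lemma mem_code_iff_rowsP (c : Fin 24 → ZMod 243) :
    c ∈ code (ZMod 243) ↔ ∃ q : Fin 12 → ZMod 243, c = ∑ i, q i • row (ZMod 243) rowsP i := by
  constructor
  · intro hc
    have hg : ∀ k : Fin 12, row (ZMod 243) genL k =
        ∑ i : Fin 12, (((coordP.getD k []).getD i 0 : ℕ) : ZMod 243) • row (ZMod 243) rowsP i := by
      intro k
      rw [← ofL_combL _ 12 _ _ rowsP_length]
      refine ofL_eq_of_eqModL h243 ?_
      have := genL_coordP
      rw [List.all_eq_true] at this
      exact this k (List.mem_range.mpr k.2)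
    refine ⟨fun i => ∑ k : Fin 12, c (Fin.castAdd 12 k) *
      (((coordP.getD k []).getD i 0 : ℕ) : ZMod 243), ?_⟩
    conv_lhs => rw [code_eq_genL h243 hc]
    simp only [hg, Finset.smul_sum, Finset.sum_smul, smul_smul]
    exact Finset.sum_comm
  · rintro ⟨q, rfl⟩
    refine Submodule.sum_mem _ fun i _ => Submodule.smul_mem _ _ (ofL_mem_code h243 ?_)
    have := rowsP_inCode
    rw [List.all_eq_true] at this
    apply this
    rw [List.getD_eq_getElem _ _ (by rw [rowsP_length]; exact i.2)]
    exact List.getElem_mem _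

/-- The polynomial of degree at most 11 with given coefficients. -/
def pol (A : Type*) [CommRing A] (l : List ℕ) : Polynomial A :=
  ∑ k ∈ Finset.range 12, Polynomial.C ((l.getD k 0 : ℕ) : A) * Polynomial.X ^ k

lemma coeff_pol (A : Type*) [CommRing A] (l : List ℕ) (n : ℕ) :
    (pol A l).coeff n = if n < 12 then ((l.getD n 0 : ℕ) : A) else 0 := by
  simp [pol, Polynomial.finsetSum_coeff, Polynomial.coeff_X_pow]

lemma map_pol {A B : Type*} [CommRing A] [CommRing B] (f : A →+* B) (l : List ℕ) :
    (pol A l).map f = pol B l := by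
  ext n
  simp only [Polynomial.coeff_map, coeff_pol]
  split_ifs <;> simp

lemma natDegree_pol_le (A : Type*) [CommRing A] (l : List ℕ) : (pol A l).natDegree ≤ 11 := by
  rw [Polynomial.natDegree_le_iff_coeff_eq_zero]
  intro n hn
  rw [coeff_pol, if_neg (by omega)]

lemma monic_pol (A : Type*) [CommRing A] {l : List ℕ} (h : l.getD 11 0 = 1) : (pol A l).Monic :=
  Polynomial.monic_of_natDegree_le_of_coeff_eq_one 11 (natDegree_pol_le A l)
    (by rw [coeff_pol, if_pos (by norm_num), h, Nat.cast_one])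

lemma natDegree_pol (A : Type*) [CommRing A] [Nontrivial A] {l : List ℕ} (h : l.getD 11 0 = 1) :
    (pol A l).natDegree = 11 :=
  Polynomial.natDegree_eq_of_le_of_coeff_ne_zero (natDegree_pol_le A l)
    (by rw [coeff_pol, if_pos (by norm_num), h, Nat.cast_one]; exact one_ne_zero)

lemma eval_pol (A : Type*) [CommRing A] (l : List ℕ) :
    (pol A l).eval 1 = ((∑ k ∈ Finset.range 12, l.getD k 0 : ℕ) : A) := by
  simp [pol, Polynomial.eval_finsetSum]

/-- The factorization of `x^23 - 1` modulo 243. -/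
lemma factor_243 : (Polynomial.X ^ 23 - 1 : Polynomial (ZMod 243)) =
    (Polynomial.X - 1) * pol (ZMod 243) polP * pol (ZMod 243) polQ := by
  have h : (243 : Polynomial (ZMod 243)) = 0 := by
    have := congrArg (Polynomial.C) h243
    rwa [map_natCast, map_zero, Nat.cast_ofNat] at this
  simp only [pol, polP, polQ, Finset.sum_range_succ, Finset.sum_range_zero, List.getD_cons_zero,
    List.getD_cons_succ, Nat.cast_ofNat, Nat.cast_one, map_ofNat, map_one, zero_add]
  generalize (Polynomial.X : Polynomial (ZMod 243)) = x
  linear_combination (-(-241 * 1 - 63 * x ^ 2 + 179 * x ^ 3 - 188 * x ^ 4 - 68 * x ^ 5 - 99 * x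
    ^ 6 + 26 * x ^ 7 - 318 * x ^ 8 + 24 * x ^ 9 - 38 * x ^ 10 + 345 * x ^ 11 - 104 * x ^ 12 + 37 *
    x ^ 13 - 19 * x ^ 14 + 83 * x ^ 15 - 19 * x ^ 16 + 103 * x ^ 17 + 64 * x ^ 18 + 181 * x ^ 19 +
    56 * x ^ 20 + 58 * x ^ 21 + 1 * x ^ 22)) * h

lemma factor_3 : (Polynomial.X ^ 23 - 1 : Polynomial (ZMod 3)) =
    (Polynomial.X - 1) * pol (ZMod 3) polP * pol (ZMod 3) polQ := by
  have := congrArg (Polynomial.map (ZMod.castHom (by norm_num : 3 ∣ 243) (ZMod 3))) factor_243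
  simpa [map_pol] using this

lemma pol_ne : pol (ZMod 3) polP ≠ pol (ZMod 3) polQ := by
  intro h
  have := congrArg (fun f => Polynomial.coeff f 1) h
  simp only [coeff_pol] at this
  revert this
  simp only [polP, polQ]
  norm_num
  decide

/-- Coprimality lifts along the reduction modulo 3. -/
lemma isCoprime_of_map {f h : Polynomial (ZMod 243)} (hpN : (3 : ℕ) ∣ 243)
    (hc : IsCoprime (f.map (ZMod.castHom hpN (ZMod 3))) (h.map (ZMod.castHom hpN (ZMod 3)))) :
    IsCoprime f h := by
  obtain ⟨a, b, hab⟩ := hc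
  have hs := Polynomial.map_surjective _ (ZMod.castHom_surjective hpN)
  obtain ⟨a, rfl⟩ := hs a
  obtain ⟨b, rfl⟩ := hs b
  have hn : IsNilpotent (a * f + b * h - 1) := by
    rw [Polynomial.isNilpotent_iff]
    intro i
    have h0 : ZMod.castHom hpN (ZMod 3) ((a * f + b * h - 1).coeff i) = 0 := by
      rw [← Polynomial.coeff_map]
      simp only [Polynomial.map_sub, Polynomial.map_add, Polynomial.map_mul, hab,
        Polynomial.map_one, sub_self, Polynomial.coeff_zero]
    generalize (a * f + b * h - 1).coeff i = y at h0
    obtain ⟨n, rfl⟩ := ZMod.natCast_zmod_surjective y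
    rw [map_natCast, ZMod.natCast_eq_zero_iff] at h0
    obtain ⟨m, rfl⟩ := h0
    refine ⟨5, ?_⟩
    have : ((3 * m : ℕ) : ZMod 243) ^ 5 = ((243 : ℕ) : ZMod 243) * (m : ZMod 243) ^ 5 := by
      push_cast; ring
    rw [this, h243, zero_mul]
  have hu : IsUnit (a * f + b * h) := by
    have := hn.isUnit_one_add
    rwa [add_sub_cancel] at this
  obtain ⟨v, hv⟩ := hu.exists_right_inv
  exact ⟨v * a, v * b, by linear_combination hv⟩

/-- Uniqueness of the Hensel lift. -/
lemma lift_unique {g : Polynomial (ZMod 3)} {g5 P Q : Polynomial (ZMod 243)} (hpN : (3 : ℕ) ∣ 243)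
    (hirr : Irreducible g) (hdeg : g.natDegree = 11) (hm : g5.Monic) (hd5 : g5.natDegree = 11)
    (hmap : g5.map (ZMod.castHom hpN (ZMod 3)) = g) (hdvd : g5 ∣ (Polynomial.X - 1) * P * Q)
    (hP : P.Monic) (hPd : P.natDegree = 11) (hQm : Q.Monic) (hQd : Q.natDegree = 11)
    (hgm : g.Monic) (hQ : g ≠ Q.map (ZMod.castHom hpN (ZMod 3))) : g5 = P := by
  have : Fact (Nat.Prime 3) := ⟨Nat.prime_three⟩
  have hX : ¬ g ∣ Polynomial.X - 1 := by
    intro h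
    have h1 : (Polynomial.X - 1 : Polynomial (ZMod 3)) = Polynomial.X - Polynomial.C 1 := by simp
    have := Polynomial.natDegree_le_of_dvd h (by rw [h1]; exact Polynomial.X_sub_C_ne_zero _)
    rw [h1, Polynomial.natDegree_X_sub_C, hdeg] at this
    omega
  have hgQ : ¬ g ∣ Q.map (ZMod.castHom hpN (ZMod 3)) := by
    intro h
    apply hQ
    exact (Polynomial.eq_of_monic_of_dvd_of_natDegree_le hgm (hQm.map _) h
      (by rw [hQm.natDegree_map, hQd, hdeg])).symm
  have hco : IsCoprime g5 ((Polynomial.X - 1) * Q) := by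
    apply isCoprime_of_map hpN
    rw [hmap, hirr.coprime_iff_not_dvd, Polynomial.map_mul, hirr.prime.dvd_mul]
    simpa [hgQ] using hX
  have hdP : g5 ∣ P := by
    apply hco.dvd_of_dvd_mul_left
    rwa [mul_right_comm] at hdvd
  exact (Polynomial.eq_of_monic_of_dvd_of_natDegree_le hm hP hdP (by rw [hPd, hd5])).symm

lemma g5_cases {g : Polynomial (ZMod 3)} (hg : IsQRFactor 3 g) {g5 : Polynomial (ZMod 243)}
    (hpN : (3 : ℕ) ∣ 243) (hm : g5.Monic) (hd5 : g5.natDegree = 11)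
    (hmap : g5.map (ZMod.castHom hpN (ZMod 3)) = g) (hdvd : g5 ∣ Polynomial.X ^ 23 - 1) :
    g5 = pol (ZMod 243) polP ∨ g5 = pol (ZMod 243) polQ := by
  have : Fact (Nat.Prime 3) := ⟨Nat.prime_three⟩
  have : Nontrivial (ZMod 243) := ZMod.nontrivial_iff.mpr (by norm_num)
  obtain ⟨hgm, hdeg, hirr, -⟩ := hg
  by_cases h : g = pol (ZMod 3) polQ
  · right
    rw [factor_243, mul_right_comm] at hdvd
    refine lift_unique hpN hirr hdeg hm hd5 hmap hdvd (monic_pol _ rfl) (natDegree_pol _ rfl)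
      (monic_pol _ rfl) (natDegree_pol _ rfl) hgm ?_
    rw [map_pol, h]
    exact pol_ne.symm
  · left
    rw [factor_243] at hdvd
    refine lift_unique hpN hirr hdeg hm hd5 hmap hdvd (monic_pol _ rfl) (natDegree_pol _ rfl)
      (monic_pol _ rfl) (natDegree_pol _ rfl) hgm ?_
    rwa [map_pol]

/-- The shift of a generator polynomial by `x^i`, extended by its parity coordinate. -/
def rowG (f : Polynomial (ZMod 243)) (i : ℕ) : Fin 24 → ZMod 243 :=
  Fin.snoc (α := fun _ => ZMod 243) (fun j : Fin 23 => (Polynomial.X ^ i * f).coeff j)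
    (-f.eval 1)

lemma sum_coeff_eq_eval {h : Polynomial (ZMod 243)} (hh : h.natDegree < 23) :
    ∑ j : Fin 23, h.coeff j = h.eval 1 := by
  rw [Polynomial.eval_eq_sum_range' hh, Finset.sum_range]
  simp

/-- Every word of the extended cyclic code is a combination of the shifts of the generator. -/
lemma mem_cyclic_iff {f : Polynomial (ZMod 243)} (hm : f.Monic) (hd : f.natDegree = 11)
    (hdvd : f ∣ Polynomial.X ^ 23 - 1) (c : Fin 24 → ZMod 243) :
    ((∃ p : Polynomial (ZMod 243), ∀ j : Fin 23,
        c (Fin.castSucc j) = ((p * f) %ₘ (Polynomial.X ^ 23 - 1)).coeff (j : ℕ)) ∧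
      c (Fin.last 23) = - ∑ j : Fin 23, c (Fin.castSucc j)) ↔
    ∃ q : Fin 12 → ZMod 243, c = ∑ i, q i • rowG f i := by
  have : Nontrivial (ZMod 243) := ZMod.nontrivial_iff.mpr (by norm_num)
  have hMm : (Polynomial.X ^ 23 - 1 : Polynomial (ZMod 243)).Monic :=
    Polynomial.monic_X_pow_sub_C 1 (by norm_num)
  have hMd : (Polynomial.X ^ 23 - 1 : Polynomial (ZMod 243)).natDegree = 23 :=
    Polynomial.natDegree_X_pow_sub_C
  have hprod : ∀ q : Polynomial (ZMod 243), q.natDegree < 12 → (q * f).natDegree < 23 := by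
    intro q hq
    have := Polynomial.natDegree_mul_le (p := q) (q := f)
    omega
  have hword : ∀ q : Polynomial (ZMod 243), q.natDegree < 12 →
      ∑ i : Fin 12, q.coeff i • rowG f i =
        Fin.snoc (α := fun _ => ZMod 243) (fun j : Fin 23 => (q * f).coeff j)
          (- ∑ j : Fin 23, (q * f).coeff j) := by
    intro q hq
    have hqs : q = ∑ i : Fin 12, Polynomial.C (q.coeff i) * Polynomial.X ^ (i : ℕ) := by
      rw [← Finset.sum_range fun i => Polynomial.C (q.coeff i) * Polynomial.X ^ i]
      exact q.as_sum_range_C_mul_X_pow' hq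
    funext j
    rw [Finset.sum_apply]
    refine Fin.lastCases ?_ (fun j => ?_) j
    · simp only [Fin.snoc_last, Pi.smul_apply, smul_eq_mul, rowG]
      rw [sum_coeff_eq_eval (hprod q hq), Polynomial.eval_mul]
      conv_rhs => rw [hqs]
      simp [Polynomial.eval_finsetSum, Finset.sum_mul]
    · simp only [Fin.snoc_castSucc, Pi.smul_apply, smul_eq_mul, rowG]
      conv_rhs => rw [hqs]
      rw [Finset.sum_mul, Polynomial.finsetSum_coeff]
      refine Finset.sum_congr rfl fun i _ => ?_
      rw [mul_assoc, Polynomial.coeff_C_mul]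
  constructor
  · rintro ⟨⟨p, hp⟩, hl⟩
    have hdv : f ∣ (p * f) %ₘ (Polynomial.X ^ 23 - 1) := by
      rw [Polynomial.modByMonic_eq_sub_mul_div]
      exact dvd_sub (dvd_mul_left _ _) (hdvd.mul_right _)
    obtain ⟨q, hq⟩ := hdv
    rw [mul_comm f q] at hq
    have hqd : q.natDegree < 12 := by
      have h1 : ((p * f) %ₘ (Polynomial.X ^ 23 - 1)).natDegree < 23 := by
        have := Polynomial.natDegree_modByMonic_lt (p * f) hMm (by
          intro h; rw [h, Polynomial.natDegree_one] at hMd; omega)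
        omega
      by_cases h0 : q = 0
      · simp [h0]
      · rw [hq, mul_comm, hm.natDegree_mul' h0] at h1
        omega
    refine ⟨fun i => q.coeff i, ?_⟩
    rw [hword q hqd]
    simp only [hq] at hp
    funext j
    refine Fin.lastCases ?_ (fun j => ?_) j
    · rw [Fin.snoc_last, hl]
      simp only [hp]
    · rw [Fin.snoc_castSucc, hp]
  · rintro ⟨q, rfl⟩
    let Q : Polynomial (ZMod 243) := ∑ i : Fin 12, Polynomial.C (q i) * Polynomial.X ^ (i : ℕ)
    have hQc : ∀ i : Fin 12, Q.coeff i = q i := by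
      intro i
      simp [Q, Polynomial.finsetSum_coeff, Polynomial.coeff_C_mul, Polynomial.coeff_X_pow,
        Fin.val_inj]
    have hQd : Q.natDegree < 12 := by
      refine Nat.lt_succ_of_le (Polynomial.natDegree_sum_le_of_forall_le _ _ fun i _ => ?_)
      exact (Polynomial.natDegree_C_mul_X_pow_le _ _).trans (by omega)
    have hQw := hword Q hQd
    simp only [hQc] at hQw
    rw [hQw]
    refine ⟨⟨Q, fun j => ?_⟩, ?_⟩
    · rw [Fin.snoc_castSucc, (Polynomial.modByMonic_eq_self_iff hMm).mpr]
      apply Polynomial.degree_lt_degree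
      rw [hMd]
      exact hprod Q hQd
    · simp only [Fin.snoc_last, Fin.snoc_castSucc]

/-- The entries of `rowG` for a generator stored in a list; the parity coordinate is represented by
`243 * 12` minus the sum of the coefficients. -/
def rowN (l : List ℕ) (i j : ℕ) : ℕ :=
  if j < 23 then (if i ≤ j then l.getD (j - i) 0 else 0)
  else 243 * 12 - ∑ k ∈ Finset.range 12, l.getD k 0

lemma rowG_pol {l : List ℕ} (hl : l.length = 12)
    (hs : ∑ k ∈ Finset.range 12, l.getD k 0 ≤ 243 * 12) (i : ℕ) (j : Fin 24) :
    rowG (pol (ZMod 243) l) i j = ((rowN l i j : ℕ) : ZMod 243) := by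
  refine Fin.lastCases ?_ (fun j => ?_) j
  · simp only [rowG, rowN, Fin.snoc_last, Fin.val_last, lt_irrefl, if_false]
    rw [eval_pol, Nat.cast_sub hs, Nat.cast_mul, h243, zero_mul, zero_sub]
  · simp only [rowG, rowN, Fin.snoc_castSucc, Fin.val_castSucc, j.2, if_true]
    rw [Polynomial.coeff_X_pow_mul', coeff_pol]
    by_cases hi : i ≤ j
    · rw [if_pos hi, if_pos hi]
      by_cases h12 : (j : ℕ) - i < 12
      · rw [if_pos h12]
      · rw [if_neg h12, List.getD_eq_default _ _ (by omega), Nat.cast_zero]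
    · rw [if_neg hi, if_neg hi, Nat.cast_zero]

/-- The monomial equivalence to `code` multiplies the parity coordinate by 13. -/
def scale (j : Fin 24) : ℕ := if (j : ℕ) = 23 then 13 else 1

/-- The factors of `scale` as units. -/
def scaleU (j : Fin 24) : (ZMod 243)ˣ := ZMod.unitOfCoprime (scale j) (by
  unfold scale; split_ifs <;> norm_num)

/-- The reversal of the cyclic coordinates. -/
def revPos (j : Fin 24) : Fin 24 := Fin.ofNat 24 (if (j : ℕ) = 23 then 23 else 22 - (j : ℕ))

lemma revPos_revPos : ∀ j : Fin 24, revPos (revPos j) = j := by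
  unfold revPos
  decide

/-- `revPos` as a permutation. -/
def revPerm : Equiv.Perm (Fin 24) := Function.Involutive.toPerm revPos revPos_revPos

lemma sum_rows_apply {r r' : Fin 12 → Fin 24 → ZMod 243} (π : Equiv.Perm (Fin 24))
    (u : Fin 24 → (ZMod 243)ˣ) (τ : Equiv.Perm (Fin 12)) (s : (ZMod 243)ˣ)
    (h : ∀ (i : Fin 12) (j : Fin 24), (u j : ZMod 243) * r i (π j) = s * r' (τ i) j)
    (q : Fin 12 → ZMod 243) (j : Fin 24) :
    (u j : ZMod 243) * (∑ i, q i • r i) (π j) = (∑ i, (q (τ.symm i) * s) • r' i) j := by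
  rw [Finset.sum_apply, Finset.sum_apply, Finset.mul_sum,
    ← Equiv.sum_comp τ fun i => ((q (τ.symm i) * (s : ZMod 243)) • r' i) j]
  refine Finset.sum_congr rfl fun i _ => ?_
  simp only [Pi.smul_apply, smul_eq_mul, Equiv.symm_apply_apply]
  rw [mul_left_comm, h, mul_assoc]

/-- If a monomial transformation carries the rows `r` to a unit multiple of the rows `r'` in some
order, then it carries the span of `r` to the span of `r'`. -/
lemma mem_span_iff {r r' : Fin 12 → Fin 24 → ZMod 243} (π : Equiv.Perm (Fin 24))
    (u : Fin 24 → (ZMod 243)ˣ) (τ : Equiv.Perm (Fin 12)) (s : (ZMod 243)ˣ)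
    (h : ∀ (i : Fin 12) (j : Fin 24), (u j : ZMod 243) * r i (π j) = s * r' (τ i) j)
    (c : Fin 24 → ZMod 243) :
    (∃ q : Fin 12 → ZMod 243, c = ∑ i, q i • r i) ↔
      ∃ q : Fin 12 → ZMod 243, (fun j => (u j : ZMod 243) * c (π j)) = ∑ i, q i • r' i := by
  constructor
  · rintro ⟨q, rfl⟩
    refine ⟨fun i => q (τ.symm i) * s, ?_⟩
    funext j
    exact sum_rows_apply π u τ s h q j
  · rintro ⟨q, hq⟩
    refine ⟨fun i => q (τ i) * (s⁻¹ : (ZMod 243)ˣ), ?_⟩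
    funext j
    obtain ⟨j, rfl⟩ := π.surjective j
    apply (u j).isUnit.mul_left_cancel
    rw [sum_rows_apply π u τ s h, show (u j : ZMod 243) * c (π j) = _ from congrFun hq j]
    simp only [Equiv.apply_symm_apply, mul_assoc, Units.inv_mul, mul_one]

/-- The shifts of `polP` are the rows of `rowsP`. -/
lemma rowsP_check : ∀ (i : Fin 12) (j : Fin 24),
    (scale j * rowN polP i j) % 243 = (1 * (rowsP.getD i []).getD j 0) % 243 := by
  unfold scale rowN
  decide +kernel

/-- Reversal of the cyclic coordinates exchanges the two codes. -/
lemma rowsQ_check : ∀ (i : Fin 12) (j : Fin 24), (scale j * rowN polQ i (revPos j)) % 243 =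
    (242 * (rowsP.getD (Fin.revPerm i) []).getD j 0) % 243 := by
  unfold scale rowN revPos
  decide +kernel

/-- Each of the lifted codes is monomially equivalent to `code`. -/
lemma exists_monomial {g : Polynomial (ZMod 3)} (hg : IsQRFactor 3 g) {g5 : Polynomial (ZMod 243)}
    {C5 : Submodule (ZMod 243) (Fin 24 → ZMod 243)} (hpN : (3 : ℕ) ∣ 243)
    (hC5 : IsLiftedQR hpN g g5 C5) :
    ∃ (π : Equiv.Perm (Fin 24)) (u : Fin 24 → (ZMod 243)ˣ),
      ∀ c, c ∈ C5 ↔ (fun j => (u j : ZMod 243) * c (π j)) ∈ code (ZMod 243) := by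
  obtain ⟨hm, hd, hdvd, hmap, hmem⟩ := hC5
  have hmem' := fun c => (hmem c).trans (mem_cyclic_iff hm hd hdvd c)
  have hsP : ∑ k ∈ Finset.range 12, polP.getD k 0 ≤ 243 * 12 := by decide
  have hsQ : ∑ k ∈ Finset.range 12, polQ.getD k 0 ≤ 243 * 12 := by decide
  have hu : ∀ j, (scaleU j : ZMod 243) = ((scale j : ℕ) : ZMod 243) := fun j => rfl
  rcases g5_cases hg hpN hm hd hmap hdvd with rfl | rfl
  · refine ⟨1, scaleU, fun c => (hmem' c).trans
      ((mem_span_iff 1 scaleU 1 1 (fun i j => ?_) c).trans (mem_code_iff_rowsP _).symm)⟩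
    rw [Equiv.Perm.one_apply, Equiv.Perm.one_apply, hu, rowG_pol rfl hsP, row, ofL, Units.val_one,
      ← Nat.cast_mul, ← Nat.cast_one, ← Nat.cast_mul]
    exact cast_eq_of_mod h243 (rowsP_check i j)
  · refine ⟨revPerm, scaleU, fun c => (hmem' c).trans
      ((mem_span_iff revPerm scaleU Fin.revPerm (-1) (fun i j => ?_) c).trans
        (mem_code_iff_rowsP _).symm)⟩
    have h1 : ((-1 : (ZMod 243)ˣ) : ZMod 243) = ((242 : ℕ) : ZMod 243) := by
      rw [Units.val_neg, Units.val_one]; decide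
    have h2 : revPerm j = revPos j := rfl
    rw [h1, h2, hu, rowG_pol rfl hsQ, row, ofL, ← Nat.cast_mul, ← Nat.cast_mul]
    exact cast_eq_of_mod h243 (rowsQ_check i j)

/-- The partial weight enumerator `D_{3,2}` for the ternary lifted QR codes of length 24. -/
theorem stmt_17 (g : Polynomial (ZMod 3)) (hg : IsQRFactor 3 g)
    (g5 : Polynomial (ZMod 243)) (C5 : Submodule (ZMod 243) (Fin 24 → ZMod 243))
    (hC5 : IsLiftedQR (by norm_num : (3:ℕ) ∣ 243) g g5 C5) :
    divPart (((3:ℚ) ^ 24)⁻¹ •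
        aeval (![X 0, X 1, X 2, X 5 - X 4, X 5 + 2 * X 4 - 3 * X 3, X 5 + 2 * X 4 + 6 * X 3] : Fin 6 → MvPolynomial (Fin 6) ℚ) (swe 3 5 C5))
      0 3 =
      109296 * X 0 ^ 9 * X 3 ^ 9 *
        (-(6 * X 1 ^ 2 * X 2 * X 4 ^ 2 * X 5) + 6 * X 1 ^ 2 * X 2 ^ 2 * X 4 ^ 2
          - X 1 ^ 3 * X 4 ^ 3) := by

  obtain ⟨π, u, h⟩ := exists_monomial hg _ hC5
  rw [aeval_swe, sum_phi_congr C5 π u h, divPart_smul, divPart_sum_phi, Fsum_wordZ,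
    smul_eq_C_mul, inv_eq_one_div]
  have hc : (C (1 / (3 : ℚ) ^ 24) : MvPolynomial (Fin 6) ℚ) * (81 * 9 ^ 11) = 9 := by
    have h1 : (81 * 9 ^ 11 : MvPolynomial (Fin 6) ℚ) = C (81 * 9 ^ 11) := by
      rw [map_mul, map_pow, map_ofNat, map_ofNat]
    have h2 : (9 : MvPolynomial (Fin 6) ℚ) = C 9 := (map_ofNat C 9).symm
    rw [h1, h2, ← C_mul]
    norm_num
  linear_combination (4048 * (18 * (X 0 ^ 9 * X 1 ^ 2 * X 2 ^ 2 * X 3 ^ 9 * X 4 ^ 2) -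
    18 * (X 0 ^ 9 * X 1 ^ 2 * X 2 * X 3 ^ 9 * X 4 ^ 2 * X 5) -
    3 * (X 0 ^ 9 * X 1 ^ 3 * X 3 ^ 9 * X 4 ^ 3))) * hc
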